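/- arXiv:1503.01130 — 3 statements merged into one kernel-verified Lean document; each statement's English description precedes it below -/
import Mathlib

section
/- Let B be a finite Blaschke product and let u ∈ 𝒟. If the weighted composition operator W_{u,B} : f ↦ u·(f∘B) is bounded on the Dirichlet space 𝒟, then u is a multiplier of 𝒟. -/
open Complex MeasureTheory Metric Set Filter

noncomputable section

/-- The open unit disc in the complex plane. -/
def unitDisc : Set ℂ := Metric.ball 0 1

/-- The square of the Dirichlet norm:
`‖f‖²_𝒟 = |f(0)|² + ∫_𝔻 |f′(z)|² dA(z)`, with `A` normalized area measure. -/
def dirNormSq (f : ℂ → ℂ) : ℝ :=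
  ‖f 0‖ ^ 2 + (1 / Real.pi) * ∫ z in unitDisc, ‖deriv f z‖ ^ 2

/-- Membership in the Dirichlet space `𝒟`: `f` is holomorphic on `𝔻` and
`|f′|²` is integrable over `𝔻`. -/
def MemDirichlet (f : ℂ → ℂ) : Prop :=
  DifferentiableOn ℂ f unitDisc ∧
    IntegrableOn (fun z : ℂ => ‖deriv f z‖ ^ 2) unitDisc

/-- The `k`-th Taylor coefficient of `f` at `0`. -/
def taylorCoeff (f : ℂ → ℂ) (k : ℕ) : ℂ := iteratedDeriv k f 0 / (Nat.factorial k : ℂ)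

/-- The square of the Hardy space `H²` norm: `Σ |a_k|²`. -/
def hardyNormSq (f : ℂ → ℂ) : ℝ := ∑' k : ℕ, ‖taylorCoeff f k‖ ^ 2

/-- Membership in the Hardy space `H²`. -/
def MemHardy (f : ℂ → ℂ) : Prop :=
  DifferentiableOn ℂ f unitDisc ∧ Summable fun k : ℕ => ‖taylorCoeff f k‖ ^ 2

/-- The `H²` inner product `⟨f, g⟩ = Σ a_k \overline{b_k}`. -/
def hardyInner (f g : ℂ → ℂ) : ℂ :=
  ∑' k : ℕ, taylorCoeff f k * (starRingEnd ℂ) (taylorCoeff g k)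

/-- `B` is a finite Blaschke product:
`B(z) = e^{iθ} ∏_{j=1}^{n} (a_j − z)/(1 − \overline{a_j} z)` with all `a_j ∈ 𝔻`. -/
def IsFiniteBlaschke (B : ℂ → ℂ) : Prop :=
  ∃ (θ : ℝ) (n : ℕ) (a : Fin n → ℂ), (∀ j, ‖a j‖ < 1) ∧
    ∀ z ∈ unitDisc,
      B z = Complex.exp (θ * Complex.I) *
        ∏ j, (a j - z) / (1 - (starRingEnd ℂ) (a j) * z)

/-- Membership in the model space `K_B = H² ⊖ BH²`: `g ∈ H²` and `g ⟂ B·h`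
for every `h ∈ H²`. -/
def MemModelSpace (B g : ℂ → ℂ) : Prop :=
  MemHardy g ∧ ∀ h : ℂ → ℂ, MemHardy h →
    hardyInner g (fun z => B z * h z) = 0

/-- The weighted composition operator `W_{u,φ} : f ↦ u·(f∘φ)` is bounded
on the Dirichlet space: there is a constant `C` with
`‖u·(f∘φ)‖²_𝒟 ≤ C ‖f‖²_𝒟` (and `u·(f∘φ) ∈ 𝒟`) for all `f ∈ 𝒟`. -/
def WCOBounded (u φ : ℂ → ℂ) : Prop :=
  ∃ C : ℝ, 0 ≤ C ∧ ∀ f : ℂ → ℂ, MemDirichlet f →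
    MemDirichlet (fun z => u z * f (φ z)) ∧
      dirNormSq (fun z => u z * f (φ z)) ≤ C * dirNormSq f


namespace WCOAux

open scoped ComplexConjugate ENNReal Topology

lemma integral_rot (c : ℂ) (hc : ‖c‖ = 1) (R : ℝ) (f : ℂ → ℂ) :
    ∫ z in ball (0:ℂ) R, f (c * z) = ∫ z in ball (0:ℂ) R, f z := by
  let e : ℂ ≃ₗᵢ[ℝ] ℂ := rotation ⟨c, by simp [Submonoid.unitSphere, hc]⟩
  have he : ∀ z, e z = c * z := fun z => rotation_apply _ z
  have h := (e.measurePreserving).setIntegral_preimage_emb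
    (e.toHomeomorph.measurableEmbedding) f (ball 0 R)
  have h2 : (e ⁻¹' ball 0 R) = ball 0 R := by
    ext z; simp
  rw [h2] at h
  rw [← h]
  simp only [he]

lemma integral_normpow (R : ℝ) (hR : 0 ≤ R) (n : ℕ) :
    ∫ z in ball (0:ℂ) R, ‖z‖ ^ (2 * n) = Real.pi * R ^ (2 * n + 2) / (n + 1) := by
  have h1 : ∫ z in ball (0:ℂ) R, ‖z‖ ^ (2 * n)
      = ∫ z : ℂ, (fun t : ℝ => (Iio R).indicator (fun t => t ^ (2 * n)) t) ‖z‖ := by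
    rw [← integral_indicator measurableSet_ball]
    congr 1
    ext z
    by_cases h : ‖z‖ < R <;> simp [indicator, h]
  rw [h1, integral_fun_norm_addHaar]
  have h2 : ∫ y in Ioi (0:ℝ), y ^ (Module.finrank ℝ ℂ - 1) • (Iio R).indicator (fun t => t ^ (2 * n)) y
      = ∫ y in (0:ℝ)..R, y ^ (2 * n + 1) := by
    rw [intervalIntegral.integral_of_le hR, integral_Ioc_eq_integral_Ioo,
      ← integral_indicator measurableSet_Ioi, ← integral_indicator measurableSet_Ioo]
    congr 1
    ext y
    by_cases h : 0 < y <;> by_cases h' : y < R <;> simp [indicator, h, h', Complex.finrank_real_complex]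
    ring
  rw [h2, integral_pow]
  simp [Measure.real, Complex.finrank_real_complex]
  field_simp
  ring

lemma integral_monomial (R : ℝ) (hR : 0 ≤ R) (n m : ℕ) :
    ∫ z in ball (0:ℂ) R, z ^ n * conj z ^ m
      = if n = m then ((Real.pi * R ^ (2 * n + 2) / (n + 1) : ℝ) : ℂ) else 0 := by
  split_ifs with h
  · subst h
    rw [← integral_normpow R hR n, ← integral_complex_ofReal]
    congr 1; ext z
    rw [← mul_pow, Complex.mul_conj, Complex.normSq_eq_norm_sq]
    push_cast
    ring
  · -- rotation by 1 radian
    set c : ℂ := Complex.exp (Complex.I) with hc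
    have hc1 : ‖c‖ = 1 := by
      have := Complex.norm_exp_ofReal_mul_I 1
      simpa [hc] using this
    have h1 := integral_rot c hc1 R (fun z => z ^ n * conj z ^ m)
    have h2 : ∀ z : ℂ, (c * z) ^ n * conj (c * z) ^ m
        = (c ^ n * conj c ^ m) * (z ^ n * conj z ^ m) := by
      intro z; simp only [map_mul, mul_pow]; ring
    simp only [h2] at h1
    rw [integral_const_mul] at h1
    have h3 : c ^ n * conj c ^ m ≠ 1 := by
      have : c ^ n * conj c ^ m = Complex.exp (((n : ℂ) - m) * Complex.I) := by
        rw [hc, ← Complex.exp_conj, Complex.conj_I, ← Complex.exp_nat_mul, ← Complex.exp_nat_mul,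
          ← Complex.exp_add]
        congr 1; ring
      rw [this]
      intro h4
      rw [Complex.exp_eq_one_iff] at h4
      obtain ⟨k, hk⟩ := h4
      have h5 : ((n : ℂ) - m) = k * (2 * Real.pi) := by
        have : (((n : ℂ) - m) - k * (2 * Real.pi)) * Complex.I = 0 := by rw [sub_mul, hk]; ring
        rcases mul_eq_zero.1 this with h | h
        · exact sub_eq_zero.1 h
        · exact absurd h Complex.I_ne_zero
      have h6 : ((n : ℝ) - m) = k * (2 * Real.pi) := by exact_mod_cast h5
      by_cases hk0 : k = 0
      · subst hk0
        simp at h6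
        have : (n : ℝ) = m := by linarith
        exact h (by exact_mod_cast this)
      · have : Irrational (((2 * k : ℤ) : ℝ) * Real.pi) := by
          exact irrational_pi.intCast_mul (by omega)
        apply this
        refine ⟨((n : ℚ) - m), ?_⟩
        push_cast
        rw [h6]; ring
    have h7 : (c ^ n * conj c ^ m - 1) * ∫ z in ball (0:ℂ) R, z ^ n * conj z ^ m = 0 := by
      rw [sub_mul, h1]; ring
    rcases mul_eq_zero.1 h7 with h | h
    · exact absurd (sub_eq_zero.1 h) h3
    · exact h

lemma parseval_poly (R : ℝ) (hR : 0 ≤ R) (b : ℕ → ℂ) (N : ℕ) :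
    ∫ z in ball (0:ℂ) R, ‖∑ n ∈ Finset.range N, b n * z ^ n‖ ^ 2
      = ∑ n ∈ Finset.range N, ‖b n‖ ^ 2 * (Real.pi * R ^ (2 * n + 2) / (n + 1)) := by
  have key : ∫ z in ball (0:ℂ) R, ((‖∑ n ∈ Finset.range N, b n * z ^ n‖ ^ 2 : ℝ) : ℂ)
      = ((∑ n ∈ Finset.range N, ‖b n‖ ^ 2 * (Real.pi * R ^ (2 * n + 2) / (n + 1)) : ℝ) : ℂ) := by
    have h1 : ∀ z : ℂ, ((‖∑ n ∈ Finset.range N, b n * z ^ n‖ ^ 2 : ℝ) : ℂ)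
        = ∑ n ∈ Finset.range N, ∑ m ∈ Finset.range N, (b n * conj (b m)) * (z ^ n * conj z ^ m) := by
      intro z
      rw [← Complex.normSq_eq_norm_sq, ← Complex.mul_conj, map_sum, Finset.sum_mul_sum]
      refine Finset.sum_congr rfl fun n _ => Finset.sum_congr rfl fun m _ => ?_
      simp only [map_mul, map_pow]; ring
    have hIntg : ∀ n m : ℕ, Integrable (fun z : ℂ => (b n * conj (b m)) * (z ^ n * conj z ^ m))
        (volume.restrict (ball (0:ℂ) R)) := by
      intro n m
      have hcont : Continuous (fun z : ℂ => (b n * conj (b m)) * (z ^ n * conj z ^ m)) := by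
        fun_prop
      exact (hcont.continuousOn.integrableOn_compact (isCompact_closedBall 0 R)).mono_set
        ball_subset_closedBall
    simp only [h1]
    rw [integral_finsetSum _ (fun n _ => integrable_finsetSum _ (fun m _ => hIntg n m))]
    push_cast
    refine Finset.sum_congr rfl fun n hn => ?_
    rw [integral_finsetSum _ (fun m _ => hIntg n m)]
    simp only [integral_const_mul, integral_monomial R hR]
    simp only [mul_ite, mul_zero, Finset.sum_ite_eq, hn, if_true]
    rw [Complex.mul_conj, Complex.normSq_eq_norm_sq]
    push_cast; ring
  rw [integral_complex_ofReal] at key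
  exact_mod_cast key

end WCOAux

namespace WCOAux

open scoped ComplexConjugate ENNReal Topology

lemma det_smulRight (c : ℂ) :
    ((ContinuousLinearMap.toSpanSingleton ℂ c).restrictScalars ℝ : ℂ →L[ℝ] ℂ).det = ‖c‖ ^ 2 := by
  have h : ((ContinuousLinearMap.toSpanSingleton ℂ c).restrictScalars ℝ : ℂ →L[ℝ] ℂ).det
    = LinearMap.det ((ContinuousLinearMap.toSpanSingleton ℂ c : ℂ →L[ℂ] ℂ).toLinearMap.restrictScalars ℝ) := rfl
  rw [h, LinearMap.det_restrictScalars]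
  have h2 : LinearMap.det (ContinuousLinearMap.toSpanSingleton ℂ c : ℂ →L[ℂ] ℂ).toLinearMap = c :=
    ContinuousLinearMap.det_toSpanSingleton c
  rw [h2, Algebra.norm_complex_apply, Complex.normSq_eq_norm_sq]

lemma area (b : ℂ → ℂ) (hb : DifferentiableOn ℂ b unitDisc) (hmaps : MapsTo b unitDisc unitDisc)
    (n : ℕ) (hcard : ∀ w ∈ unitDisc, ∀ s : Finset ℂ, (∀ z ∈ s, z ∈ unitDisc ∧ b z = w) → s.card ≤ n)
    (g : ℂ → ℝ≥0∞) (hg : Measurable g) :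
    ∫⁻ z in unitDisc, ENNReal.ofReal (‖deriv b z‖ ^ 2) * g (b z) ≤ n * ∫⁻ w in unitDisc, g w := by
  have hopen : IsOpen unitDisc := isOpen_ball
  set U : Set ℂ := {z | z ∈ unitDisc ∧ deriv b z ≠ 0} with hU
  have hUm : MeasurableSet U :=
    hopen.measurableSet.inter ((measurable_deriv b) (measurableSet_singleton (0:ℂ)).compl)
  have hloc : ∀ x ∈ U, ∃ V : Set ℂ, IsOpen V ∧ x ∈ V ∧ InjOn b V := by
    intro x hx
    have han : AnalyticAt ℂ b x := hb.analyticAt (hopen.mem_nhds hx.1)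
    have hs : HasStrictDerivAt b (deriv b x) x := han.hasStrictDerivAt
    have hs' := hs.hasStrictFDerivAt_equiv hx.2
    exact ⟨(hs'.toOpenPartialHomeomorph b).source, (hs'.toOpenPartialHomeomorph b).open_source,
      hs'.mem_toOpenPartialHomeomorph_source, (hs'.toOpenPartialHomeomorph b).injOn⟩
  choose! V hVo hVx hVi using hloc
  obtain ⟨t, htU, htc, htcov⟩ := TopologicalSpace.countable_cover_nhdsWithin
    (f := V) (s := U) (fun x hx => mem_nhdsWithin_of_mem_nhds ((hVo x hx).mem_nhds (hVx x hx)))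
  have hred : ∫⁻ z in unitDisc, ENNReal.ofReal (‖deriv b z‖ ^ 2) * g (b z)
      = ∫⁻ z in U, ENNReal.ofReal (‖deriv b z‖ ^ 2) * g (b z) := by
    rw [← lintegral_indicator hopen.measurableSet, ← lintegral_indicator hUm]
    congr 1; ext z
    by_cases h1 : z ∈ unitDisc <;> by_cases h2 : deriv b z = 0 <;> simp [indicator, hU, h1, h2]
  rw [hred]
  rcases t.eq_empty_or_nonempty with ht | ht
  · have : U = ∅ := by
      rw [ht] at htcov; simpa using htcov
    rw [this]; simp
  obtain ⟨e, he⟩ := htc.exists_eq_range ht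
  have heU : ∀ i, e i ∈ U := fun i => htU (he ▸ mem_range_self i)
  set E : ℕ → Set ℂ := fun i => U ∩ disjointed (fun i => V (e i)) i with hE
  have hEm : ∀ i, MeasurableSet (E i) := fun i =>
    hUm.inter (MeasurableSet.disjointed (fun i => (hVo _ (heU i)).measurableSet) i)
  have hEd : Pairwise (Function.onFun Disjoint E) := by
    intro i j hij
    exact (disjoint_disjointed (fun i => V (e i)) hij).mono inter_subset_right inter_subset_right
  have hEU : U = ⋃ i, E i := by
    rw [hE, ← inter_iUnion, iUnion_disjointed]
    refine (inter_eq_left.2 ?_).symm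
    rw [he] at htcov
    simpa using htcov
  have hEi : ∀ i, InjOn b (E i) := fun i =>
    (hVi _ (heU i)).mono (inter_subset_right.trans (disjointed_subset _ _))
  have hEsub : ∀ i, E i ⊆ unitDisc := fun i z hz => hz.1.1
  have hder : ∀ i, ∀ x ∈ E i, HasFDerivWithinAt b
      ((ContinuousLinearMap.toSpanSingleton ℂ (deriv b x)).restrictScalars ℝ : ℂ →L[ℝ] ℂ) (E i) x := by
    intro i x hx
    have := (hb.differentiableAt (hopen.mem_nhds (hEsub i hx))).hasDerivAt.hasFDerivAt
    exact (this.restrictScalars ℝ).hasFDerivWithinAt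
  have hbm : ∀ i, MeasurableSet (b '' E i) := fun i =>
    measurable_image_of_fderivWithin (hEm i) (hder i) (hEi i)
  have hpiece : ∀ i, ∫⁻ z in E i, ENNReal.ofReal (‖deriv b z‖ ^ 2) * g (b z)
      = ∫⁻ w, (b '' E i).indicator g w := by
    intro i
    rw [lintegral_indicator (hbm i),
      lintegral_image_eq_lintegral_abs_det_fderiv_mul volume (hEm i) (hder i) (hEi i) g]
    simp only [det_smulRight, abs_pow, abs_norm]
  rw [hEU, lintegral_iUnion hEm hEd]
  simp only [hpiece]
  rw [← lintegral_tsum (fun i => (hg.indicator (hbm i)).aemeasurable), ← lintegral_const_mul _ hg,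
    ← lintegral_indicator hopen.measurableSet]
  refine lintegral_mono fun w => ?_
  by_cases hw : w ∈ unitDisc
  · rw [indicator_of_mem hw]
    refine ENNReal.summable.tsum_le_of_sum_le fun I => ?_
    classical
    have h1 : ∑ i ∈ I, (b '' E i).indicator g w
        = (I.filter (fun i => w ∈ b '' E i)).card * g w := by
      simp only [indicator]
      rw [← Finset.sum_filter, Finset.sum_const, nsmul_eq_mul]
    rw [h1]
    gcongr
    have h2 : ∀ i ∈ I.filter (fun i => w ∈ b '' E i), ∃ z, z ∈ E i ∧ b z = w := by
      intro i hi
      exact (Finset.mem_filter.1 hi).2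
    choose! p hp using h2
    have h3 : Set.InjOn p (I.filter (fun i => w ∈ b '' E i) : Finset ℕ) := by
      intro i hi j hj hij
      by_contra hne
      have h4 := (hp i hi).1
      have h5 := (hp j hj).1
      rw [hij] at h4
      exact Set.disjoint_left.1 (hEd hne) h4 h5
    rw [← Finset.card_image_of_injOn h3]
    apply hcard w hw
    intro z hz
    obtain ⟨i, hi, rfl⟩ := Finset.mem_image.1 hz
    exact ⟨hEsub i (hp i hi).1, (hp i hi).2⟩
  · have : ∀ i, w ∉ b '' E i := by
      rintro i ⟨z, hz, rfl⟩
      exact hw (hmaps (hEsub i hz))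
    simp [this]

end WCOAux

namespace WCOAux

open scoped ComplexConjugate ENNReal Topology

/-- weights of the Dirichlet norm -/
def wt (n : ℕ) : ℝ := if n = 0 then 1 else n

lemma wt_pos (n : ℕ) : 0 < wt n := by
  unfold wt; split_ifs with h
  · norm_num
  · exact_mod_cast Nat.pos_of_ne_zero h

lemma one_le_wt (n : ℕ) : 1 ≤ wt n := by
  unfold wt; split_ifs with h
  · norm_num
  · exact_mod_cast Nat.pos_of_ne_zero h

lemma wt_zero : wt 0 = 1 := by simp [wt]
lemma wt_succ (n : ℕ) : wt (n + 1) = n + 1 := by simp [wt]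

/-- the reproducing kernel as a function of one variable -/
def L (x : ℂ) : ℂ := 1 - Complex.log (1 - x)

lemma hasSum_L {x : ℂ} (hx : ‖x‖ < 1) : HasSum (fun n => x ^ n / (wt n : ℂ)) (L x) := by
  have h1 := Complex.hasSum_taylorSeries_neg_log hx
  have h2 : HasSum (fun n : ℕ => if n = 0 then (1:ℂ) else 0) 1 := hasSum_ite_eq 0 1
  have h3 := h2.add h1
  have : L x = 1 + -Complex.log (1 - x) := by simp [L, sub_eq_add_neg]
  rw [this]
  refine h3.congr_fun fun n => ?_
  by_cases hn : n = 0
  · simp [hn, wt]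
  · simp [hn, wt]

lemma L_re (x : ℂ) : (L x).re = 1 - Real.log ‖1 - x‖ := by
  simp [L, Complex.log_re]

lemma one_sub_ne {x : ℂ} (hx : ‖x‖ < 1) : 0 < ‖1 - x‖ := by
  have := norm_sub_norm_le (1:ℂ) x
  rw [norm_one] at this
  linarith

lemma L_re_lower {x : ℂ} (hx : ‖x‖ < 1) : 3 / 10 ≤ (L x).re := by
  rw [L_re]
  have h1 : ‖1 - x‖ ≤ 2 := by
    have := norm_sub_le (1:ℂ) x
    rw [norm_one] at this
    linarith
  have h2 := Real.log_le_log (one_sub_ne hx) h1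
  have := Real.log_two_lt_d9
  linarith

lemma L_bound {A : ℝ} (hA : 1 ≤ A) {x y : ℂ} (hx : ‖x‖ < 1) (hy : ‖y‖ < 1)
    (h : ‖1 - y‖ ≤ A * ‖1 - x‖) : ‖L x‖ ≤ (1 + 4 * (Real.log A + 4)) * (L y).re := by
  have h1 := L_re_lower hx
  have h2 := L_re_lower hy
  have h3 : (L x).re ≤ (L y).re + Real.log A := by
    rw [L_re, L_re]
    have h4 := Real.log_le_log (one_sub_ne hy) h
    rw [Real.log_mul (by positivity) (one_sub_ne hx).ne'] at h4
    linarith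
  have h5 : |(L x).im| ≤ 4 := by
    have : (L x).im = - Complex.arg (1 - x) := by simp [L, Complex.log_im]
    rw [this, abs_neg]
    exact (Complex.abs_arg_le_pi _).trans Real.pi_le_four
  have h6 := Complex.norm_le_abs_re_add_abs_im (L x)
  rw [abs_of_nonneg (by linarith : 0 ≤ (L x).re)] at h6
  have h7 := Real.log_nonneg hA
  nlinarith

lemma cs (a d : ℕ → ℂ) (N : ℕ) :
    ‖∑ n ∈ Finset.range N, a n * d n‖ ^ 2 ≤
      (∑ n ∈ Finset.range N, wt n * ‖a n‖ ^ 2) * (∑ n ∈ Finset.range N, ‖d n‖ ^ 2 / wt n) := by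
  have h1 : ‖∑ n ∈ Finset.range N, a n * d n‖ ≤
      ∑ n ∈ Finset.range N, (√(wt n) * ‖a n‖) * (‖d n‖ / √(wt n)) := by
    refine (norm_sum_le _ _).trans (le_of_eq (Finset.sum_congr rfl fun n _ => ?_))
    have := Real.sqrt_pos.2 (wt_pos n)
    rw [norm_mul]; field_simp
  calc _ ≤ (∑ n ∈ Finset.range N, (√(wt n) * ‖a n‖) * (‖d n‖ / √(wt n))) ^ 2 := by gcongr
    _ ≤ _ := Finset.sum_mul_sq_le_sq_mul_sq _ _ _
    _ = _ := by simp only [mul_pow, div_pow, Real.sq_sqrt (wt_pos _).le]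

lemma hasSum_taylor {f : ℂ → ℂ} (hf : DifferentiableOn ℂ f unitDisc) {z : ℂ} (hz : z ∈ unitDisc) :
    HasSum (fun n => taylorCoeff f n * z ^ n) (f z) := by
  have := Complex.hasSum_taylorSeries_on_ball hf hz
  refine this.congr_fun fun n => ?_
  rw [taylorCoeff, smul_eq_mul, smul_eq_mul, sub_zero]
  ring

lemma mem_disc {z : ℂ} : z ∈ unitDisc ↔ ‖z‖ < 1 := by simp [unitDisc]

lemma isOpen_disc : IsOpen unitDisc := isOpen_ball

lemma partial_bound {f : ℂ → ℂ} (hf : DifferentiableOn ℂ f unitDisc) {r : ℝ} (hr0 : 0 ≤ r)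
    (hr : r < 1) : ∃ M : ℝ, 0 ≤ M ∧ ∀ N, ∀ z : ℂ, ‖z‖ ≤ r →
      ‖∑ n ∈ Finset.range N, taylorCoeff f n * z ^ n‖ ≤ M := by
  have h1 := (hasSum_taylor hf (z := (r : ℂ)) (by simp [mem_disc, abs_of_nonneg hr0, hr])).summable.norm
  refine ⟨_, tsum_nonneg (fun n => norm_nonneg _), fun N z hz => (norm_sum_le _ _).trans
    (le_trans (Finset.sum_le_sum fun n _ => ?_) (h1.sum_le_tsum (Finset.range N) (fun n _ => norm_nonneg _)))⟩
  rw [norm_mul, norm_mul, norm_pow, norm_pow]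
  have : ‖(r:ℂ)‖ = r := by simp [abs_of_nonneg hr0]
  rw [this]
  gcongr

lemma bessel {h : ℂ → ℂ} (hd : DifferentiableOn ℂ h unitDisc)
    (hi : IntegrableOn (fun z => ‖h z‖ ^ 2) unitDisc) (M : ℕ) :
    ∑ n ∈ Finset.range M, ‖taylorCoeff h n‖ ^ 2 * (Real.pi / (n + 1)) ≤ ∫ z in unitDisc, ‖h z‖ ^ 2 := by
  have key : ∀ R : ℝ, 0 < R → R < 1 →
      ∑ n ∈ Finset.range M, ‖taylorCoeff h n‖ ^ 2 * (Real.pi * R ^ (2 * n + 2) / (n + 1))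
        ≤ ∫ z in unitDisc, ‖h z‖ ^ 2 := by
    intro R hR0 hR1
    obtain ⟨K, hK0, hK⟩ := partial_bound hd hR0.le hR1
    have hsub : ball (0:ℂ) R ⊆ unitDisc := ball_subset_ball hR1.le
    have hlim : Tendsto (fun N => ∫ z in ball (0:ℂ) R,
        ‖∑ n ∈ Finset.range N, taylorCoeff h n * z ^ n‖ ^ 2) atTop
        (𝓝 (∫ z in ball (0:ℂ) R, ‖h z‖ ^ 2)) := by
      refine tendsto_integral_of_dominated_convergence (fun _ => K ^ 2) ?_ ?_ ?_ ?_
      · intro N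
        have : Continuous (fun z : ℂ => ‖∑ n ∈ Finset.range N, taylorCoeff h n * z ^ n‖ ^ 2) := by
          fun_prop
        exact this.aestronglyMeasurable
      · have : IsFiniteMeasure (volume.restrict (ball (0:ℂ) R)) :=
          ⟨by rw [Measure.restrict_apply_univ]; exact measure_ball_lt_top⟩
        exact integrable_const _
      · intro N
        filter_upwards [ae_restrict_mem measurableSet_ball] with z hz
        rw [Real.norm_of_nonneg (by positivity)]
        have := hK N z (by simpa using (mem_ball_zero_iff.1 hz).le)
        gcongr
      · filter_upwards [ae_restrict_mem measurableSet_ball] with z hz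
        exact ((hasSum_taylor hd (hsub hz)).tendsto_sum_nat.norm.pow 2)
    simp only [parseval_poly R hR0.le] at hlim
    have h2 : ∑ n ∈ Finset.range M, ‖taylorCoeff h n‖ ^ 2 * (Real.pi * R ^ (2 * n + 2) / (n + 1))
        ≤ ∫ z in ball (0:ℂ) R, ‖h z‖ ^ 2 := by
      refine ge_of_tendsto hlim ?_
      filter_upwards [eventually_ge_atTop M] with N hN
      exact Finset.sum_le_sum_of_subset_of_nonneg (Finset.range_mono hN) (fun n _ _ => by positivity)
    refine h2.trans ?_
    exact setIntegral_mono_set hi (Eventually.of_forall fun z => by positivity) hsub.eventuallyLE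
  have hc : Tendsto (fun R : ℝ => ∑ n ∈ Finset.range M, ‖taylorCoeff h n‖ ^ 2 *
      (Real.pi * R ^ (2 * n + 2) / (n + 1))) (𝓝[<] 1)
      (𝓝 (∑ n ∈ Finset.range M, ‖taylorCoeff h n‖ ^ 2 * (Real.pi * 1 ^ (2 * n + 2) / (n + 1)))) := by
    apply Tendsto.mono_left _ nhdsWithin_le_nhds
    apply Continuous.tendsto
    fun_prop
  simp only [one_pow, mul_one] at hc
  refine le_of_tendsto hc ?_
  filter_upwards [Ioo_mem_nhdsLT (show (0:ℝ) < 1 by norm_num)] with R hR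
  exact key R hR.1 hR.2

lemma taylorCoeff_deriv (f : ℂ → ℂ) (n : ℕ) :
    taylorCoeff (deriv f) n = (n + 1) * taylorCoeff f (n + 1) := by
  unfold taylorCoeff
  rw [iteratedDeriv_succ', Nat.factorial_succ]
  have h1 : ((n : ℂ) + 1) ≠ 0 := by exact_mod_cast Nat.succ_ne_zero n
  have h2 : (n.factorial : ℂ) ≠ 0 := by exact_mod_cast n.factorial_ne_zero
  push_cast
  field_simp

lemma coeff_sum_le {f : ℂ → ℂ} (hf : MemDirichlet f) (N : ℕ) :
    ∑ n ∈ Finset.range N, wt n * ‖taylorCoeff f n‖ ^ 2 ≤ dirNormSq f := by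
  have h1 := bessel (h := deriv f) (hf.1.deriv isOpen_disc) hf.2 N
  have h0 : ∑ n ∈ Finset.range N, wt n * ‖taylorCoeff f n‖ ^ 2
      ≤ ∑ n ∈ Finset.range (N + 1), wt n * ‖taylorCoeff f n‖ ^ 2 :=
    Finset.sum_le_sum_of_subset_of_nonneg (Finset.range_mono (Nat.le_succ N))
      (fun n _ _ => mul_nonneg (wt_pos n).le (by positivity))
  refine h0.trans ?_
  rw [Finset.sum_range_succ', wt_zero, dirNormSq, add_comm]
  have h2 : taylorCoeff f 0 = f 0 := by simp [taylorCoeff]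
  rw [h2, one_mul]
  gcongr
  have h3 : ∑ n ∈ Finset.range N, wt (n + 1) * ‖taylorCoeff f (n + 1)‖ ^ 2
      = (1 / Real.pi) * ∑ n ∈ Finset.range N, ‖taylorCoeff (deriv f) n‖ ^ 2 * (Real.pi / (n + 1)) := by
    rw [Finset.mul_sum]
    refine Finset.sum_congr rfl fun n _ => ?_
    rw [taylorCoeff_deriv, wt_succ, norm_mul]
    have h4 : ‖(n : ℂ) + 1‖ = n + 1 := by
      have : ((n : ℂ) + 1) = ((n + 1 : ℕ) : ℂ) := by push_cast; ring
      rw [this, Complex.norm_natCast]; push_cast; ring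
    have := Real.pi_pos
    rw [h4]; field_simp
  rw [h3]
  gcongr

lemma deriv_poly (a : ℕ → ℂ) (N : ℕ) :
    deriv (fun z : ℂ => ∑ n ∈ Finset.range (N + 1), a n * z ^ n)
      = fun z => ∑ n ∈ Finset.range N, ((n + 1) * a (n + 1)) * z ^ n := by
  ext z
  have : HasDerivAt (fun z : ℂ => ∑ n ∈ Finset.range (N + 1), a n * z ^ n)
      (∑ n ∈ Finset.range (N + 1), a n * (n * z ^ (n - 1))) z := by
    apply HasDerivAt.fun_sum
    intro n _
    exact (hasDerivAt_pow n z).const_mul _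
  rw [this.deriv, Finset.sum_range_succ']
  simp
  refine Finset.sum_congr rfl fun n _ => ?_
  ring

lemma poly_mem (a : ℕ → ℂ) (N : ℕ) :
    MemDirichlet (fun z : ℂ => ∑ n ∈ Finset.range (N + 1), a n * z ^ n) := by
  constructor
  · fun_prop
  · rw [deriv_poly]
    have : Continuous (fun z : ℂ => ‖∑ n ∈ Finset.range N, ((n + 1) * a (n + 1)) * z ^ n‖ ^ 2) := by
      fun_prop
    exact (this.continuousOn.integrableOn_compact (isCompact_closedBall 0 1)).mono_set
      ball_subset_closedBall

lemma poly_norm (a : ℕ → ℂ) (N : ℕ) :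
    dirNormSq (fun z : ℂ => ∑ n ∈ Finset.range (N + 1), a n * z ^ n)
      = ∑ n ∈ Finset.range (N + 1), wt n * ‖a n‖ ^ 2 := by
  rw [dirNormSq, deriv_poly, unitDisc, parseval_poly 1 zero_le_one, Finset.sum_range_succ', add_comm]
  rw [Finset.sum_range_succ' (fun n => wt n * ‖a n‖ ^ 2)]
  congr 1
  · rw [Finset.mul_sum]
    refine Finset.sum_congr rfl fun n _ => ?_
    have h4 : ‖(n : ℂ) + 1‖ = n + 1 := by
      have : ((n : ℂ) + 1) = ((n + 1 : ℕ) : ℂ) := by push_cast; ring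
      rw [this, Complex.norm_natCast]; push_cast; ring
    have := Real.pi_pos
    rw [wt_succ, norm_mul, h4]; field_simp
    ring
  · simp [wt_zero]

lemma norm_mul_conj_lt {z w : ℂ} (hz : ‖z‖ < 1) (hw : ‖w‖ < 1) : ‖z * conj w‖ < 1 := by
  rw [norm_mul, RCLike.norm_conj]
  nlinarith [norm_nonneg z, norm_nonneg w]

lemma kernel_diag {z : ℂ} (hz : ‖z‖ < 1) :
    Tendsto (fun N => ∑ n ∈ Finset.range N, ‖z ^ n‖ ^ 2 / wt n) atTop (𝓝 (L (z * conj z)).re) := by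
  have h := ((Complex.continuous_re.tendsto _).comp
    (hasSum_L (norm_mul_conj_lt hz hz)).tendsto_sum_nat)
  refine h.congr fun N => ?_
  simp only [Function.comp, Complex.re_sum]
  refine Finset.sum_congr rfl fun n _ => ?_
  rw [Complex.mul_conj, Complex.normSq_eq_norm_sq, norm_pow]
  have : (((‖z‖ ^ 2 : ℝ) : ℂ) ^ n / (wt n : ℂ)) = (((‖z‖ ^ 2) ^ n / wt n : ℝ) : ℂ) := by push_cast; ring
  rw [this, Complex.ofReal_re]
  ring

lemma point_eval {f : ℂ → ℂ} (hf : MemDirichlet f) {z : ℂ} (hz : z ∈ unitDisc) :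
    ‖f z‖ ^ 2 ≤ dirNormSq f * (L (z * conj z)).re := by
  have h1 := (hasSum_taylor hf.1 hz).tendsto_sum_nat.norm.pow 2
  have h2 := (kernel_diag (mem_disc.1 hz)).const_mul (dirNormSq f)
  refine le_of_tendsto_of_tendsto' h1 h2 fun N => ?_
  refine (cs _ _ N).trans ?_
  have : 0 ≤ ∑ n ∈ Finset.range N, ‖z ^ n‖ ^ 2 / wt n :=
    Finset.sum_nonneg fun n _ => div_nonneg (by positivity) (wt_pos n).le
  gcongr
  exact coeff_sum_le hf N

lemma dirNormSq_nonneg (f : ℂ → ℂ) : 0 ≤ dirNormSq f := by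
  unfold dirNormSq
  have : 0 ≤ ∫ z in unitDisc, ‖deriv f z‖ ^ 2 := integral_nonneg fun z => by positivity
  have := Real.pi_pos
  positivity

lemma deriv_congr {f g : ℂ → ℂ} (h : EqOn f g unitDisc) : EqOn (deriv f) (deriv g) unitDisc := by
  intro z hz
  exact (h.eventuallyEq_of_mem (isOpen_disc.mem_nhds hz)).deriv_eq

lemma mem_congr {f g : ℂ → ℂ} (h : EqOn f g unitDisc) (hf : MemDirichlet f) : MemDirichlet g := by
  refine ⟨hf.1.congr fun z hz => (h hz).symm, hf.2.congr_fun (fun z hz => ?_) isOpen_disc.measurableSet⟩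
  simp only [deriv_congr h hz]

lemma norm_congr {f g : ℂ → ℂ} (h : EqOn f g unitDisc) : dirNormSq f = dirNormSq g := by
  unfold dirNormSq
  rw [h (by simp [mem_disc] : (0:ℂ) ∈ unitDisc)]
  congr 2
  refine setIntegral_congr_fun isOpen_disc.measurableSet fun z hz => ?_
  simp only [deriv_congr h hz]

end WCOAux

namespace WCOAux

open scoped ComplexConjugate ENNReal Topology

lemma measurable_L : Measurable L := by
  unfold L
  exact measurable_const.sub (Complex.measurable_log.comp (measurable_const.sub measurable_id))

lemma partial_L_bound {q : ℝ} (hq0 : 0 ≤ q) (hq : q < 1) {x : ℂ} (hx : ‖x‖ ≤ q) (N : ℕ) :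
    ‖∑ n ∈ Finset.range N, x ^ n / (wt n : ℂ)‖ ≤ (1 - q)⁻¹ := by
  refine (norm_sum_le _ _).trans ?_
  rw [← tsum_geometric_of_lt_one hq0 hq]
  refine le_trans (Finset.sum_le_sum fun n _ => ?_)
    ((summable_geometric_of_lt_one hq0 hq).sum_le_tsum (Finset.range N) (fun n _ => by positivity))
  rw [norm_div, norm_pow, Complex.norm_real, Real.norm_of_nonneg (wt_pos n).le]
  calc ‖x‖ ^ n / wt n ≤ ‖x‖ ^ n / 1 := by
        have := one_le_wt n
        gcongr
    _ ≤ q ^ n := by rw [div_one]; gcongr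

lemma L_norm_bound {q : ℝ} (hq0 : 0 ≤ q) (hq : q < 1) {x : ℂ} (hx : ‖x‖ ≤ q) :
    ‖L x‖ ≤ (1 - q)⁻¹ :=
  le_of_tendsto' (hasSum_L (hx.trans_lt hq)).tendsto_sum_nat.norm
    (fun N => partial_L_bound hq0 hq hx N)

lemma ae_prod_bound {ν : Measure ℂ} [IsFiniteMeasure ν] {P : ℂ → Prop} (h : ∀ᵐ z ∂ν, P z) :
    ∀ᵐ p ∂(ν.prod ν), P p.1 ∧ P p.2 := by
  filter_upwards [Measure.quasiMeasurePreserving_fst.ae h, Measure.quasiMeasurePreserving_snd.ae h]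
    with p h1 h2 using ⟨h1, h2⟩

lemma norm_prod_le {ρ : ℝ} {z w : ℂ} (hz : ‖z‖ ≤ ρ) (hw : ‖w‖ ≤ ρ) : ‖z * conj w‖ ≤ ρ ^ 2 := by
  rw [norm_mul, RCLike.norm_conj, sq]
  have := norm_nonneg z
  have := norm_nonneg w
  gcongr
  linarith

lemma quad_integrable {ν : Measure ℂ} [IsFiniteMeasure ν] {φ g : ℂ → ℂ} (hφ : Measurable φ)
    {ρ : ℝ} (hρ0 : 0 ≤ ρ) (hρ : ρ < 1) (hφρ : ∀ᵐ z ∂ν, ‖φ z‖ ≤ ρ) (hg : Integrable g ν) :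
    Integrable (fun p : ℂ × ℂ => L (φ p.2 * conj (φ p.1)) * (g p.1 * conj (g p.2))) (ν.prod ν) := by
  have hgg : Integrable (fun p : ℂ × ℂ => g p.1 * conj (g p.2)) (ν.prod ν) :=
    hg.mul_prod (hg.norm.mono' (Complex.continuous_conj.comp_aestronglyMeasurable hg.1)
      (by filter_upwards with z; simp))
  have hq : ρ ^ 2 < 1 := by nlinarith
  refine hgg.bdd_mul (c := (1 - ρ ^ 2)⁻¹) ?_ ?_
  · refine (measurable_L.comp ?_).aestronglyMeasurable
    exact (hφ.comp measurable_snd).mul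
      (Complex.continuous_conj.measurable.comp (hφ.comp measurable_fst))
  · filter_upwards [ae_prod_bound hφρ] with p hp
    exact L_norm_bound (by positivity) hq (norm_prod_le hp.2 hp.1)

lemma quad_form {ν : Measure ℂ} [IsFiniteMeasure ν] {φ g : ℂ → ℂ} (hφ : Measurable φ)
    {ρ : ℝ} (hρ0 : 0 ≤ ρ) (hρ : ρ < 1) (hφρ : ∀ᵐ z ∂ν, ‖φ z‖ ≤ ρ) (hg : Integrable g ν) :
    Tendsto (fun N => ∑ n ∈ Finset.range N, ‖∫ z, conj (φ z) ^ n * g z ∂ν‖ ^ 2 / wt n) atTop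
      (𝓝 (∫ p : ℂ × ℂ, L (φ p.2 * conj (φ p.1)) * (g p.1 * conj (g p.2)) ∂(ν.prod ν)).re) := by
  have hgc : Integrable (fun z => conj (g z)) ν :=
    hg.norm.mono' (Complex.continuous_conj.comp_aestronglyMeasurable hg.1)
      (by filter_upwards with z; simp)
  have hgg : Integrable (fun p : ℂ × ℂ => g p.1 * conj (g p.2)) (ν.prod ν) := hg.mul_prod hgc
  have hq : ρ ^ 2 < 1 := by nlinarith
  have hm : Measurable (fun p : ℂ × ℂ => φ p.2 * conj (φ p.1)) :=
    (hφ.comp measurable_snd).mul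
      (Complex.continuous_conj.measurable.comp (hφ.comp measurable_fst))
  have hterm : ∀ n : ℕ, Integrable (fun p : ℂ × ℂ =>
      ((φ p.2 * conj (φ p.1)) ^ n / (wt n : ℂ)) * (g p.1 * conj (g p.2))) (ν.prod ν) := by
    intro n
    refine hgg.bdd_mul (c := (ρ ^ 2) ^ n / wt n) ?_ ?_
    · exact ((hm.pow_const n).div_const _).aestronglyMeasurable
    · filter_upwards [ae_prod_bound hφρ] with p hp
      rw [norm_div, norm_pow, Complex.norm_real, Real.norm_of_nonneg (wt_pos n).le]
      have := norm_prod_le hp.2 hp.1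
      have := wt_pos n
      gcongr
  have hlim : Tendsto (fun N => ∫ p : ℂ × ℂ,
      (∑ n ∈ Finset.range N, (φ p.2 * conj (φ p.1)) ^ n / (wt n : ℂ)) * (g p.1 * conj (g p.2))
        ∂(ν.prod ν)) atTop
      (𝓝 (∫ p : ℂ × ℂ, L (φ p.2 * conj (φ p.1)) * (g p.1 * conj (g p.2)) ∂(ν.prod ν))) := by
    refine tendsto_integral_of_dominated_convergence
      (fun p => (1 - ρ ^ 2)⁻¹ * ‖g p.1 * conj (g p.2)‖) ?_ ?_ ?_ ?_
    · intro N
      simp only [Finset.sum_mul]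
      exact (integrable_finsetSum _ (fun n _ => hterm n)).1
    · exact hgg.norm.const_mul _
    · intro N
      filter_upwards [ae_prod_bound hφρ] with p hp
      rw [norm_mul]
      gcongr
      exact partial_L_bound (by positivity) hq (norm_prod_le hp.2 hp.1) N
    · filter_upwards [ae_prod_bound hφρ] with p hp
      exact (hasSum_L ((norm_prod_le hp.2 hp.1).trans_lt hq)).tendsto_sum_nat.mul_const _
  refine ((Complex.continuous_re.tendsto _).comp hlim).congr fun N => ?_
  simp only [Function.comp, Finset.sum_mul]
  rw [integral_finsetSum _ (fun n _ => hterm n), Complex.re_sum]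
  refine Finset.sum_congr rfl fun n _ => ?_
  have h1 : ∀ p : ℂ × ℂ, ((φ p.2 * conj (φ p.1)) ^ n / (wt n : ℂ)) * (g p.1 * conj (g p.2))
      = (wt n : ℂ)⁻¹ * ((fun z => conj (φ z) ^ n * g z) p.1 * (fun z => conj (conj (φ z) ^ n * g z)) p.2) := by
    intro p
    simp only [map_mul, map_pow, Complex.conj_conj]
    ring
  simp only [h1]
  have h2 := integral_prod_mul (μ := ν) (ν := ν) (fun z => conj (φ z) ^ n * g z)
    (fun z => conj (conj (φ z) ^ n * g z))
  rw [integral_const_mul, h2, integral_conj, Complex.mul_conj, Complex.normSq_eq_norm_sq]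
  rw [← Complex.ofReal_inv, ← Complex.ofReal_mul, Complex.ofReal_re]
  ring

lemma transfer {ν : Measure ℂ} [IsFiniteMeasure ν] {φ g : ℂ → ℂ} (hφ : Measurable φ)
    {r ρ A C : ℝ} (hr0 : 0 ≤ r) (hr : r < 1) (hνr : ∀ᵐ z ∂ν, ‖z‖ ≤ r)
    (hρ0 : 0 ≤ ρ) (hρ : ρ < 1) (hφρ : ∀ᵐ z ∂ν, ‖φ z‖ ≤ ρ)
    (hA : 1 ≤ A)
    (hAb : ∀ z w : ℂ, ‖z‖ < 1 → ‖w‖ < 1 → ‖1 - φ z * conj (φ w)‖ ≤ A * ‖1 - z * conj w‖)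
    (hC : 0 < C)
    (hcar : ∀ (N : ℕ) (a : ℕ → ℂ), ∫ z, ‖∑ n ∈ Finset.range N, a n * φ z ^ n‖ ^ 2 ∂ν
      ≤ C * ∑ n ∈ Finset.range N, wt n * ‖a n‖ ^ 2)
    (hg : Integrable g ν) (hg2 : Integrable (fun z => ‖g z‖ ^ 2) ν) (N : ℕ) :
    ∑ n ∈ Finset.range N, ‖∫ z, conj z ^ n * g z ∂ν‖ ^ 2 / wt n
      ≤ (1 + 4 * (Real.log A + 4)) * (C * ∫ z, ‖g z‖ ^ 2 ∂ν) := by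
  set h : ℂ → ℂ := fun z => (‖g z‖ : ℂ) with hh
  have hhi : Integrable h ν := hg.norm.ofReal
  set K := (1 + 4 * (Real.log A + 4)) with hK
  have hK0 : 0 ≤ K := by have := Real.log_nonneg hA; positivity
  -- Step 1
  have step1 : ∀ N, ∑ n ∈ Finset.range N, ‖∫ z, conj (φ z) ^ n * h z ∂ν‖ ^ 2 / wt n
      ≤ C * ∫ z, ‖g z‖ ^ 2 ∂ν := by
    intro N
    set c : ℕ → ℂ := fun n => ∫ z, conj (φ z) ^ n * h z ∂ν with hc
    set T := ∑ n ∈ Finset.range N, ‖c n‖ ^ 2 / wt n with hT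
    set a : ℕ → ℂ := fun n => c n / (wt n : ℂ) with ha
    have hTa : ∑ n ∈ Finset.range N, wt n * ‖a n‖ ^ 2 = T := by
      refine Finset.sum_congr rfl fun n _ => ?_
      have := wt_pos n
      simp only [ha, norm_div, Complex.norm_real, Real.norm_of_nonneg this.le]
      field_simp
    have hcb := hcar N a
    rw [hTa] at hcb
    have hti : ∀ n : ℕ, Integrable (fun z => φ z ^ n * h z) ν := by
      intro n
      refine hhi.bdd_mul (c := ρ ^ n) (hφ.pow_const n).aestronglyMeasurable ?_
      filter_upwards [hφρ] with z hz
      rw [norm_pow]; gcongr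
    have hcc : ∀ n, conj (c n) = ∫ z, φ z ^ n * h z ∂ν := by
      intro n
      rw [hc]
      simp only
      rw [← integral_conj]
      congr 1; ext z
      simp [hh]
    have hFi : Integrable (fun z => (∑ n ∈ Finset.range N, a n * φ z ^ n) * h z) ν := by
      simp only [Finset.sum_mul, mul_assoc]
      exact integrable_finsetSum _ fun n _ => (hti n).const_mul _
    have hTi : (T : ℂ) = ∫ z, (∑ n ∈ Finset.range N, a n * φ z ^ n) * h z ∂ν := by
      simp only [Finset.sum_mul, mul_assoc]
      rw [integral_finsetSum _ fun n _ => (hti n).const_mul _]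
      simp only [integral_const_mul, ← hcc]
      rw [hT]; push_cast
      refine Finset.sum_congr rfl fun n _ => ?_
      rw [ha]; simp only
      rw [div_mul_eq_mul_div, Complex.mul_conj, Complex.normSq_eq_norm_sq]
      push_cast; ring
    have hF2 : Integrable (fun z => ‖∑ n ∈ Finset.range N, a n * φ z ^ n‖ ^ 2) ν := by
      have hm : Measurable (fun z => ∑ n ∈ Finset.range N, a n * φ z ^ n) :=
        Finset.measurable_fun_sum _ fun n _ => (hφ.pow_const n).const_mul _
      refine Integrable.mono' (integrable_const ((∑ n ∈ Finset.range N, ‖a n‖ * ρ ^ n) ^ 2))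
        (hm.norm.pow_const 2).aestronglyMeasurable ?_
      filter_upwards [hφρ] with z hz
      rw [Real.norm_of_nonneg (by positivity)]
      gcongr
      refine (norm_sum_le _ _).trans (Finset.sum_le_sum fun n _ => ?_)
      rw [norm_mul, norm_pow]; gcongr
    have hTr : T ≤ ∫ z, (C⁻¹ * ‖∑ n ∈ Finset.range N, a n * φ z ^ n‖ ^ 2 + C * ‖g z‖ ^ 2) / 2 ∂ν := by
      have h1 : T = ∫ z, ((∑ n ∈ Finset.range N, a n * φ z ^ n) * h z).re ∂ν := by
        have := congrArg Complex.re hTi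
        rw [Complex.ofReal_re] at this
        rw [this]
        exact (integral_re hFi).symm
      rw [h1]
      refine integral_mono hFi.re (((hF2.const_mul _).add (hg2.const_mul _)).div_const _) fun z => ?_
      refine (Complex.re_le_norm _).trans ?_
      rw [norm_mul]
      have : ‖h z‖ = ‖g z‖ := by simp [hh]
      rw [this]
      set x := ‖∑ n ∈ Finset.range N, a n * φ z ^ n‖
      set y := ‖g z‖
      have h3 : (C⁻¹ * x ^ 2 + C * y ^ 2) / 2 - x * y = C⁻¹ * (x - C * y) ^ 2 / 2 := by
        field_simp; ring
      have : 0 ≤ C⁻¹ * (x - C * y) ^ 2 / 2 := by positivity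
      linarith
    rw [integral_div, integral_add (hF2.const_mul _) (hg2.const_mul _), integral_const_mul,
      integral_const_mul] at hTr
    have : C⁻¹ * ∫ z, ‖∑ n ∈ Finset.range N, a n * φ z ^ n‖ ^ 2 ∂ν ≤ T := by
      rw [inv_mul_le_iff₀ hC]; exact hcb
    linarith
  -- Step 2
  have q1 := quad_form hφ hρ0 hρ hφρ hhi
  have q1i := quad_integrable hφ hρ0 hρ hφρ hhi
  have q2 := quad_form measurable_id hr0 hr hνr hg
  have q2i := quad_integrable measurable_id hr0 hr hνr hg
  simp only [id] at q2 q2i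
  have b1 := le_of_tendsto' q1 step1
  have b2 : ∑ n ∈ Finset.range N, ‖∫ z, conj z ^ n * g z ∂ν‖ ^ 2 / wt n
      ≤ (∫ p : ℂ × ℂ, L (p.2 * conj p.1) * (g p.1 * conj (g p.2)) ∂(ν.prod ν)).re := by
    refine ge_of_tendsto q2 ?_
    filter_upwards [eventually_ge_atTop N] with M hM
    exact Finset.sum_le_sum_of_subset_of_nonneg (Finset.range_mono hM)
      (fun n _ _ => div_nonneg (by positivity) (wt_pos n).le)
  refine b2.trans (le_trans ?_ (mul_le_mul_of_nonneg_left b1 hK0))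
  have e1 := integral_re q1i
  have e2 := integral_re q2i
  simp only [RCLike.re_eq_complex_re] at e1 e2
  rw [← e1, ← e2, ← integral_const_mul]
  refine integral_mono_ae q2i.re (q1i.re.const_mul K) ?_
  filter_upwards [ae_prod_bound hνr, ae_prod_bound hφρ] with p hp1 hp2
  change (L (p.2 * conj p.1) * (g p.1 * conj (g p.2))).re
    ≤ K * (L (φ p.2 * conj (φ p.1)) * (h p.1 * conj (h p.2))).re
  refine (Complex.re_le_norm _).trans ?_
  have hb := L_bound hA (norm_mul_conj_lt (hp1.2.trans_lt hr) (hp1.1.trans_lt hr))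
    (norm_mul_conj_lt (hp2.2.trans_lt hρ) (hp2.1.trans_lt hρ))
    (hAb p.2 p.1 (hp1.2.trans_lt hr) (hp1.1.trans_lt hr))
  have e3 : L (φ p.2 * conj (φ p.1)) * (h p.1 * conj (h p.2))
      = L (φ p.2 * conj (φ p.1)) * ((‖g p.1‖ * ‖g p.2‖ : ℝ) : ℂ) := by
    simp [hh]
  rw [e3, Complex.re_mul_ofReal, norm_mul, norm_mul, RCLike.norm_conj, ← mul_assoc K]
  exact mul_le_mul_of_nonneg_right hb (by positivity)

end WCOAux

namespace WCOAux

open scoped ComplexConjugate ENNReal Topology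

/-- a Blaschke factor -/
def bf (a z : ℂ) : ℂ := (a - z) / (1 - conj a * z)

lemma den_lower {a z : ℂ} (hz : ‖z‖ < 1) : 1 - ‖a‖ ≤ ‖1 - conj a * z‖ := by
  have h1 := norm_sub_norm_le (1:ℂ) (conj a * z)
  rw [norm_one, norm_mul, RCLike.norm_conj] at h1
  nlinarith [norm_nonneg a, norm_nonneg z]

lemma den_ne {a z : ℂ} (ha : ‖a‖ < 1) (hz : ‖z‖ < 1) : 1 - conj a * z ≠ 0 := by
  have := den_lower (a := a) hz
  rw [← norm_pos_iff]; linarith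

lemma bf_identity {a z w : ℂ} (ha : ‖a‖ < 1) (hz : ‖z‖ < 1) (hw : ‖w‖ < 1) :
    1 - bf a z * conj (bf a w)
      = (1 - a * conj a) * (1 - z * conj w) / ((1 - conj a * z) * conj (1 - conj a * w)) := by
  have h1 := den_ne ha hz
  have h2 : conj (1 - conj a * w) ≠ 0 := by
    rw [Ne, map_eq_zero]; exact den_ne ha hw
  unfold bf
  rw [map_div₀]
  rw [div_mul_div_comm, eq_div_iff (mul_ne_zero h1 h2), sub_mul, div_mul_cancel₀ _ (mul_ne_zero h1 h2)]
  simp only [map_sub, map_mul, map_one, Complex.conj_conj]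
  ring

lemma bf_lt {a z : ℂ} (ha : ‖a‖ < 1) (hz : ‖z‖ < 1) : ‖bf a z‖ < 1 := by
  have h := bf_identity ha hz hz
  simp only [Complex.mul_conj, Complex.normSq_eq_norm_sq] at h
  have h' : 1 - ‖bf a z‖ ^ 2 = (1 - ‖a‖ ^ 2) * (1 - ‖z‖ ^ 2) / ‖1 - conj a * z‖ ^ 2 := by
    exact_mod_cast h
  have h1 := norm_pos_iff.2 (den_ne ha hz)
  have h2 : 0 < (1 - ‖a‖ ^ 2) * (1 - ‖z‖ ^ 2) / ‖1 - conj a * z‖ ^ 2 := by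
    have : 0 < 1 - ‖a‖ ^ 2 := by nlinarith [norm_nonneg a]
    have : 0 < 1 - ‖z‖ ^ 2 := by nlinarith [norm_nonneg z]
    positivity
  by_contra hc
  push Not at hc
  nlinarith

lemma bf_bound {a z w : ℂ} (ha : ‖a‖ < 1) (hz : ‖z‖ < 1) (hw : ‖w‖ < 1) :
    ‖1 - bf a z * conj (bf a w)‖ ≤ (2 / (1 - ‖a‖) ^ 2) * ‖1 - z * conj w‖ := by
  rw [bf_identity ha hz hw, norm_div, norm_mul, norm_mul, RCLike.norm_conj]
  have h1 := den_lower (a := a) hz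
  have h2 := den_lower (a := a) hw
  have h3 : 0 < 1 - ‖a‖ := by linarith
  have h4 : ‖1 - a * conj a‖ ≤ 2 := by
    have := norm_sub_le (1:ℂ) (a * conj a)
    rw [norm_one, norm_mul, RCLike.norm_conj] at this
    nlinarith [norm_nonneg a]
  calc ‖1 - a * conj a‖ * ‖1 - z * conj w‖ / (‖1 - conj a * z‖ * ‖1 - conj a * w‖)
      ≤ 2 * ‖1 - z * conj w‖ / ((1 - ‖a‖) * (1 - ‖a‖)) := by gcongr
    _ = _ := by ring

lemma prod_norm_le {ι : Type*} (s : Finset ι) (a : ι → ℂ) (ha : ∀ j, ‖a j‖ < 1) {z : ℂ} (hz : ‖z‖ < 1) :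
    ‖∏ j ∈ s, bf (a j) z‖ ≤ 1 := by
  rw [norm_prod]
  exact Finset.prod_le_one (fun j _ => norm_nonneg _) (fun j _ => (bf_lt (ha j) hz).le)

lemma prod_bound {ι : Type*} (s : Finset ι) (a : ι → ℂ) (ha : ∀ j, ‖a j‖ < 1) {z w : ℂ} (hz : ‖z‖ < 1)
    (hw : ‖w‖ < 1) :
    ‖1 - (∏ j ∈ s, bf (a j) z) * conj (∏ j ∈ s, bf (a j) w)‖
      ≤ (∑ j ∈ s, 2 / (1 - ‖a j‖) ^ 2) * ‖1 - z * conj w‖ := by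
  classical
  induction s using Finset.induction_on with
  | empty => simp
  | insert i s hi ih =>
    rw [Finset.prod_insert hi, Finset.prod_insert hi, Finset.sum_insert hi, add_mul]
    set P := ∏ j ∈ s, bf (a j) z
    set Q := ∏ j ∈ s, bf (a j) w
    have e : 1 - bf (a i) z * P * conj (bf (a i) w * Q)
        = (1 - bf (a i) z * conj (bf (a i) w))
          + (bf (a i) z * conj (bf (a i) w)) * (1 - P * conj Q) := by
      rw [map_mul]; ring
    rw [e]
    refine (norm_add_le _ _).trans (add_le_add (bf_bound (ha i) hz hw) ?_)
    rw [norm_mul]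
    have := (norm_mul_conj_lt (bf_lt (ha i) hz) (bf_lt (ha i) hw)).le
    calc _ ≤ 1 * ‖1 - P * conj Q‖ := by gcongr
      _ ≤ _ := by rw [one_mul]; exact ih

/-- the explicit Blaschke product -/
def bp (θ : ℝ) {n : ℕ} (a : Fin n → ℂ) (z : ℂ) : ℂ :=
  Complex.exp (θ * Complex.I) * ∏ j, bf (a j) z

lemma bp_measurable (θ : ℝ) {n : ℕ} (a : Fin n → ℂ) : Measurable (bp θ a) := by
  unfold bp bf
  refine measurable_const.mul (Finset.measurable_fun_prod _ fun j _ => ?_)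
  exact (measurable_const.sub measurable_id).div (measurable_const.sub (measurable_id.const_mul _))

lemma bp_diff (θ : ℝ) {n : ℕ} (a : Fin n → ℂ) (ha : ∀ j, ‖a j‖ < 1) :
    DifferentiableOn ℂ (bp θ a) unitDisc := by
  unfold bp
  refine DifferentiableOn.const_mul (DifferentiableOn.fun_finsetProd fun j _ => ?_) _
  unfold bf
  refine DifferentiableOn.div (by fun_prop) (by fun_prop) fun z hz => den_ne (ha j) (mem_disc.1 hz)

lemma bp_maps (θ : ℝ) {n : ℕ} (hn : n ≠ 0) (a : Fin n → ℂ) (ha : ∀ j, ‖a j‖ < 1) :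
    MapsTo (bp θ a) unitDisc unitDisc := by
  intro z hz
  rw [mem_disc] at hz ⊢
  unfold bp
  rw [norm_mul, Complex.norm_exp_ofReal_mul_I, one_mul]
  obtain ⟨m, rfl⟩ := Nat.exists_eq_succ_of_ne_zero hn
  rw [Fin.prod_univ_succ, norm_mul]
  have h1 := bf_lt (ha 0) hz
  have h2 := prod_norm_le Finset.univ (fun j : Fin m => a j.succ) (fun j => ha _) hz
  nlinarith [norm_nonneg (bf (a 0) z), norm_nonneg (∏ j : Fin m, bf (a j.succ) z)]

lemma bp_bound (θ : ℝ) {n : ℕ} (a : Fin n → ℂ) (ha : ∀ j, ‖a j‖ < 1) :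
    ∃ A : ℝ, 1 ≤ A ∧ ∀ z w : ℂ, ‖z‖ < 1 → ‖w‖ < 1 →
      ‖1 - bp θ a z * conj (bp θ a w)‖ ≤ A * ‖1 - z * conj w‖ := by
  refine ⟨1 + ∑ j, 2 / (1 - ‖a j‖) ^ 2, ?_, fun z w hz hw => ?_⟩
  · have : 0 ≤ ∑ j, 2 / (1 - ‖a j‖) ^ 2 := Finset.sum_nonneg fun j _ => by positivity
    linarith
  · have e : bp θ a z * conj (bp θ a w) = (∏ j, bf (a j) z) * conj (∏ j, bf (a j) w) := by
      unfold bp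
      rw [map_mul]
      have : Complex.exp (θ * Complex.I) * conj (Complex.exp (θ * Complex.I)) = 1 := by
        rw [Complex.mul_conj, Complex.normSq_eq_norm_sq, Complex.norm_exp_ofReal_mul_I]; simp
      calc _ = (Complex.exp (θ * Complex.I) * conj (Complex.exp (θ * Complex.I))) *
          ((∏ j, bf (a j) z) * conj (∏ j, bf (a j) w)) := by ring
        _ = _ := by rw [this, one_mul]
    rw [e]
    refine (prod_bound Finset.univ a ha hz hw).trans ?_
    gcongr
    linarith

lemma bp_card (θ : ℝ) {n : ℕ} (a : Fin n → ℂ) (ha : ∀ j, ‖a j‖ < 1) (w : ℂ) (hw : w ∈ unitDisc)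
    (s : Finset ℂ) (hs : ∀ z ∈ s, z ∈ unitDisc ∧ bp θ a z = w) : s.card ≤ n := by
  classical
  open Polynomial in
  let P : ℂ[X] := C (Complex.exp (θ * Complex.I)) * ∏ j, (C (a j) - X)
    - C w * ∏ j, (1 - C (conj (a j)) * X)
  have hev : ∀ z, P.eval z = Complex.exp (θ * Complex.I) * ∏ j, (a j - z)
      - w * ∏ j, (1 - conj (a j) * z) := by
    intro z
    simp [P, Polynomial.eval_prod]
  have hP0 : P ≠ 0 := by
    intro h0
    have h1 := hev 1
    rw [h0, Polynomial.eval_zero] at h1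
    have h2 := congrArg norm (sub_eq_zero.1 h1.symm)
    rw [norm_mul, norm_mul, Complex.norm_exp_ofReal_mul_I, one_mul] at h2
    have h3 : ‖∏ j, (1 - conj (a j) * 1)‖ = ‖∏ j, (a j - 1)‖ := by
      rw [norm_prod, norm_prod]
      refine Finset.prod_congr rfl fun j _ => ?_
      rw [mul_one, ← RCLike.norm_conj, map_sub, Complex.conj_conj, map_one, norm_sub_rev]
    rw [h3] at h2
    have h4 : 0 < ‖∏ j, (a j - 1)‖ := by
      rw [norm_pos_iff, Finset.prod_ne_zero_iff]
      intro j _ h5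
      have := ha j
      rw [sub_eq_zero.1 h5] at this
      simp at this
    rw [mem_disc] at hw
    nlinarith
  have hdeg : P.natDegree ≤ n := by
    open Polynomial in
    have h1 : (∏ j, (C (a j) - X) : ℂ[X]).natDegree ≤ n := by
      refine (natDegree_prod_le _ _).trans ?_
      refine (Finset.sum_le_card_nsmul _ _ 1 fun j _ => ?_).trans (by simp)
      compute_degree
    open Polynomial in
    have h2 : (∏ j, (1 - C (conj (a j)) * X) : ℂ[X]).natDegree ≤ n := by
      refine (natDegree_prod_le _ _).trans ?_
      refine (Finset.sum_le_card_nsmul _ _ 1 fun j _ => ?_).trans (by simp)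
      compute_degree
    refine (Polynomial.natDegree_sub_le _ _).trans (max_le ?_ ?_)
    · exact (Polynomial.natDegree_C_mul_le _ _).trans h1
    · exact (Polynomial.natDegree_C_mul_le _ _).trans h2
  have hsub : s ⊆ P.roots.toFinset := by
    intro z hz
    rw [Multiset.mem_toFinset, Polynomial.mem_roots hP0, Polynomial.IsRoot, hev]
    obtain ⟨hzd, hzw⟩ := hs z hz
    rw [← hzw]
    unfold bp bf
    rw [Finset.prod_div_distrib, mul_assoc, div_mul_cancel₀, sub_self]
    exact Finset.prod_ne_zero_iff.2 fun j _ => den_ne (ha j) (mem_disc.1 hzd)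
  exact (Finset.card_le_card hsub).trans ((Multiset.toFinset_card_le _).trans
    ((Polynomial.card_roots' P).trans hdeg))

end WCOAux

namespace WCOAux

open scoped ComplexConjugate ENNReal Topology

lemma embed {ν : Measure ℂ} [IsFiniteMeasure ν] {φ f : ℂ → ℂ} (hφ : Measurable φ)
    {r ρ A C : ℝ} (hr0 : 0 ≤ r) (hr : r < 1) (hνr : ∀ᵐ z ∂ν, ‖z‖ ≤ r)
    (hρ0 : 0 ≤ ρ) (hρ : ρ < 1) (hφρ : ∀ᵐ z ∂ν, ‖φ z‖ ≤ ρ)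
    (hA : 1 ≤ A)
    (hAb : ∀ z w : ℂ, ‖z‖ < 1 → ‖w‖ < 1 → ‖1 - φ z * conj (φ w)‖ ≤ A * ‖1 - z * conj w‖)
    (hC : 0 < C)
    (hcar : ∀ (N : ℕ) (a : ℕ → ℂ), ∫ z, ‖∑ n ∈ Finset.range N, a n * φ z ^ n‖ ^ 2 ∂ν
      ≤ C * ∑ n ∈ Finset.range N, wt n * ‖a n‖ ^ 2)
    (hf : MemDirichlet f) (hfm : AEStronglyMeasurable f ν) :
    ∫ z, ‖f z‖ ^ 2 ∂ν ≤ dirNormSq f * ((1 + 4 * (Real.log A + 4)) * C) := by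
  obtain ⟨M, hM0, hM⟩ := partial_bound hf.1 hr0 hr
  have hfb : ∀ᵐ z ∂ν, ‖f z‖ ≤ M := by
    filter_upwards [hνr] with z hz
    exact le_of_tendsto' (hasSum_taylor hf.1 (mem_disc.2 (hz.trans_lt hr))).tendsto_sum_nat.norm
      (fun N => hM N z hz)
  have hfi : Integrable f ν := (integrable_const M).mono' hfm hfb
  have hf2 : Integrable (fun z => ‖f z‖ ^ 2) ν := by
    refine (integrable_const (M ^ 2)).mono' (hfm.norm.pow 2) ?_
    filter_upwards [hfb] with z hz
    rw [Real.norm_of_nonneg (by positivity)]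
    gcongr
  have hfc : Integrable (fun z => conj (f z)) ν :=
    hfi.norm.mono' (Complex.continuous_conj.comp_aestronglyMeasurable hfi.1)
      (by filter_upwards with z; simp)
  set X := ∫ z, ‖f z‖ ^ 2 ∂ν with hX
  have hX0 : 0 ≤ X := integral_nonneg fun z => by positivity
  set a := taylorCoeff f with ha
  have htr := transfer hφ hr0 hr hνr hρ0 hρ hφρ hA hAb hC hcar hfi hf2
  rw [← hX] at htr
  set K := (1 + 4 * (Real.log A + 4)) with hK
  have hK0 : 0 ≤ K := by have := Real.log_nonneg hA; positivity
  have hti : ∀ n : ℕ, Integrable (fun z => z ^ n * conj (f z)) ν := by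
    intro n
    refine hfc.bdd_mul (c := r ^ n) (by fun_prop) ?_
    filter_upwards [hνr] with z hz
    rw [norm_pow]; gcongr
  have hlim : Tendsto (fun N => ∫ z, (∑ n ∈ Finset.range N, a n * z ^ n) * conj (f z) ∂ν) atTop
      (𝓝 (∫ z, f z * conj (f z) ∂ν)) := by
    refine tendsto_integral_of_dominated_convergence (fun z => M * ‖f z‖) ?_ (hfi.norm.const_mul M) ?_ ?_
    · intro N
      simp only [Finset.sum_mul, mul_assoc]
      exact (integrable_finsetSum _ fun n _ => (hti n).const_mul _).1
    · intro N
      filter_upwards [hνr] with z hz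
      rw [norm_mul, RCLike.norm_conj]
      gcongr
      exact hM N z hz
    · filter_upwards [hνr] with z hz
      exact (hasSum_taylor hf.1 (mem_disc.2 (hz.trans_lt hr))).tendsto_sum_nat.mul_const _
  have hXc : ∫ z, f z * conj (f z) ∂ν = (X : ℂ) := by
    rw [hX, ← integral_complex_ofReal]
    congr 1; ext z
    rw [Complex.mul_conj, Complex.normSq_eq_norm_sq]
  rw [hXc] at hlim
  have hsq : X ^ 2 ≤ dirNormSq f * (K * (C * X)) := by
    have h1 := hlim.norm.pow 2
    rw [Complex.norm_real, Real.norm_of_nonneg hX0] at h1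
    refine le_of_tendsto' h1 fun N => ?_
    simp only [Finset.sum_mul, mul_assoc]
    rw [integral_finsetSum _ fun n _ => (hti n).const_mul _]
    simp only [integral_const_mul]
    refine (cs _ _ N).trans ?_
    have h2 : ∀ n, ‖∫ z, z ^ n * conj (f z) ∂ν‖ = ‖∫ z, conj z ^ n * f z ∂ν‖ := by
      intro n
      rw [← RCLike.norm_conj, ← integral_conj]
      congr 2; ext z; simp
    simp only [h2]
    exact mul_le_mul (coeff_sum_le hf N) (htr N)
      (Finset.sum_nonneg fun n _ => div_nonneg (by positivity) (wt_pos n).le) (dirNormSq_nonneg f)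
  rcases hX0.eq_or_lt with h0 | h0
  · rw [← h0]
    have := dirNormSq_nonneg f
    positivity
  · have : X * X ≤ (dirNormSq f * (K * C)) * X := by nlinarith
    exact le_of_mul_le_mul_right this h0

lemma area_real (b : ℂ → ℂ) (hbm : Measurable b)
    (hb : DifferentiableOn ℂ b unitDisc) (hmaps : MapsTo b unitDisc unitDisc)
    (n : ℕ) (hcard : ∀ w ∈ unitDisc, ∀ s : Finset ℂ, (∀ z ∈ s, z ∈ unitDisc ∧ b z = w) → s.card ≤ n)
    (q : ℂ → ℝ) (hq : Measurable q) (hq0 : ∀ z, 0 ≤ q z) (hqi : IntegrableOn q unitDisc) :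
    IntegrableOn (fun z => ‖deriv b z‖ ^ 2 * q (b z)) unitDisc ∧
      ∫ z in unitDisc, ‖deriv b z‖ ^ 2 * q (b z) ≤ n * ∫ z in unitDisc, q z := by
  have h := area b hb hmaps n hcard (fun w => ENNReal.ofReal (q w)) hq.ennreal_ofReal
  have hm : Measurable (fun z => ‖deriv b z‖ ^ 2 * q (b z)) :=
    ((measurable_deriv b).norm.pow_const 2).mul (hq.comp hbm)
  have e1 : ∫⁻ z in unitDisc, ENNReal.ofReal (‖deriv b z‖ ^ 2 * q (b z)) ≤
      ENNReal.ofReal (n * ∫ z in unitDisc, q z) := by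
    rw [ENNReal.ofReal_mul (by positivity), ENNReal.ofReal_natCast,
      ofReal_integral_eq_lintegral_ofReal hqi (Eventually.of_forall hq0)]
    refine le_trans (le_of_eq ?_) h
    congr 1; ext z
    rw [ENNReal.ofReal_mul (by positivity)]
  have hnn : ∀ z, 0 ≤ ‖deriv b z‖ ^ 2 * q (b z) := fun z => mul_nonneg (by positivity) (hq0 _)
  constructor
  · refine ⟨hm.aestronglyMeasurable, ?_⟩
    rw [hasFiniteIntegral_iff_ofReal (Eventually.of_forall hnn)]
    exact e1.trans_lt ENNReal.ofReal_lt_top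
  · rw [integral_eq_lintegral_of_nonneg_ae (Eventually.of_forall hnn) hm.aestronglyMeasurable]
    exact ENNReal.toReal_le_of_le_ofReal
      (mul_nonneg (by positivity) (integral_nonneg hq0)) e1

lemma u_bounded {u b : ℂ → ℂ} (hmaps : MapsTo b unitDisc unitDisc)
    {A : ℝ} (hA : 1 ≤ A)
    (hAb : ∀ z w : ℂ, ‖z‖ < 1 → ‖w‖ < 1 → ‖1 - b z * conj (b w)‖ ≤ A * ‖1 - z * conj w‖)
    {C : ℝ} (hC : 0 ≤ C) (hW : ∀ f : ℂ → ℂ, MemDirichlet f →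
      MemDirichlet (fun z => u z * f (b z)) ∧
      dirNormSq (fun z => u z * f (b z)) ≤ C * dirNormSq f) {z : ℂ} (hz : z ∈ unitDisc) :
    ‖u z‖ ^ 2 ≤ C * (1 + 4 * (Real.log A + 4)) := by
  have hz1 := mem_disc.1 hz
  have hb1 := mem_disc.1 (hmaps hz)
  set w := b z with hw
  set κ := (L (z * conj z)).re with hκ
  have hκ0 : 0 ≤ κ := by have := L_re_lower (norm_mul_conj_lt hz1 hz1); linarith
  have key : ∀ N : ℕ, ‖u z‖ ^ 2 * ∑ n ∈ Finset.range (N + 1), ‖w ^ n‖ ^ 2 / wt n ≤ C * κ := by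
    intro N
    set T := ∑ n ∈ Finset.range (N + 1), ‖w ^ n‖ ^ 2 / wt n with hT
    have hT0 : 0 < T := by
      rw [hT, Finset.sum_range_succ']
      have : 0 ≤ ∑ n ∈ Finset.range N, ‖w ^ (n + 1)‖ ^ 2 / wt (n + 1) :=
        Finset.sum_nonneg fun n _ => div_nonneg (by positivity) (wt_pos _).le
      simp only [pow_zero, norm_one, one_pow, wt_zero]
      linarith
    set a : ℕ → ℂ := fun n => conj w ^ n / (wt n : ℂ) with ha
    obtain ⟨h1, h2⟩ := hW _ (poly_mem a N)
    rw [poly_norm] at h2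
    have e1 : ∑ n ∈ Finset.range (N + 1), wt n * ‖a n‖ ^ 2 = T := by
      refine Finset.sum_congr rfl fun n _ => ?_
      have := wt_pos n
      simp only [ha, norm_div, norm_pow, RCLike.norm_conj, Complex.norm_real, Real.norm_of_nonneg this.le]
      field_simp
    rw [e1] at h2
    have h3 := point_eval h1 hz
    have e2 : ∑ n ∈ Finset.range (N + 1), a n * w ^ n = (T : ℂ) := by
      rw [hT]; push_cast
      refine Finset.sum_congr rfl fun n _ => ?_
      simp only [ha]
      rw [div_mul_eq_mul_div, ← mul_pow, mul_comm, Complex.mul_conj, Complex.normSq_eq_norm_sq, norm_pow]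
      push_cast; ring
    simp only [← hw, e2] at h3
    rw [norm_mul, mul_pow, Complex.norm_real, Real.norm_of_nonneg hT0.le, ← hκ] at h3
    have h4 : (‖u z‖ ^ 2 * T) * T ≤ (C * κ) * T := by
      nlinarith
    exact le_of_mul_le_mul_right h4 hT0
  have hl := ((kernel_diag hb1).comp (tendsto_add_atTop_nat 1)).const_mul (‖u z‖ ^ 2)
  have h5 : ‖u z‖ ^ 2 * (L (w * conj w)).re ≤ C * κ := le_of_tendsto' hl key
  have h6 := L_bound hA (norm_mul_conj_lt hz1 hz1) (norm_mul_conj_lt hb1 hb1) (hAb z z hz1 hz1)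
  have h7 : κ ≤ (1 + 4 * (Real.log A + 4)) * (L (w * conj w)).re := (Complex.re_le_norm _).trans h6
  have h8 := L_re_lower (norm_mul_conj_lt hb1 hb1)
  have h9 : ‖u z‖ ^ 2 * (L (w * conj w)).re ≤ (C * (1 + 4 * (Real.log A + 4))) * (L (w * conj w)).re := by
    nlinarith
  exact le_of_mul_le_mul_right h9 (by linarith)

lemma carleson {u b : ℂ → ℂ} (hu : MemDirichlet u) (hbm : Measurable b)
    (hb : DifferentiableOn ℂ b unitDisc) (hmaps : MapsTo b unitDisc unitDisc)
    (m : ℕ) (hcard : ∀ w ∈ unitDisc, ∀ s : Finset ℂ, (∀ z ∈ s, z ∈ unitDisc ∧ b z = w) → s.card ≤ m)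
    {M : ℝ} (hM0 : 0 ≤ M) (hM : ∀ z ∈ unitDisc, ‖u z‖ ^ 2 ≤ M)
    {C : ℝ} (hC : 0 ≤ C) (hW : ∀ f : ℂ → ℂ, MemDirichlet f →
      MemDirichlet (fun z => u z * f (b z)) ∧
      dirNormSq (fun z => u z * f (b z)) ≤ C * dirNormSq f) (N : ℕ) (a : ℕ → ℂ) :
    IntegrableOn (fun z => ‖deriv u z‖ ^ 2 * ‖∑ n ∈ Finset.range N, a n * b z ^ n‖ ^ 2) unitDisc ∧
    ∫ z in unitDisc, ‖deriv u z‖ ^ 2 * ‖∑ n ∈ Finset.range N, a n * b z ^ n‖ ^ 2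
      ≤ (2 * Real.pi * C + 2 * M * m * Real.pi + 1) * ∑ n ∈ Finset.range N, wt n * ‖a n‖ ^ 2 := by
  rcases N with _ | N
  · simp
  have hpi := Real.pi_pos
  set p : ℂ → ℂ := fun z => ∑ n ∈ Finset.range (N + 1), a n * z ^ n with hp
  have hpm : MemDirichlet p := poly_mem a N
  have hpn : dirNormSq p = ∑ n ∈ Finset.range (N + 1), wt n * ‖a n‖ ^ 2 := poly_norm a N
  have hpd : Differentiable ℂ p := by rw [hp]; fun_prop
  obtain ⟨h1, h2⟩ := hW p hpm
  have dir_int : ∀ f : ℂ → ℂ, ∫ z in unitDisc, ‖deriv f z‖ ^ 2 ≤ Real.pi * dirNormSq f := by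
    intro f
    unfold dirNormSq
    rw [mul_add, ← mul_assoc, mul_one_div_cancel hpi.ne', one_mul]
    have : 0 ≤ Real.pi * ‖f 0‖ ^ 2 := by positivity
    linarith
  obtain ⟨h3, h4⟩ := area_real b hbm hb hmaps m hcard (fun z => ‖deriv p z‖ ^ 2)
    ((measurable_deriv p).norm.pow_const 2) (fun z => by positivity) hpm.2
  have hder : ∀ z ∈ unitDisc, deriv (fun z => u z * p (b z)) z
      = deriv u z * p (b z) + u z * (deriv p (b z) * deriv b z) := by
    intro z hz
    have hu' := (hu.1.differentiableAt (isOpen_disc.mem_nhds hz)).hasDerivAt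
    have hb' := (hb.differentiableAt (isOpen_disc.mem_nhds hz)).hasDerivAt
    have hp' := (hpd (b z)).hasDerivAt
    exact (hu'.mul (hp'.comp z hb')).deriv
  set G : ℂ → ℝ := fun z => 2 * ‖deriv (fun z => u z * p (b z)) z‖ ^ 2
    + 2 * M * (‖deriv b z‖ ^ 2 * ‖deriv p (b z)‖ ^ 2) with hG
  have hGi : IntegrableOn G unitDisc := (h1.2.const_mul 2).add (h3.const_mul (2 * M))
  have hle : ∀ z ∈ unitDisc, ‖deriv u z‖ ^ 2 * ‖p (b z)‖ ^ 2 ≤ G z := by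
    intro z hz
    have e : deriv u z * p (b z) = deriv (fun z => u z * p (b z)) z
        - u z * (deriv p (b z) * deriv b z) := by rw [hder z hz]; ring
    have e2 := norm_sub_le (deriv (fun z => u z * p (b z)) z) (u z * (deriv p (b z) * deriv b z))
    rw [← e, norm_mul, norm_mul, norm_mul] at e2
    rw [← mul_pow, hG]
    simp only
    set x := ‖deriv (fun z => u z * p (b z)) z‖
    have h5 : (‖u z‖ * (‖deriv p (b z)‖ * ‖deriv b z‖)) ^ 2 ≤
        M * (‖deriv b z‖ ^ 2 * ‖deriv p (b z)‖ ^ 2) := by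
      calc _ = ‖u z‖ ^ 2 * (‖deriv b z‖ ^ 2 * ‖deriv p (b z)‖ ^ 2) := by ring
        _ ≤ _ := by
          have := hM z hz
          gcongr
    set y := ‖u z‖ * (‖deriv p (b z)‖ * ‖deriv b z‖)
    calc (‖deriv u z‖ * ‖p (b z)‖) ^ 2 ≤ (x + y) ^ 2 := by gcongr
      _ ≤ 2 * x ^ 2 + 2 * y ^ 2 := by nlinarith [sq_nonneg (x - y)]
      _ ≤ _ := by linarith
  have hmeas : Measurable (fun z => ‖deriv u z‖ ^ 2 * ‖p (b z)‖ ^ 2) :=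
    ((measurable_deriv u).norm.pow_const 2).mul
      ((hpd.continuous.measurable.comp hbm).norm.pow_const 2)
  have hIntg : IntegrableOn (fun z => ‖deriv u z‖ ^ 2 * ‖p (b z)‖ ^ 2) unitDisc := by
    refine Integrable.mono' hGi hmeas.aestronglyMeasurable ?_
    filter_upwards [ae_restrict_mem isOpen_disc.measurableSet] with z hz
    rw [Real.norm_of_nonneg (by positivity)]
    exact hle z hz
  refine ⟨hIntg, ?_⟩
  rw [← hpn]
  have h6 : ∫ z in unitDisc, ‖deriv u z‖ ^ 2 * ‖p (b z)‖ ^ 2 ≤ ∫ z in unitDisc, G z :=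
    setIntegral_mono_on hIntg hGi isOpen_disc.measurableSet hle
  refine h6.trans ?_
  rw [hG, integral_add (h1.2.const_mul 2) (h3.const_mul (2 * M)), integral_const_mul, integral_const_mul]
  have h7 := dir_int (fun z => u z * p (b z))
  have h8 := dir_int p
  have h9 := dirNormSq_nonneg p
  have h10 : ∫ z in unitDisc, ‖deriv (fun z => u z * p (b z)) z‖ ^ 2 ≤ Real.pi * (C * dirNormSq p) :=
    h7.trans (by gcongr)
  have h11 : ∫ z in unitDisc, ‖deriv b z‖ ^ 2 * ‖deriv p (b z)‖ ^ 2 ≤ m * (Real.pi * dirNormSq p) :=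
    h4.trans (by gcongr)
  have h12 := mul_le_mul_of_nonneg_left h11 (by positivity : 0 ≤ 2 * M)
  nlinarith

end WCOAux

namespace WCOAux

open scoped ComplexConjugate ENNReal Topology

lemma closedBall_sub {r : ℝ} (hr : r < 1) : closedBall (0 : ℂ) r ⊆ unitDisc := by
  intro z hz
  rw [mem_closedBall_zero_iff] at hz
  exact mem_disc.2 (hz.trans_lt hr)

lemma embed_r {u b f : ℂ → ℂ} (hu : MemDirichlet u) (hbm : Measurable b)
    (hb : DifferentiableOn ℂ b unitDisc) (hmaps : MapsTo b unitDisc unitDisc)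
    {A K : ℝ} (hA : 1 ≤ A)
    (hAb : ∀ z w : ℂ, ‖z‖ < 1 → ‖w‖ < 1 → ‖1 - b z * conj (b w)‖ ≤ A * ‖1 - z * conj w‖)
    (hK : 0 < K)
    (hcar : ∀ (N : ℕ) (a : ℕ → ℂ),
      IntegrableOn (fun z => ‖deriv u z‖ ^ 2 * ‖∑ n ∈ Finset.range N, a n * b z ^ n‖ ^ 2) unitDisc ∧
      ∫ z in unitDisc, ‖deriv u z‖ ^ 2 * ‖∑ n ∈ Finset.range N, a n * b z ^ n‖ ^ 2
      ≤ K * ∑ n ∈ Finset.range N, wt n * ‖a n‖ ^ 2)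
    (hf : MemDirichlet f) {r : ℝ} (hr0 : 0 ≤ r) (hr : r < 1) :
    IntegrableOn (fun z => ‖deriv u z‖ ^ 2 * ‖f z‖ ^ 2) (closedBall 0 r) ∧
    ∫ z in closedBall 0 r, ‖deriv u z‖ ^ 2 * ‖f z‖ ^ 2 ≤
      dirNormSq f * ((1 + 4 * (Real.log A + 4)) * K) := by
  have hsub := closedBall_sub hr
  have hd : Measurable (fun z => ‖deriv u z‖₊ ^ 2) := (measurable_deriv u).nnnorm.pow_const 2
  have hui : IntegrableOn (fun z => ‖deriv u z‖ ^ 2) (closedBall 0 r) := hu.2.mono_set hsub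
  have hfc : ContinuousOn f (closedBall 0 r) := hf.1.continuousOn.mono hsub
  have hfm : AEStronglyMeasurable f (volume.restrict (closedBall 0 r)) :=
    hfc.aestronglyMeasurable measurableSet_closedBall
  have hcomp : IsCompact (closedBall (0 : ℂ) r) := isCompact_closedBall _ _
  constructor
  · obtain ⟨M, hM⟩ := hcomp.exists_bound_of_continuousOn hfc
    have := hui.integrable.bdd_mul (c := M ^ 2) (hfm.norm.pow 2) (by
      filter_upwards [ae_restrict_mem measurableSet_closedBall] with z hz
      have := hM z hz
      simp only [Pi.pow_apply, norm_pow, norm_norm]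
      gcongr)
    refine this.congr (Eventually.of_forall fun z => ?_)
    simp [mul_comm]
  · set ν : Measure ℂ := (volume.restrict (closedBall 0 r)).withDensity
      (fun z => ((‖deriv u z‖₊ ^ 2 : NNReal) : ℝ≥0∞)) with hν
    have hac : ν ≪ volume.restrict (closedBall 0 r) := withDensity_absolutelyContinuous _ _
    have hIntg : ∀ F : ℂ → ℝ, ∫ z, F z ∂ν = ∫ z in closedBall 0 r, ‖deriv u z‖ ^ 2 * F z := by
      intro F
      rw [hν, integral_withDensity_eq_integral_smul hd]
      refine integral_congr_ae (Eventually.of_forall fun z => ?_)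
      simp [NNReal.smul_def]
    haveI : IsFiniteMeasure ν := by
      refine isFiniteMeasure_withDensity ?_
      have := hui.integrable.lintegral_lt_top
      refine ne_of_lt (lt_of_le_of_lt (le_of_eq ?_) this)
      refine lintegral_congr fun z => ?_
      rw [← ENNReal.ofReal_coe_nnreal]
      simp
    have hmem : ∀ᵐ z ∂ν, z ∈ closedBall (0 : ℂ) r :=
      hac.ae_le (ae_restrict_mem measurableSet_closedBall)
    obtain ⟨z0, hz0, hmax⟩ := hcomp.exists_isMaxOn ⟨0, by simpa using hr0⟩
      ((hb.continuousOn.mono hsub).norm)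
    have := embed (ν := ν) hbm hr0 hr (hmem.mono fun z hz => by simpa using hz)
      (norm_nonneg (b z0)) (mem_disc.1 (hmaps (hsub hz0))) (hmem.mono fun z hz => hmax hz)
      hA hAb hK (fun N a => by
        rw [hIntg]
        refine le_trans (setIntegral_mono_set (hcar N a).1 ?_ (HasSubset.Subset.eventuallyLE hsub)) (hcar N a).2
        exact Eventually.of_forall fun z => by positivity) hf (hfm.mono_ac hac)
    rwa [hIntg] at this

lemma mult_of_bound {u b f : ℂ → ℂ} (hu : MemDirichlet u) (hbm : Measurable b)
    (hb : DifferentiableOn ℂ b unitDisc) (hmaps : MapsTo b unitDisc unitDisc)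
    {A K M : ℝ} (hA : 1 ≤ A)
    (hAb : ∀ z w : ℂ, ‖z‖ < 1 → ‖w‖ < 1 → ‖1 - b z * conj (b w)‖ ≤ A * ‖1 - z * conj w‖)
    (hK : 0 < K)
    (hcar : ∀ (N : ℕ) (a : ℕ → ℂ),
      IntegrableOn (fun z => ‖deriv u z‖ ^ 2 * ‖∑ n ∈ Finset.range N, a n * b z ^ n‖ ^ 2) unitDisc ∧
      ∫ z in unitDisc, ‖deriv u z‖ ^ 2 * ‖∑ n ∈ Finset.range N, a n * b z ^ n‖ ^ 2
      ≤ K * ∑ n ∈ Finset.range N, wt n * ‖a n‖ ^ 2)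
    (hM : ∀ z ∈ unitDisc, ‖u z‖ ^ 2 ≤ M)
    (hf : MemDirichlet f) : MemDirichlet (fun z => u z * f z) := by
  have hms : MeasurableSet unitDisc := isOpen_disc.measurableSet
  have hr0 : ∀ k : ℕ, (0 : ℝ) ≤ 1 - 1 / ((k : ℝ) + 1) := fun k => by
    have : 1 / ((k : ℝ) + 1) ≤ 1 := by
      rw [div_le_one (by positivity)]; linarith [(Nat.cast_nonneg k : (0 : ℝ) ≤ k)]
    linarith
  have hr1 : ∀ k : ℕ, 1 - 1 / ((k : ℝ) + 1) < 1 := fun k => by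
    have : 0 < 1 / ((k : ℝ) + 1) := by positivity
    linarith
  have hE := fun k : ℕ => embed_r hu hbm hb hmaps hA hAb hK hcar hf (hr0 k) (hr1 k)
  have hres : ∀ k : ℕ, (volume.restrict unitDisc).restrict (closedBall (0 : ℂ) (1 - 1 / ((k : ℝ) + 1)))
      = volume.restrict (closedBall (0 : ℂ) (1 - 1 / ((k : ℝ) + 1))) := fun k => by
    rw [Measure.restrict_restrict measurableSet_closedBall,
      inter_eq_left.2 (closedBall_sub (hr1 k))]
  have hcov : AECover (volume.restrict unitDisc) atTop
      (fun k : ℕ => closedBall (0 : ℂ) (1 - 1 / ((k : ℝ) + 1))) := by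
    refine ⟨?_, fun k => measurableSet_closedBall⟩
    filter_upwards [ae_restrict_mem hms] with z hz
    have hz1 := mem_disc.1 hz
    have ht : Tendsto (fun k : ℕ => 1 - 1 / ((k : ℝ) + 1)) atTop (𝓝 (1 - 0)) :=
      tendsto_const_nhds.sub tendsto_one_div_add_atTop_nhds_zero_nat
    rw [sub_zero] at ht
    filter_upwards [ht.eventually (lt_mem_nhds hz1)] with k hk
    rw [mem_closedBall_zero_iff]
    exact hk.le
  have hI : Integrable (fun z => ‖deriv u z‖ ^ 2 * ‖f z‖ ^ 2) (volume.restrict unitDisc) := by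
    refine hcov.integrable_of_integral_bounded_of_nonneg_ae
      (dirNormSq f * ((1 + 4 * (Real.log A + 4)) * K)) (fun k => ?_)
      (Eventually.of_forall fun z => by positivity) (Eventually.of_forall fun k => ?_)
    · rw [IntegrableOn, hres]; exact (hE k).1
    · rw [hres]; exact (hE k).2
  refine ⟨hu.1.mul hf.1, ?_⟩
  refine Integrable.mono' ((hI.const_mul 2).add (hf.2.integrable.const_mul (2 * M)))
    (((measurable_deriv _).norm.pow_const 2).aestronglyMeasurable) ?_
  filter_upwards [ae_restrict_mem hms] with z hz
  have hd : deriv (fun z => u z * f z) z = deriv u z * f z + u z * deriv f z :=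
    deriv_fun_mul (hu.1.differentiableAt (isOpen_disc.mem_nhds hz))
      (hf.1.differentiableAt (isOpen_disc.mem_nhds hz))
  rw [Real.norm_of_nonneg (by positivity), hd]
  have h1 := norm_add_le (deriv u z * f z) (u z * deriv f z)
  rw [norm_mul, norm_mul] at h1
  have h2 : ‖deriv u z * f z + u z * deriv f z‖ ^ 2 ≤
      (‖deriv u z‖ * ‖f z‖ + ‖u z‖ * ‖deriv f z‖) ^ 2 := by gcongr
  have h3 := mul_le_mul_of_nonneg_right (hM z hz) (sq_nonneg ‖deriv f z‖)
  simp only [Pi.add_apply]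
  nlinarith [sq_nonneg (‖deriv u z‖ * ‖f z‖ - ‖u z‖ * ‖deriv f z‖)]

lemma zero_mem : MemDirichlet (fun _ => (0 : ℂ)) :=
  ⟨differentiableOn_const _, by simp⟩

lemma zero_norm : dirNormSq (fun _ => (0 : ℂ)) = 0 := by simp [dirNormSq]

end WCOAux
/-- If `B` is a finite Blaschke product, `u ∈ 𝒟`, and the weighted composition
operator `W_{u,B} : f ↦ u·(f∘B)` is bounded on `𝒟`, then `u` is a multiplier
of the Dirichlet space. -/
theorem multiplier_of_wco_bounded_blaschke (B u : ℂ → ℂ)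
    (hB : IsFiniteBlaschke B) (hu : MemDirichlet u)
    (hbd : WCOBounded u B) :
    DifferentiableOn ℂ u unitDisc ∧
      ∀ f : ℂ → ℂ, MemDirichlet f → MemDirichlet fun z => u z * f z := by
  classical
  obtain ⟨θ, n, a, ha, hBz⟩ := hB
  obtain ⟨C, hC, hW0⟩ := hbd
  have hBb : ∀ z ∈ unitDisc, B z = WCOAux.bp θ a z := hBz
  have hW : ∀ f : ℂ → ℂ, MemDirichlet f →
      MemDirichlet (fun z => u z * f (WCOAux.bp θ a z)) ∧
      dirNormSq (fun z => u z * f (WCOAux.bp θ a z)) ≤ C * dirNormSq f := by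
    intro f hf
    have he : EqOn (fun z => u z * f (B z)) (fun z => u z * f (WCOAux.bp θ a z)) unitDisc :=
      fun z hz => by simp only [hBb z hz]
    obtain ⟨h1, h2⟩ := hW0 f hf
    exact ⟨WCOAux.mem_congr he h1, by rw [← WCOAux.norm_congr he]; exact h2⟩
  refine ⟨hu.1, fun f hf => ?_⟩
  by_cases hn : n = 0
  · subst hn
    have hbp : ∀ z, WCOAux.bp θ a z = Complex.exp (θ * Complex.I) := fun z => by
      simp [WCOAux.bp]
    set g : ℂ → ℂ := fun w => if w = Complex.exp (θ * Complex.I) then 1 else 0 with hg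
    have hg0 : EqOn (fun _ => (0 : ℂ)) g unitDisc := by
      intro w hw
      have hw1 := WCOAux.mem_disc.1 hw
      have : w ≠ Complex.exp (θ * Complex.I) := by
        rintro rfl
        rw [Complex.norm_exp_ofReal_mul_I] at hw1
        exact lt_irrefl _ hw1
      simp [hg, this]
    have h := (hW g (WCOAux.mem_congr hg0 WCOAux.zero_mem)).2
    rw [← WCOAux.norm_congr hg0, WCOAux.zero_norm, mul_zero] at h
    have hu' : (fun z => u z * g (WCOAux.bp θ a z)) = u := by
      ext z; simp [hbp, hg]
    rw [hu'] at h
    have hu0 : dirNormSq u = 0 := le_antisymm h (WCOAux.dirNormSq_nonneg u)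
    refine WCOAux.mem_congr (f := fun _ => (0 : ℂ)) (fun z hz => ?_) WCOAux.zero_mem
    have hp := WCOAux.point_eval hu hz
    rw [hu0, zero_mul] at hp
    have : u z = 0 := by
      rw [← norm_eq_zero]
      exact pow_eq_zero_iff (two_ne_zero) |>.1 (le_antisymm hp (sq_nonneg _))
    simp [this]
  · obtain ⟨A, hA, hAb⟩ := WCOAux.bp_bound θ a ha
    have hmaps := WCOAux.bp_maps θ hn a ha
    have hM := fun z hz => WCOAux.u_bounded (z := z) hmaps hA hAb hC hW hz
    have hM0 : 0 ≤ C * (1 + 4 * (Real.log A + 4)) := by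
      have := Real.log_nonneg hA
      positivity
    have hpi := Real.pi_pos
    exact WCOAux.mult_of_bound hu (WCOAux.bp_measurable θ a) (WCOAux.bp_diff θ a ha) hmaps hA hAb
      (by positivity)
      (WCOAux.carleson hu (WCOAux.bp_measurable θ a) (WCOAux.bp_diff θ a ha) hmaps n
        (WCOAux.bp_card θ a ha) hM0 hM hC hW) hM hf
end
end

section
/- Let u(z) = Σ_{k=2}^∞ zᵏ/(k (log k)^{3/4}) and φ(z) = (1 − z)/2 for z in the unit disc 𝔻. Then u ∈ 𝒟 and the weighted composition operator W_{u,φ} : f ↦ u·(f∘φ) is bounded on the Dirichlet space 𝒟. -/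
open Complex MeasureTheory Metric Set Filter

noncomputable section

/-- The function `u(z) = Σ_{k=2}^∞ zᵏ/(k (log k)^{3/4})`. -/
def uLog : ℂ → ℂ := fun z =>
  ∑' k : ℕ, z ^ (k + 2) /
    (((k : ℂ) + 2) * ((Real.log ((k : ℝ) + 2)) ^ ((3 : ℝ) / 4) : ℝ))

/-- The self-map `φ(z) = (1 − z)/2` of the unit disc. -/
def phiHalf : ℂ → ℂ := fun z => (1 - z) / 2


lemma rot_int (n m : ℕ) (hnm : n ≠ m) (r : ℝ) :
    ∫ z in ball (0:ℂ) r, z ^ n * (starRingEnd ℂ) (z ^ m) = 0 := by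
  set d : ℝ := (n:ℝ) - m with hd
  have hd0 : d ≠ 0 := by
    rw [hd, sub_ne_zero]; exact_mod_cast hnm
  set c : Circle := Circle.exp (Real.pi / d) with hc
  set F : ℂ → ℂ := (ball (0:ℂ) r).indicator (fun z => z ^ n * (starRingEnd ℂ) (z ^ m)) with hF
  have key : ∀ z, F (rotation c z) = - F z := by
    intro z
    have hn : ‖(c:ℂ) * z‖ = ‖z‖ := by rw [norm_mul, Circle.norm_coe, one_mul]
    simp only [hF, rotation_apply, indicator, mem_ball_zero_iff, hn]
    split_ifs
    · have h1 : (c:ℂ) ^ n * (starRingEnd ℂ) ((c:ℂ) ^ m) = -1 := by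
        rw [hc, Circle.coe_exp, map_pow, ← Complex.exp_conj, ← Complex.exp_nat_mul, ← Complex.exp_nat_mul,
          ← Complex.exp_add, ← Complex.exp_pi_mul_I]
        congr 1
        have : (d:ℂ) ≠ 0 := by exact_mod_cast hd0
        simp only [map_mul, Complex.conj_I, Complex.conj_ofReal]
        push_cast
        field_simp
        rw [hd]; push_cast; ring
      calc ((c:ℂ) * z) ^ n * (starRingEnd ℂ) (((c:ℂ) * z) ^ m)
          = ((c:ℂ) ^ n * (starRingEnd ℂ) ((c:ℂ) ^ m)) * (z ^ n * (starRingEnd ℂ) (z ^ m)) := by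
            rw [mul_pow, mul_pow, map_mul]; ring
        _ = _ := by rw [h1]; ring
    · simp
  rw [← integral_indicator measurableSet_ball]
  have h2 : ∫ z, F (rotation c z) = ∫ z, F z :=
    (rotation c).measurePreserving.integral_comp (rotation c).toHomeomorph.measurableEmbedding F
  simp only [key, integral_neg] at h2
  change ∫ z, F z = 0
  have : (2:ℂ) * ∫ z, F z = 0 := by linear_combination -h2
  simpa using this

lemma diag_int (n : ℕ) (r : ℝ) (hr : 0 ≤ r) :
    ∫ z in ball (0:ℂ) r, z ^ n * (starRingEnd ℂ) (z ^ n) =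
      ((Real.pi * (r ^ (2 * n + 2) / (n + 1)) : ℝ) : ℂ) := by
  rw [← integral_indicator measurableSet_ball]
  have h1 : (ball (0:ℂ) r).indicator (fun z => z ^ n * (starRingEnd ℂ) (z ^ n))
      = fun z => ((((Iio r).indicator (fun t : ℝ => t ^ (2 * n)) ‖z‖ : ℝ)) : ℂ) := by
    ext z
    simp only [indicator, mem_ball_zero_iff, mem_Iio]
    split_ifs
    · rw [Complex.mul_conj, Complex.normSq_eq_norm_sq, norm_pow]; push_cast; ring
    · simp
  rw [h1]
  refine (integral_complex_ofReal (f := fun z : ℂ => (Iio r).indicator (fun t : ℝ => t ^ (2 * n)) ‖z‖)).trans ?_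
  rw [integral_fun_norm_addHaar volume (Iio r |>.indicator (fun t : ℝ => t ^ (2 * n)))]
  congr 1
  have h2 : ∫ y in Ioi (0:ℝ), y ^ (Module.finrank ℝ ℂ - 1) • (Iio r).indicator (fun t : ℝ => t ^ (2 * n)) y
      = r ^ (2 * n + 2) / (2 * n + 2) := by
    have : (fun y : ℝ => y ^ (Module.finrank ℝ ℂ - 1) • (Iio r).indicator (fun t : ℝ => t ^ (2 * n)) y)
       = (Iio r).indicator (fun t : ℝ => t ^ (2 * n + 1)) := by
      ext y
      simp only [indicator, Complex.finrank_real_complex]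
      split_ifs
      · simp; ring
      · simp
    rw [this, setIntegral_indicator measurableSet_Iio, Ioi_inter_Iio, ← integral_Ioc_eq_integral_Ioo,
      ← intervalIntegral.integral_of_le hr, integral_pow]
    simp; ring
  rw [h2]
  simp [Measure.real]
  field_simp
  try ring

/-- Partial sums of a power series. -/
def pSum (a : ℕ → ℂ) (N : ℕ) (z : ℂ) : ℂ := ∑ n ∈ Finset.range N, a n * z ^ n

lemma pSum_continuous (a : ℕ → ℂ) (N : ℕ) : Continuous (pSum a N) := by
  unfold pSum; fun_prop

lemma cont_intOn_ball {E : Type*} [NormedAddCommGroup E] {F : ℂ → E} (hF : Continuous F) (r : ℝ) :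
    IntegrableOn F (ball (0:ℂ) r) :=
  (hF.continuousOn.integrableOn_compact (isCompact_closedBall (0:ℂ) r)).mono_set ball_subset_closedBall

lemma pSum_int (a : ℕ → ℂ) (N : ℕ) (r : ℝ) (hr : 0 ≤ r) :
    ∫ z in ball (0:ℂ) r, ‖pSum a N z‖ ^ 2 =
      Real.pi * ∑ n ∈ Finset.range N, ‖a n‖ ^ 2 * (r ^ (2 * n + 2) / (n + 1)) := by
  have h : ∫ z in ball (0:ℂ) r, ((‖pSum a N z‖ ^ 2 : ℝ) : ℂ) =
     ((Real.pi * ∑ n ∈ Finset.range N, ‖a n‖ ^ 2 * (r ^ (2 * n + 2) / (n + 1)) : ℝ) : ℂ) := by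
    have h1 : ∀ z, ((‖pSum a N z‖ ^ 2 : ℝ) : ℂ) = ∑ n ∈ Finset.range N, ∑ m ∈ Finset.range N,
        (a n * (starRingEnd ℂ) (a m)) * (z ^ n * (starRingEnd ℂ) (z ^ m)) := by
      intro z
      rw [← Complex.normSq_eq_norm_sq, ← Complex.mul_conj, pSum, map_sum, Finset.sum_mul_sum]
      refine Finset.sum_congr rfl fun n _ => Finset.sum_congr rfl fun m _ => ?_
      rw [map_mul]; ring
    simp_rw [h1]
    rw [integral_finsetSum]
    · rw [Finset.mul_sum]
      push_cast
      refine Finset.sum_congr rfl fun n hn => ?_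
      rw [integral_finsetSum]
      · rw [Finset.sum_eq_single n]
        · rw [integral_const_mul, diag_int n r hr, Complex.mul_conj, Complex.normSq_eq_norm_sq]
          push_cast; ring
        · intro m _ hm
          rw [integral_const_mul, rot_int n m hm.symm r, mul_zero]
        · intro h; exact absurd hn h
      · intro m _
        exact cont_intOn_ball (by fun_prop) r
    · intro n _
      exact cont_intOn_ball (by fun_prop) r
  have h2 := (integral_complex_ofReal (μ := volume.restrict (ball (0:ℂ) r))
    (f := fun z => ‖pSum a N z‖ ^ 2)).symm.trans h
  exact Complex.ofReal_injective h2

lemma pSum_tendsto {a : ℕ → ℂ} {z w : ℂ} (h : HasSum (fun n => a n * z ^ n) w) :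
    Tendsto (fun N => pSum a N z) atTop (nhds w) := h.tendsto_sum_nat

/-- Upper bound (Fatou). -/
lemma fatou_bound (a : ℕ → ℂ) (g : ℂ → ℂ) (M : ℝ)
    (hM : ∀ N, ∑ n ∈ Finset.range N, ‖a n‖ ^ 2 / (n + 1) ≤ M)
    (hg : ∀ z ∈ unitDisc, HasSum (fun n => a n * z ^ n) (g z)) :
    ∫⁻ z in unitDisc, ENNReal.ofReal (‖g z‖ ^ 2) ≤ ENNReal.ofReal (Real.pi * M) := by
  have hmeas : MeasurableSet unitDisc := measurableSet_ball
  calc ∫⁻ z in unitDisc, ENNReal.ofReal (‖g z‖ ^ 2)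
      = ∫⁻ z in unitDisc, liminf (fun N => ENNReal.ofReal (‖pSum a N z‖ ^ 2)) atTop := by
        refine setLIntegral_congr_fun hmeas fun z hz => ?_
        have := (ENNReal.continuous_ofReal.tendsto _).comp (((pSum_tendsto (hg z hz)).norm).pow 2)
        exact this.liminf_eq.symm
    _ ≤ liminf (fun N => ∫⁻ z in unitDisc, ENNReal.ofReal (‖pSum a N z‖ ^ 2)) atTop := by
        refine lintegral_liminf_le fun N => ?_
        have := pSum_continuous a N
        exact (ENNReal.continuous_ofReal.comp (by fun_prop : Continuous fun z => ‖pSum a N z‖ ^ 2)).measurable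
    _ ≤ ENNReal.ofReal (Real.pi * M) := by
        refine liminf_le_of_frequently_le' (Frequently.of_forall fun N => ?_)
        have hc : Continuous fun z => ‖pSum a N z‖ ^ 2 := by
          have := pSum_continuous a N
          fun_prop
        rw [unitDisc, ← ofReal_integral_eq_lintegral_ofReal (cont_intOn_ball hc 1)
          (Eventually.of_forall fun z => by positivity), pSum_int a N 1 zero_le_one]
        refine ENNReal.ofReal_le_ofReal (mul_le_mul_of_nonneg_left ?_ Real.pi_pos.le)
        refine le_trans (le_of_eq ?_) (hM N)
        refine Finset.sum_congr rfl fun n _ => ?_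
        simp [div_eq_mul_inv]

lemma fatou_int (g : ℂ → ℂ) (M : ℝ) (hM : 0 ≤ M)
    (hmeas : AEStronglyMeasurable g (volume.restrict unitDisc))
    (h : ∫⁻ z in unitDisc, ENNReal.ofReal (‖g z‖ ^ 2) ≤ ENNReal.ofReal M) :
    IntegrableOn (fun z => ‖g z‖ ^ 2) unitDisc ∧ ∫ z in unitDisc, ‖g z‖ ^ 2 ≤ M := by
  have hm : AEStronglyMeasurable (fun z => ‖g z‖ ^ 2) (volume.restrict unitDisc) :=
    hmeas.norm.pow 2
  constructor
  · refine ⟨hm, ?_⟩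
    rw [hasFiniteIntegral_iff_ofReal (Eventually.of_forall fun z => by positivity)]
    exact h.trans_lt ENNReal.ofReal_lt_top
  · rw [integral_eq_lintegral_of_nonneg_ae (Eventually.of_forall fun z => by positivity) hm]
    exact ENNReal.toReal_le_of_le_ofReal hM h

/-- Lower bound (Bessel). -/
lemma bessel (a : ℕ → ℂ) (g : ℂ → ℂ)
    (hg : ∀ z ∈ unitDisc, HasSum (fun n => a n * z ^ n) (g z))
    (hi : IntegrableOn (fun z => ‖g z‖ ^ 2) unitDisc) (M : ℕ) :
    ∑ n ∈ Finset.range M, ‖a n‖ ^ 2 / (n + 1) ≤ (1 / Real.pi) * ∫ z in unitDisc, ‖g z‖ ^ 2 := by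
  have key : ∀ r : ℝ, 0 ≤ r → r < 1 →
      Real.pi * ∑ n ∈ Finset.range M, ‖a n‖ ^ 2 * (r ^ (2 * n + 2) / (n + 1)) ≤
        ∫ z in unitDisc, ‖g z‖ ^ 2 := by
    intro r hr0 hr1
    have hsub : ball (0:ℂ) r ⊆ unitDisc := ball_subset_ball hr1.le
    have hs : Summable fun n => ‖a n‖ * r ^ n := by
      have h1 : (r:ℂ) ∈ unitDisc := by simp [unitDisc, abs_of_nonneg hr0, hr1]
      have := (hg r h1).summable.norm
      simpa [abs_of_nonneg hr0] using this
    set K := ∑' n, ‖a n‖ * r ^ n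
    have hb : ∀ N, ∀ z ∈ ball (0:ℂ) r, ‖pSum a N z‖ ≤ K := by
      intro N z hz
      have hz' : ‖z‖ ≤ r := (mem_ball_zero_iff.1 hz).le
      calc ‖pSum a N z‖ ≤ ∑ n ∈ Finset.range N, ‖a n * z ^ n‖ := norm_sum_le _ _
        _ ≤ ∑ n ∈ Finset.range N, ‖a n‖ * r ^ n := by
          refine Finset.sum_le_sum fun n _ => ?_
          rw [norm_mul, norm_pow]; gcongr
        _ ≤ K := hs.sum_le_tsum _ fun n _ => by positivity
    have hlim : Tendsto (fun N => ∫ z in ball (0:ℂ) r, ‖pSum a N z‖ ^ 2) atTop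
        (nhds (∫ z in ball (0:ℂ) r, ‖g z‖ ^ 2)) := by
      refine tendsto_integral_of_dominated_convergence (fun _ => K ^ 2) (fun N => ?_) ?_ (fun N => ?_) ?_
      · have := pSum_continuous a N
        exact (by fun_prop : Continuous fun z => ‖pSum a N z‖ ^ 2).aestronglyMeasurable
      · exact cont_intOn_ball continuous_const r
      · filter_upwards [ae_restrict_mem measurableSet_ball] with z hz
        have := hb N z hz
        rw [Real.norm_of_nonneg (by positivity)]
        gcongr
      · filter_upwards [ae_restrict_mem measurableSet_ball] with z hz
        exact (pSum_tendsto (hg z (hsub hz))).norm.pow 2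
    have h2 : ∫ z in ball (0:ℂ) r, ‖g z‖ ^ 2 ≤ ∫ z in unitDisc, ‖g z‖ ^ 2 :=
      setIntegral_mono_set hi (Eventually.of_forall fun z => by positivity)
        (Eventually.of_forall hsub)
    refine le_trans (ge_of_tendsto hlim ?_) h2
    filter_upwards [eventually_ge_atTop M] with N hN
    rw [pSum_int a N r hr0]
    refine mul_le_mul_of_nonneg_left ?_ Real.pi_pos.le
    refine Finset.sum_le_sum_of_subset_of_nonneg (Finset.range_mono hN) fun n _ _ => by positivity
  have hc : Continuous fun r : ℝ =>
      Real.pi * ∑ n ∈ Finset.range M, ‖a n‖ ^ 2 * (r ^ (2 * n + 2) / ((n:ℝ) + 1)) := by fun_prop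
  have h3 : Real.pi * ∑ n ∈ Finset.range M, ‖a n‖ ^ 2 * ((1:ℝ) ^ (2 * n + 2) / (n + 1)) ≤
        ∫ z in unitDisc, ‖g z‖ ^ 2 := by
    refine le_of_tendsto ((hc.tendsto 1).mono_left (nhdsWithin_le_nhds (s := Iio 1))) ?_
    filter_upwards [Ioo_mem_nhdsLT (zero_lt_one (α := ℝ))] with r hr
    exact key r hr.1.le hr.2
  rw [one_div, ← div_eq_inv_mul, le_div_iff₀ Real.pi_pos, mul_comm]
  simpa [div_eq_mul_inv] using h3

lemma deriv_taylor {f : ℂ → ℂ} (hf : DifferentiableOn ℂ f unitDisc) :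
    ∀ z ∈ unitDisc, HasSum (fun n => ((n.factorial : ℂ)⁻¹ * iteratedDeriv (n + 1) f 0) * z ^ n)
      (deriv f z) := by
  intro z hz
  have h := Complex.hasSum_taylorSeries_on_ball (f := deriv f) (c := 0) (r := 1)
    (hf.deriv isOpen_ball) hz
  refine h.congr_fun ?_ |> id
  intro n
  simp only [smul_eq_mul, sub_zero, iteratedDeriv_succ']
  ring

lemma self_taylor {f : ℂ → ℂ} (hf : DifferentiableOn ℂ f unitDisc) :
    ∀ z ∈ unitDisc, HasSum (fun n => ((n.factorial : ℂ)⁻¹ * iteratedDeriv n f 0) * z ^ n)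
      (f z) := by
  intro z hz
  have h := Complex.hasSum_taylorSeries_on_ball (f := f) (c := 0) (r := 1) hf hz
  refine h.congr_fun ?_ |> id
  intro n
  simp only [smul_eq_mul, sub_zero]
  ring

/-- The Dirichlet energy. -/
def dirE (f : ℂ → ℂ) : ℝ := (1 / Real.pi) * ∫ z in unitDisc, ‖deriv f z‖ ^ 2

lemma dirE_nonneg (f : ℂ → ℂ) : 0 ≤ dirE f :=
  mul_nonneg (by positivity) (integral_nonneg fun z => by positivity)

lemma deriv_bound {f : ℂ → ℂ} (hf : MemDirichlet f) {w : ℂ} (hw : ‖w‖ ≤ 3 / 4) :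
    ‖deriv f w‖ ≤ 16 * √(dirE f) := by
  set a : ℕ → ℂ := fun n => (n.factorial : ℂ)⁻¹ * iteratedDeriv (n + 1) f 0 with ha
  have hs := deriv_taylor hf.1
  have hB := bessel a (deriv f) hs hf.2
  have hw1 : w ∈ unitDisc := by
    rw [unitDisc, mem_ball_zero_iff]; linarith
  have hcoef : ∀ n, ‖a n‖ ≤ √(dirE f) * (n + 1) := by
    intro n
    have h1 : ‖a n‖ ^ 2 / (n + 1) ≤ dirE f := by
      refine le_trans ?_ (hB (n + 1))
      exact Finset.single_le_sum (f := fun n : ℕ => ‖a n‖ ^ 2 / ((n:ℝ) + 1))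
        (fun i _ => by positivity) (Finset.self_mem_range_succ n)
    rw [div_le_iff₀ (by positivity)] at h1
    refine le_of_sq_le_sq ?_ (by positivity) |> id
    rw [mul_pow, Real.sq_sqrt (dirE_nonneg f)]
    refine h1.trans (mul_le_mul_of_nonneg_left ?_ (dirE_nonneg f))
    have : (0:ℝ) ≤ n := n.cast_nonneg
    nlinarith
  have hgeo : HasSum (fun n : ℕ => √(dirE f) * (((n:ℝ) + 1) * (3 / 4) ^ n)) (16 * √(dirE f)) := by
    have h1 := hasSum_coe_mul_geometric_of_norm_lt_one (r := (3 / 4 : ℝ)) (by norm_num)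
    have h2 := hasSum_geometric_of_lt_one (r := (3 / 4 : ℝ)) (by norm_num) (by norm_num)
    have h3 := (h1.add h2).mul_left (√(dirE f))
    have e : √(dirE f) * (3 / 4 / (1 - 3 / 4) ^ 2 + (1 - 3 / 4)⁻¹) = 16 * √(dirE f) := by
      norm_num; ring
    rw [e] at h3
    have e2 : (fun n : ℕ => √(dirE f) * (((n:ℝ) + 1) * (3 / 4) ^ n)) =
        fun n : ℕ => √(dirE f) * ((n:ℝ) * (3 / 4) ^ n + (3 / 4) ^ n) := by
      ext n; ring
    rw [e2]
    exact h3
  rw [← (hs w hw1).tsum_eq]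
  refine tsum_of_norm_bounded hgeo fun n => ?_
  rw [norm_mul, norm_pow, ← mul_assoc]
  exact mul_le_mul (hcoef n) (by gcongr) (by positivity) (by positivity)

lemma dirNormSq_eq (f : ℂ → ℂ) : dirNormSq f = ‖f 0‖ ^ 2 + dirE f := rfl

lemma eval_bound {f : ℂ → ℂ} (hf : MemDirichlet f) {w : ℂ} (hw : ‖w‖ ≤ 3 / 4) :
    ‖f w‖ ^ 2 ≤ 512 * dirNormSq f ∧ ‖deriv f w‖ ^ 2 ≤ 512 * dirNormSq f := by
  have hE := dirE_nonneg f
  have hsq := Real.sq_sqrt hE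
  constructor
  · have h := (convex_closedBall (0:ℂ) (3 / 4)).norm_image_sub_le_of_norm_deriv_le
      (f := f) (C := 16 * √(dirE f)) (x := 0) (y := w)
      (fun x hx => hf.1.differentiableAt (isOpen_ball.mem_nhds (by
        rw [mem_ball_zero_iff]; rw [mem_closedBall_zero_iff] at hx; linarith)))
      (fun x hx => deriv_bound hf (mem_closedBall_zero_iff.1 hx))
      (by simp; norm_num) (mem_closedBall_zero_iff.2 hw)
    rw [sub_zero] at h
    have h2 : ‖f w‖ ≤ ‖f 0‖ + 16 * √(dirE f) := by
      have h3 : ‖f w‖ ≤ ‖f w - f 0‖ + ‖f 0‖ := by simpa using norm_add_le (f w - f 0) (f 0)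
      have : 16 * √(dirE f) * ‖w‖ ≤ 16 * √(dirE f) * 1 :=
        mul_le_mul_of_nonneg_left (by linarith) (by positivity)
      linarith
    have h4 : ‖f w‖ ^ 2 ≤ (‖f 0‖ + 16 * √(dirE f)) ^ 2 := by gcongr
    rw [dirNormSq_eq]
    nlinarith [sq_nonneg (‖f 0‖ - 16 * √(dirE f)), sq_nonneg ‖f 0‖]
  · have h4 : ‖deriv f w‖ ^ 2 ≤ (16 * √(dirE f)) ^ 2 := by
      have := deriv_bound hf hw
      gcongr
    rw [dirNormSq_eq]
    nlinarith [sq_nonneg ‖f 0‖]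

lemma dirNormSq_nonneg (f : ℂ → ℂ) : 0 ≤ dirNormSq f := by
  rw [dirNormSq_eq]; have := dirE_nonneg f; positivity

lemma self_l2 {f : ℂ → ℂ} (hf : MemDirichlet f) :
    IntegrableOn (fun z => ‖f z‖ ^ 2) unitDisc ∧
      ∫ z in unitDisc, ‖f z‖ ^ 2 ≤ Real.pi * dirNormSq f := by
  have hB := bessel _ (deriv f) (deriv_taylor hf.1) hf.2
  refine fatou_int f _ (mul_nonneg Real.pi_pos.le (dirNormSq_nonneg f))
    (hf.1.continuousOn.aestronglyMeasurable measurableSet_ball) ?_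
  refine fatou_bound _ f _ (fun N => ?_) (self_taylor hf.1)
  rw [dirNormSq_eq]
  refine le_trans (Finset.sum_le_sum_of_subset_of_nonneg (Finset.range_mono (Nat.le_succ N))
    fun n _ _ => by positivity) ?_
  rw [Finset.sum_range_succ']
  rw [add_comm]
  refine add_le_add (by simp) (le_trans (Finset.sum_le_sum fun n _ => ?_) (hB N))
  rw [norm_mul, norm_mul, Nat.factorial_succ]
  simp only [norm_inv, Complex.norm_natCast, Nat.cast_mul, mul_inv, norm_mul]
  have h0 : (0:ℝ) ≤ n := n.cast_nonneg
  have h1 : ((n + 1 : ℕ) : ℝ)⁻¹ ≤ 1 := inv_le_one_of_one_le₀ (by push_cast; linarith)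
  refine div_le_div₀ (by positivity) ?_ (by positivity) (by push_cast; linarith)
  refine pow_le_pow_left₀ (by positivity) ?_ 2
  refine mul_le_mul_of_nonneg_right ?_ (norm_nonneg _)
  exact mul_le_of_le_one_left (by positivity) h1

lemma phi_subst (G : ℂ → ℝ) (h0 : ∀ z, 0 ≤ G z) (hG : IntegrableOn G unitDisc) :
    IntegrableOn (fun z => G (phiHalf z)) unitDisc ∧
      ∫ z in unitDisc, G (phiHalf z) ≤ 4 * ∫ z in unitDisc, G z := by
  have hm : MeasurableSet unitDisc := measurableSet_ball
  set F := unitDisc.indicator G with hF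
  have hFi : Integrable F := hG.integrable_indicator hm
  have hphi : ∀ z, phiHalf z = (1 / 2 : ℝ) • (1 - z) := by
    intro z; simp [phiHalf]; ring
  have h1 : Integrable (fun z => F (phiHalf z)) := by
    simp_rw [hphi]
    exact (hFi.comp_smul (R := (1 / 2 : ℝ)) (by norm_num)).comp_sub_left 1
  have h2 : ∫ z, F (phiHalf z) = 4 * ∫ z in unitDisc, G z := by
    simp_rw [hphi]
    rw [integral_sub_left_eq_self (fun z => F ((1 / 2 : ℝ) • z)) volume 1,
      Measure.integral_comp_smul, integral_indicator hm]
    norm_num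
  have h3 : ∀ z ∈ unitDisc, phiHalf z ∈ unitDisc := by
    intro z hz
    simp only [unitDisc, mem_ball_zero_iff, phiHalf] at hz ⊢
    rw [norm_div]
    have := norm_sub_le (1:ℂ) z
    simp at this ⊢
    linarith
  have h4 : ∀ z ∈ unitDisc, F (phiHalf z) = G (phiHalf z) := fun z hz =>
    indicator_of_mem (h3 z hz) _
  constructor
  · exact (integrableOn_congr_fun h4 hm).1 h1.integrableOn
  · rw [← h2, ← setIntegral_congr_fun hm h4]
    exact setIntegral_le_integral h1 (Eventually.of_forall fun z => indicator_nonneg (fun z _ => h0 z) _)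

/-- The coefficients of `u'`. -/
def cc (k : ℕ) : ℝ := ((Real.log ((k : ℝ) + 2)) ^ ((3 : ℝ) / 4))⁻¹

lemma log_pos' (k : ℕ) : 0 < Real.log ((k : ℝ) + 2) :=
  Real.log_pos (by have : (0:ℝ) ≤ k := k.cast_nonneg
                   linarith)

lemma cc_pos (k : ℕ) : 0 < cc k := inv_pos.2 (Real.rpow_pos_of_pos (log_pos' k) _)

lemma cc_anti : Antitone cc := by
  intro m n h
  refine inv_anti₀ (Real.rpow_pos_of_pos (log_pos' m) _) ?_
  refine Real.rpow_le_rpow (log_pos' m).le ?_ (by norm_num)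
  refine Real.log_le_log (by positivity) ?_
  have : (m:ℝ) ≤ n := by exact_mod_cast h
  linarith

lemma cc_sq (k : ℕ) : cc k ^ 2 = ((Real.log ((k : ℝ) + 2)) ^ ((3 : ℝ) / 2))⁻¹ := by
  rw [cc, inv_pow, ← Real.rpow_natCast, ← Real.rpow_mul (log_pos' k).le]
  norm_num

lemma cc_summable : Summable fun k : ℕ => cc k ^ 2 / ((k:ℝ) + 1) := by
  set F : ℕ → ℝ := fun n => ((Real.log ((n : ℝ) + 1)) ^ ((3 : ℝ) / 2))⁻¹ / (n + 1) with hF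
  have hnn : ∀ n, 0 ≤ F n := fun n => by
    have : 0 ≤ Real.log ((n:ℝ) + 1) := Real.log_nonneg (by have : (0:ℝ) ≤ n := n.cast_nonneg
                                                           linarith)
    positivity
  have hmono : ∀ ⦃m n⦄, 0 < m → m ≤ n → F n ≤ F m := by
    intro m n hm h
    have h1 : (1:ℝ) ≤ m := by exact_mod_cast hm
    have h2 : (m:ℝ) ≤ n := by exact_mod_cast h
    have hl : 0 < Real.log ((m:ℝ) + 1) := Real.log_pos (by linarith)
    have hp := Real.rpow_pos_of_pos hl ((3:ℝ) / 2)
    refine div_le_div₀ (by positivity) ?_ (by positivity) (by linarith)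
    refine inv_anti₀ hp (Real.rpow_le_rpow hl.le ?_ (by norm_num))
    exact Real.log_le_log (by linarith) (by linarith)
  have hsum : Summable F := by
    rw [← summable_condensed_iff_of_nonneg hnn hmono]
    rw [← summable_nat_add_iff 1]
    have hl2 : 0 < Real.log 2 := Real.log_pos (by norm_num)
    have hps : Summable fun k : ℕ => (((k + 1 : ℕ) : ℝ) ^ ((3:ℝ) / 2))⁻¹ * ((Real.log 2) ^ ((3:ℝ) / 2))⁻¹ :=
      ((summable_nat_add_iff 1).2 (Real.summable_nat_rpow_inv.2 (by norm_num : (1:ℝ) < 3 / 2))).mul_right _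
    refine Summable.of_nonneg_of_le (fun k => mul_nonneg (by positivity) (hnn _)) (fun k => ?_) hps
    have hk : (0:ℝ) < ((k + 1 : ℕ) : ℝ) := by positivity
    have hlog : ((k + 1 : ℕ) : ℝ) * Real.log 2 ≤ Real.log (((2 ^ (k + 1) : ℕ) : ℝ) + 1) := by
      rw [← Real.log_pow]
      refine Real.log_le_log (by positivity) ?_
      push_cast; linarith
    have hp : 0 < (((k + 1 : ℕ) : ℝ) * Real.log 2) ^ ((3:ℝ) / 2) :=
      Real.rpow_pos_of_pos (by positivity) _
    rw [← mul_inv, ← Real.mul_rpow hk.le hl2.le, hF]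
    have h5 : (Real.log (((2 ^ (k + 1) : ℕ) : ℝ) + 1) ^ ((3:ℝ) / 2))⁻¹ ≤
        ((((k + 1 : ℕ) : ℝ) * Real.log 2) ^ ((3:ℝ) / 2))⁻¹ :=
      inv_anti₀ hp (Real.rpow_le_rpow (by positivity) hlog (by norm_num))
    have h6 : (2:ℝ) ^ (k + 1) / (((2 ^ (k + 1) : ℕ) : ℝ) + 1) ≤ 1 := by
      rw [div_le_one (by positivity)]; push_cast; linarith
    have h7 : 0 ≤ (Real.log (((2 ^ (k + 1) : ℕ) : ℝ) + 1) ^ ((3:ℝ) / 2))⁻¹ := by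
      have : 0 ≤ Real.log (((2 ^ (k + 1) : ℕ) : ℝ) + 1) := le_trans (by positivity) hlog
      positivity
    calc (2:ℝ) ^ (k + 1) * ((Real.log (((2 ^ (k + 1) : ℕ) : ℝ) + 1) ^ ((3:ℝ) / 2))⁻¹ / (((2 ^ (k + 1) : ℕ) : ℝ) + 1))
        = ((2:ℝ) ^ (k + 1) / (((2 ^ (k + 1) : ℕ) : ℝ) + 1)) * (Real.log (((2 ^ (k + 1) : ℕ) : ℝ) + 1) ^ ((3:ℝ) / 2))⁻¹ := by ring
      _ ≤ 1 * (Real.log (((2 ^ (k + 1) : ℕ) : ℝ) + 1) ^ ((3:ℝ) / 2))⁻¹ :=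
          mul_le_mul_of_nonneg_right h6 h7
      _ ≤ _ := by rw [one_mul]; exact h5
  have h8 := ((summable_nat_add_iff 1).2 hsum).mul_left 2
  refine Summable.of_nonneg_of_le (fun k => by positivity) (fun k => ?_) h8
  rw [cc_sq]
  have e : ((k + 1 : ℕ) : ℝ) + 1 = (k:ℝ) + 2 := by push_cast; ring
  simp only [hF, e]
  have := inv_pos.2 (Real.rpow_pos_of_pos (log_pos' k) ((3:ℝ) / 2))
  rw [← mul_div_assoc, div_le_div_iff₀ (by positivity) (by positivity)]
  have h0 : (0:ℝ) ≤ k := k.cast_nonneg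
  nlinarith

/-- The terms of the series for `u`. -/
def uTerm (k : ℕ) (z : ℂ) : ℂ := z ^ (k + 2) /
    (((k : ℂ) + 2) * ((Real.log ((k : ℝ) + 2)) ^ ((3 : ℝ) / 4) : ℝ))

lemma uLog_eq : uLog = fun z => ∑' k, uTerm k z := rfl

lemma uTerm_diff (k : ℕ) : Differentiable ℂ (uTerm k) := by
  unfold uTerm; fun_prop

lemma uTerm_deriv (k : ℕ) (z : ℂ) : deriv (uTerm k) z = (cc k : ℂ) * z ^ k * z := by
  have h : HasDerivAt (uTerm k) (((k + 2 : ℕ) : ℂ) * z ^ (k + 1) /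
      (((k : ℂ) + 2) * ((Real.log ((k : ℝ) + 2)) ^ ((3 : ℝ) / 4) : ℝ))) z :=
    (hasDerivAt_pow (k + 2) z).div_const _
  rw [h.deriv, cc]
  have h2 : (k:ℂ) + 2 ≠ 0 := by exact_mod_cast (by positivity : ((k:ℝ) + 2) ≠ 0)
  have h3 : (((Real.log ((k : ℝ) + 2)) ^ ((3 : ℝ) / 4) : ℝ) : ℂ) ≠ 0 := by
    exact_mod_cast (Real.rpow_pos_of_pos (log_pos' k) _).ne'
  push_cast
  field_simp
  ring

lemma uTerm_bound (k : ℕ) {z : ℂ} {r : ℝ} (hz : ‖z‖ ≤ r) (hr : r ≤ 1) :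
    ‖uTerm k z‖ ≤ cc 0 * r ^ k := by
  have h0 : 0 ≤ r := (norm_nonneg z).trans hz
  have h1 : uTerm k z = (cc k : ℂ) * z ^ (k + 2) * ((k:ℂ) + 2)⁻¹ := by
    rw [uTerm, cc]; push_cast; rw [div_eq_mul_inv, mul_inv]; ring
  rw [h1, norm_mul, norm_mul, norm_pow, Complex.norm_real, Real.norm_of_nonneg (cc_pos k).le]
  have h2 : ‖((k:ℂ) + 2)⁻¹‖ ≤ 1 := by
    rw [norm_inv]
    refine inv_le_one_of_one_le₀ ?_
    have : ‖(k:ℂ) + 2‖ = (k:ℝ) + 2 := by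
      have := Complex.norm_natCast (k + 2)
      push_cast at this
      exact this
    rw [this]
    have : (0:ℝ) ≤ k := k.cast_nonneg
    linarith
  have h3 : ‖z‖ ^ (k + 2) ≤ r ^ k :=
    (pow_le_pow_left₀ (norm_nonneg z) hz _).trans (pow_le_pow_of_le_one h0 hr (by omega))
  calc cc k * ‖z‖ ^ (k + 2) * ‖((k:ℂ) + 2)⁻¹‖ ≤ cc k * ‖z‖ ^ (k + 2) * 1 := by
        have := (cc_pos k).le
        gcongr
    _ ≤ cc 0 * r ^ k := by
        rw [mul_one]
        exact mul_le_mul (cc_anti (Nat.zero_le k)) h3 (by positivity) (cc_pos 0).le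

lemma cc_hasSum {z : ℂ} (hz : z ∈ unitDisc) :
    HasSum (fun k => (cc k : ℂ) * z ^ k) (∑' k, (cc k : ℂ) * z ^ k) := by
  have hz : ‖z‖ < 1 := mem_ball_zero_iff.1 hz
  refine Summable.hasSum ?_
  refine Summable.of_norm_bounded (g := fun k => cc 0 * ‖z‖ ^ k)
    ((summable_geometric_of_lt_one (norm_nonneg z) hz).mul_left _) fun k => ?_
  rw [norm_mul, norm_pow, Complex.norm_real, Real.norm_of_nonneg (cc_pos k).le]
  have := cc_anti (Nat.zero_le k)
  gcongr

lemma uLog_local {z : ℂ} (hz : z ∈ unitDisc) :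
    DifferentiableAt ℂ uLog z ∧ deriv uLog z = (∑' k, (cc k : ℂ) * z ^ k) * z := by
  have hz1 : ‖z‖ < 1 := mem_ball_zero_iff.1 hz
  obtain ⟨r, hr1, hr2⟩ := exists_between hz1
  have hr0 : 0 ≤ r := (norm_nonneg z).trans hr1.le
  have hs : Summable fun k => cc 0 * r ^ k := (summable_geometric_of_lt_one hr0 hr2).mul_left _
  have hzr : z ∈ ball (0:ℂ) r := mem_ball_zero_iff.2 hr1
  have hb : ∀ (i : ℕ) (w : ℂ), w ∈ ball (0:ℂ) r → ‖uTerm i w‖ ≤ cc 0 * r ^ i := fun i w hw =>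
    uTerm_bound i (mem_ball_zero_iff.1 hw).le hr2.le
  constructor
  · exact (Complex.differentiableOn_tsum_of_summable_norm hs
      (fun i => (uTerm_diff i).differentiableOn) isOpen_ball hb).differentiableAt
      (isOpen_ball.mem_nhds hzr)
  · have h := Complex.hasSum_deriv_of_summable_norm hs
      (fun i => (uTerm_diff i).differentiableOn) isOpen_ball hb hzr
    simp only [uTerm_deriv] at h
    exact h.unique ((cc_hasSum hz).mul_right z)

lemma uLog_zero : uLog 0 = 0 := by
  simp [uLog]

lemma uLog_mem : MemDirichlet uLog := by
  refine ⟨fun z hz => (uLog_local hz).1.differentiableWithinAt, ?_⟩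
  set M := ∑' k : ℕ, cc k ^ 2 / ((k:ℝ) + 1)
  have hM : 0 ≤ M := tsum_nonneg fun k => by positivity
  have h := fatou_bound (fun k => (cc k : ℂ)) (fun z => ∑' k, (cc k : ℂ) * z ^ k) M (fun N => by
    simp only [Complex.norm_real, Real.norm_of_nonneg (cc_pos _).le]
    exact cc_summable.sum_le_tsum _ fun k _ => by positivity) (fun z hz => cc_hasSum hz)
  refine (fatou_int (deriv uLog) (Real.pi * M) (mul_nonneg Real.pi_pos.le hM)
    (measurable_deriv uLog).aestronglyMeasurable (le_trans ?_ h)).1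
  refine setLIntegral_mono' measurableSet_ball fun z hz => ENNReal.ofReal_le_ofReal ?_
  rw [(uLog_local hz).2, norm_mul]
  have hz1 : ‖z‖ < 1 := mem_ball_zero_iff.1 hz
  refine pow_le_pow_left₀ (by positivity) (mul_le_of_le_one_right (norm_nonneg _) hz1.le) 2

lemma cc_abel {z : ℂ} (hz : z ∈ unitDisc) :
    ‖(1 - z) * ∑' k, (cc k : ℂ) * z ^ k‖ ≤ 2 * cc 0 := by
  have hz1 : ‖z‖ < 1 := mem_ball_zero_iff.1 hz
  have hs := cc_hasSum hz
  set g := ∑' k, (cc k : ℂ) * z ^ k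
  have h1 : HasSum (fun k => (cc (k + 1) : ℂ) * z ^ (k + 1)) (g - cc 0) := by
    have := (hasSum_nat_add_iff' 1).2 hs
    simpa using this
  have h2 : HasSum (fun k => (cc k : ℂ) * z ^ k * z) (g * z) := hs.mul_right z
  have h3 := h2.sub h1
  have h4 : ‖g * z - (g - cc 0)‖ ≤ cc 0 := by
    refine le_of_tendsto h3.tendsto_sum_nat.norm (Eventually.of_forall fun N => ?_)
    calc ‖∑ k ∈ Finset.range N, ((cc k : ℂ) * z ^ k * z - (cc (k + 1) : ℂ) * z ^ (k + 1))‖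
        ≤ ∑ k ∈ Finset.range N, (cc k - cc (k + 1)) := by
          refine norm_sum_le_of_le _ fun k _ => ?_
          have e : (cc k : ℂ) * z ^ k * z - (cc (k + 1) : ℂ) * z ^ (k + 1) =
            ((cc k - cc (k + 1) : ℝ) : ℂ) * z ^ (k + 1) := by push_cast; ring
          have hd : 0 ≤ cc k - cc (k + 1) := sub_nonneg.2 (cc_anti (Nat.le_succ k))
          rw [e, norm_mul, norm_pow, Complex.norm_real, Real.norm_of_nonneg hd]
          exact mul_le_of_le_one_right hd (pow_le_one₀ (norm_nonneg z) hz1.le)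
      _ = cc 0 - cc N := Finset.sum_range_sub' cc N
      _ ≤ cc 0 := by linarith [cc_pos N]
  have e : (1 - z) * g = (cc 0 : ℂ) - (g * z - (g - cc 0)) := by ring
  rw [e]
  refine (norm_sub_le _ _).trans ?_
  rw [Complex.norm_real, Real.norm_of_nonneg (cc_pos 0).le]
  linarith

lemma uLog_deriv_bound {z : ℂ} (hz : z ∈ unitDisc) (hre : z.re ≤ 0) :
    ‖deriv uLog z‖ ≤ 2 * cc 0 := by
  have hz1 : ‖z‖ < 1 := mem_ball_zero_iff.1 hz
  have h := cc_abel hz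
  rw [(uLog_local hz).2]
  rw [norm_mul] at h ⊢
  have h1 : 1 ≤ ‖1 - z‖ := by
    have := Complex.re_le_norm (1 - z)
    simp at this
    linarith
  set G := ‖∑' k, (cc k : ℂ) * z ^ k‖
  have hG : 0 ≤ G := norm_nonneg _
  nlinarith [norm_nonneg z]

lemma uLog_bound {z : ℂ} (hz : z ∈ unitDisc) (hre : z.re ≤ 0) :
    ‖uLog z‖ ≤ 2 * cc 0 := by
  have hz1 : ‖z‖ < 1 := mem_ball_zero_iff.1 hz
  have hconv : Convex ℝ (unitDisc ∩ {z : ℂ | z.re ≤ 0}) :=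
    (convex_ball (0:ℂ) 1).inter (convex_halfSpace_re_le 0)
  have h := hconv.norm_image_sub_le_of_norm_deriv_le
      (f := uLog) (C := 2 * cc 0) (x := 0) (y := z)
      (fun x hx => (uLog_local hx.1).1)
      (fun x hx => uLog_deriv_bound hx.1 hx.2)
      ⟨by simp [unitDisc], by simp⟩ ⟨hz, hre⟩
  rw [uLog_zero, sub_zero, sub_zero] at h
  have := cc_pos 0
  nlinarith [norm_nonneg z]

lemma phi_mem {z : ℂ} (hz : z ∈ unitDisc) : phiHalf z ∈ unitDisc := by
  simp only [unitDisc, mem_ball_zero_iff, phiHalf] at hz ⊢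
  rw [norm_div]
  have := norm_sub_le (1:ℂ) z
  simp at this ⊢
  linarith

lemma phi_small {z : ℂ} (hz : z ∈ unitDisc) (hre : 0 ≤ z.re) : ‖phiHalf z‖ ≤ 3 / 4 := by
  have hz1 : ‖z‖ < 1 := mem_ball_zero_iff.1 hz
  have h2 : ‖z‖ ^ 2 < 1 := by nlinarith [norm_nonneg z]
  have h3 : ‖phiHalf z‖ ^ 2 ≤ (3 / 4) ^ 2 := by
    rw [phiHalf, norm_div, div_pow, ← Complex.normSq_eq_norm_sq, Complex.normSq_apply]
    rw [← Complex.normSq_eq_norm_sq, Complex.normSq_apply] at h2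
    simp
    nlinarith
  exact le_of_sq_le_sq h3 (by norm_num)

lemma main_deriv {f : ℂ → ℂ} (hf : MemDirichlet f) {z : ℂ} (hz : z ∈ unitDisc) :
    HasDerivAt (fun z => uLog z * f (phiHalf z))
      (deriv uLog z * f (phiHalf z) + uLog z * (deriv f (phiHalf z) * (-1 / 2))) z := by
  have h1 : HasDerivAt phiHalf (-1 / 2) z := by
    have := ((hasDerivAt_id z).const_sub 1).div_const 2
    exact this
  have h2 : HasDerivAt f (deriv f (phiHalf z)) (phiHalf z) :=
    (hf.1.differentiableAt (isOpen_ball.mem_nhds (phi_mem hz))).hasDerivAt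
  exact (uLog_local hz).1.hasDerivAt.mul (h2.comp z h1)

lemma main_pt {f : ℂ → ℂ} (hf : MemDirichlet f) {z : ℂ} (hz : z ∈ unitDisc) :
    ‖deriv (fun z => uLog z * f (phiHalf z)) z‖ ^ 2 ≤
      (1024 * dirNormSq f) * ‖deriv uLog z‖ ^ 2 + (1024 * dirNormSq f) * ‖uLog z‖ ^ 2 +
      (8 * cc 0 ^ 2) * ‖f (phiHalf z)‖ ^ 2 + (8 * cc 0 ^ 2) * ‖deriv f (phiHalf z)‖ ^ 2 := by
  rw [(main_deriv hf hz).deriv]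
  have hN := dirNormSq_nonneg f
  have hc := cc_pos 0
  set A := ‖deriv uLog z‖ with hA
  set B := ‖uLog z‖ with hB
  set P := ‖f (phiHalf z)‖ with hP
  set Q := ‖deriv f (phiHalf z)‖ with hQ
  have hA0 : 0 ≤ A := norm_nonneg _
  have hB0 : 0 ≤ B := norm_nonneg _
  have hP0 : 0 ≤ P := norm_nonneg _
  have hQ0 : 0 ≤ Q := norm_nonneg _
  have h1 : ‖deriv uLog z * f (phiHalf z) + uLog z * (deriv f (phiHalf z) * (-1 / 2))‖ ≤
      A * P + B * Q := by
    refine (norm_add_le _ _).trans ?_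
    rw [norm_mul, norm_mul, norm_mul]
    have : ‖(-1 / 2 : ℂ)‖ = 1 / 2 := by simp
    rw [this]
    have := mul_nonneg hB0 hQ0
    simp only [← hA, ← hB, ← hP, ← hQ]
    linarith
  have h2 : ‖deriv uLog z * f (phiHalf z) + uLog z * (deriv f (phiHalf z) * (-1 / 2))‖ ^ 2 ≤
      2 * (A ^ 2 * P ^ 2) + 2 * (B ^ 2 * Q ^ 2) := by
    refine (pow_le_pow_left₀ (norm_nonneg _) h1 2).trans ?_
    nlinarith [sq_nonneg (A * P - B * Q)]
  refine h2.trans ?_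
  rcases le_total z.re 0 with hre | hre
  · have hA1 : A ^ 2 ≤ (2 * cc 0) ^ 2 := pow_le_pow_left₀ hA0 (uLog_deriv_bound hz hre) 2
    have hB1 : B ^ 2 ≤ (2 * cc 0) ^ 2 := pow_le_pow_left₀ hB0 (uLog_bound hz hre) 2
    have h3 := mul_le_mul_of_nonneg_right hA1 (sq_nonneg P)
    have h4 := mul_le_mul_of_nonneg_right hB1 (sq_nonneg Q)
    have h5 : 0 ≤ (1024 * dirNormSq f) * A ^ 2 := by positivity
    have h6 : 0 ≤ (1024 * dirNormSq f) * B ^ 2 := by positivity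
    linarith
  · obtain ⟨e1, e2⟩ := eval_bound hf (phi_small hz hre)
    have h3 := mul_le_mul_of_nonneg_left e1 (sq_nonneg A)
    have h4 := mul_le_mul_of_nonneg_left e2 (sq_nonneg B)
    have h5 : 0 ≤ (8 * cc 0 ^ 2) * P ^ 2 := by positivity
    have h6 : 0 ≤ (8 * cc 0 ^ 2) * Q ^ 2 := by positivity
    linarith

lemma wco_bounded : WCOBounded uLog phiHalf := by
  set U1 := ∫ z in unitDisc, ‖deriv uLog z‖ ^ 2 with hU1
  set U2 := ∫ z in unitDisc, ‖uLog z‖ ^ 2 with hU2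
  have hU10 : 0 ≤ U1 := integral_nonneg fun z => by positivity
  have hU20 : 0 ≤ U2 := integral_nonneg fun z => by positivity
  have hc := cc_pos 0
  refine ⟨(1 / Real.pi) * (1024 * U1 + 1024 * U2) + 64 * cc 0 ^ 2, by positivity, fun f hf => ?_⟩
  have hN := dirNormSq_nonneg f
  obtain ⟨i1, b1⟩ := self_l2 hf
  obtain ⟨j1, d1⟩ := phi_subst (fun z => ‖f z‖ ^ 2) (fun z => by positivity) i1
  obtain ⟨j2, d2⟩ := phi_subst (fun z => ‖deriv f z‖ ^ 2) (fun z => by positivity) hf.2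
  have hi1 := uLog_mem.2.const_mul (1024 * dirNormSq f)
  have hi2 := (self_l2 uLog_mem).1.const_mul (1024 * dirNormSq f)
  have hi3 := j1.const_mul (8 * cc 0 ^ 2)
  have hi4 := j2.const_mul (8 * cc 0 ^ 2)
  have hi := ((hi1.add hi2).add hi3).add hi4
  have hint : IntegrableOn (fun z => ‖deriv (fun z => uLog z * f (phiHalf z)) z‖ ^ 2) unitDisc := by
    refine hi.mono' ((measurable_deriv _).norm.pow_const 2).aestronglyMeasurable ?_
    filter_upwards [ae_restrict_mem measurableSet_ball] with z hz
    rw [Real.norm_of_nonneg (by positivity)]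
    exact main_pt hf hz
  refine ⟨⟨fun z hz => (main_deriv hf hz).differentiableAt.differentiableWithinAt, hint⟩, ?_⟩
  have hle := setIntegral_mono_on hint hi measurableSet_ball fun z hz => main_pt hf hz
  have e4 := integral_add ((hi1.add hi2).add hi3) hi4
  have e3 := integral_add (hi1.add hi2) hi3
  have e2 := integral_add hi1 hi2
  simp only [Pi.add_apply] at e2 e3 e4 hle
  rw [e4, e3, e2, integral_const_mul, integral_const_mul, integral_const_mul, integral_const_mul] at hle
  have hE : ∫ z in unitDisc, ‖deriv f z‖ ^ 2 ≤ Real.pi * dirNormSq f := by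
    have : ∫ z in unitDisc, ‖deriv f z‖ ^ 2 = Real.pi * dirE f := by
      rw [dirE]; field_simp
    rw [this, dirNormSq_eq]
    refine mul_le_mul_of_nonneg_left ?_ Real.pi_pos.le
    linarith [sq_nonneg ‖f 0‖]
  have hd1 := mul_le_mul_of_nonneg_left (d1.trans (mul_le_mul_of_nonneg_left b1 (by norm_num)))
    (by positivity : 0 ≤ 8 * cc 0 ^ 2)
  have hd2 := mul_le_mul_of_nonneg_left (d2.trans (mul_le_mul_of_nonneg_left hE (by norm_num)))
    (by positivity : 0 ≤ 8 * cc 0 ^ 2)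
  have hfin : ∫ z in unitDisc, ‖deriv (fun z => uLog z * f (phiHalf z)) z‖ ^ 2 ≤
      (1024 * U1 + 1024 * U2 + Real.pi * (64 * cc 0 ^ 2)) * dirNormSq f := by
    refine hle.trans ?_
    linarith
  have h0 : ‖uLog 0 * f (phiHalf 0)‖ ^ 2 = 0 := by simp [uLog_zero]
  rw [dirNormSq, h0, zero_add]
  refine (mul_le_mul_of_nonneg_left hfin (by positivity)).trans (le_of_eq ?_)
  field_simp

/-- With `u(z) = Σ_{k≥2} zᵏ/(k (log k)^{3/4})` and `φ(z) = (1−z)/2`, the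
function `u` lies in the Dirichlet space and the weighted composition operator
`W_{u,φ}` is bounded on `𝒟`. -/
theorem uLog_memDirichlet_and_wco_bounded :
    MemDirichlet uLog ∧ WCOBounded uLog phiHalf := by
  exact ⟨uLog_mem, wco_bounded⟩
end
end

section
/- Let u(z) = (1 − z)² and let φ be the infinite Blaschke product with zero sequence (1 − 1/n²)_{n ≥ 1} (this sequence satisfies the Blaschke condition Σ 1/n² < ∞, so φ is a well-defined holomorphic self-map of 𝔻). Then the weighted composition operator W_{u,φ} : f ↦ u·(f∘φ) is bounded on the Dirichlet space 𝒟; that is, there is a constant C such that ‖(1−z)²·(f∘φ)‖_𝒟 ≤ C‖f‖_𝒟 for all f ∈ 𝒟. -/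
open Complex MeasureTheory Metric Set Filter

noncomputable section

/-- The zeros `1 − 1/n²` for `n ≥ 2` (indexed by `n - 2 : ℕ`). -/
def blaschkeZero (n : ℕ) : ℂ := 1 - 1 / ((n : ℂ) + 2) ^ 2

/-- The infinite Blaschke product with zero sequence `(1 − 1/n²)_{n ≥ 1}`:
the zero for `n = 1` is `0` (contributing the factor `z`); for `n ≥ 2` the
zeros `a = 1 − 1/n²` are real and positive, so the normalized Blaschke factor
`(|a|/a)(a − z)/(1 − \bar{a} z)` is `(a − z)/(1 − \bar{a} z)`. -/
def blaschkeProd : ℂ → ℂ := fun z =>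
  z * ∏' n : ℕ, (blaschkeZero n - z) / (1 - (starRingEnd ℂ) (blaschkeZero n) * z)

open scoped Topology

/-- The real number `1/(n+2)²`. -/
def bEps (n : ℕ) : ℝ := 1 / ((n : ℝ) + 2) ^ 2

lemma bEps_pos (n : ℕ) : 0 < bEps n := by unfold bEps; positivity

lemma bEps_lt_one (n : ℕ) : bEps n < 1 := by
  unfold bEps
  rw [div_lt_one (by positivity)]
  have : (0:ℝ) ≤ n := by positivity
  nlinarith

lemma bEps_summable : Summable bEps := by
  have h := (summable_nat_add_iff 2).2 (Real.summable_one_div_nat_pow.2 (one_lt_two))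
  refine h.congr fun n => ?_
  simp [bEps]

lemma blaschkeZero_eq (n : ℕ) : blaschkeZero n = ((1 - bEps n : ℝ) : ℂ) := by
  simp [blaschkeZero, bEps]

/-- The `n`-th Blaschke factor. -/
def bFac (n : ℕ) (z : ℂ) : ℂ :=
  (blaschkeZero n - z) / (1 - (starRingEnd ℂ) (blaschkeZero n) * z)

lemma bFac_eq (n : ℕ) (z : ℂ) :
    bFac n z = (((1 - bEps n : ℝ) : ℂ) - z) / (1 - ((1 - bEps n : ℝ) : ℂ) * z) := by
  rw [bFac, blaschkeZero_eq, Complex.conj_ofReal]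

lemma one_sub_norm_le (n : ℕ) {z : ℂ} (hz : ‖z‖ < 1) :
    1 - ‖z‖ ≤ ‖1 - ((1 - bEps n : ℝ) : ℂ) * z‖ := by
  have h1 := bEps_pos n
  have h2 := bEps_lt_one n
  have h := norm_sub_norm_le (1:ℂ) (((1 - bEps n : ℝ) : ℂ) * z)
  rw [norm_mul, Complex.norm_real, norm_one, Real.norm_of_nonneg (by linarith)] at h
  nlinarith [norm_nonneg z]

lemma den_ne (n : ℕ) {z : ℂ} (hz : ‖z‖ < 1) : 1 - ((1 - bEps n : ℝ) : ℂ) * z ≠ 0 := by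
  have := one_sub_norm_le n hz
  rw [← norm_pos_iff]; linarith

lemma eps_le_den (n : ℕ) {z : ℂ} (hz : ‖z‖ < 1) :
    bEps n ≤ ‖1 - ((1 - bEps n : ℝ) : ℂ) * z‖ := by
  have h1 := bEps_pos n
  have h2 := bEps_lt_one n
  have h := norm_sub_norm_le (1:ℂ) (((1 - bEps n : ℝ) : ℂ) * z)
  rw [norm_mul, Complex.norm_real, norm_one, Real.norm_of_nonneg (by linarith)] at h
  nlinarith [norm_nonneg z]

lemma one_sub_le_den (n : ℕ) {z : ℂ} (hz : ‖z‖ < 1) :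
    ‖1 - z‖ ≤ 2 * ‖1 - ((1 - bEps n : ℝ) : ℂ) * z‖ := by
  have h1 := bEps_pos n
  have h := eps_le_den n hz
  have e : 1 - z = (1 - ((1 - bEps n : ℝ) : ℂ) * z) + -(((bEps n : ℝ) : ℂ) * z) := by
    push_cast; ring
  have h3 := norm_add_le (1 - ((1 - bEps n : ℝ) : ℂ) * z) (-(((bEps n : ℝ) : ℂ) * z))
  rw [← e, norm_neg, norm_mul, Complex.norm_real, Real.norm_of_nonneg h1.le] at h3
  nlinarith [norm_nonneg z]

lemma bFac_norm_le (n : ℕ) {z : ℂ} (hz : ‖z‖ < 1) : ‖bFac n z‖ ≤ 1 := by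
  have h1 := bEps_pos n
  have h2 := bEps_lt_one n
  rw [bFac_eq, norm_div, div_le_one (norm_pos_iff.2 (den_ne n hz))]
  refine (sq_le_sq₀ (norm_nonneg _) (norm_nonneg _)).1 ?_
  rw [← Complex.normSq_eq_norm_sq, ← Complex.normSq_eq_norm_sq]
  have hz2 : z.re * z.re + z.im * z.im < 1 := by
    rw [← Complex.normSq_apply, Complex.normSq_eq_norm_sq]
    nlinarith [norm_nonneg z]
  simp only [Complex.normSq_apply, Complex.sub_re, Complex.sub_im, Complex.ofReal_re,
    Complex.ofReal_im, Complex.mul_re, Complex.mul_im, Complex.one_re, Complex.one_im]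
  have h3 : 0 ≤ bEps n * (2 - bEps n) := by nlinarith
  nlinarith [mul_nonneg h3 (sub_nonneg.2 hz2.le)]

lemma bFac_sub_one (n : ℕ) {z : ℂ} (hz : ‖z‖ < 1) :
    bFac n z - 1 = -((bEps n : ℂ) * (1 + z)) / (1 - ((1 - bEps n : ℝ) : ℂ) * z) := by
  rw [bFac_eq, div_sub_one (den_ne n hz)]
  congr 1
  push_cast; ring

lemma bFac_sub_one_le (n : ℕ) {z : ℂ} (hz : ‖z‖ < 1) :
    ‖bFac n z - 1‖ ≤ bEps n * (2 / (1 - ‖z‖)) := by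
  have h1 := bEps_pos n
  rw [bFac_sub_one n hz, norm_div, norm_neg, norm_mul, Complex.norm_real,
    Real.norm_of_nonneg h1.le, mul_div_assoc]
  have : ‖1 + z‖ ≤ 2 := by
    have := norm_add_le 1 z
    rw [norm_one] at this; linarith
  gcongr
  exact one_sub_norm_le n hz

lemma bFac_hasDerivAt (n : ℕ) {z : ℂ} (hz : ‖z‖ < 1) :
    HasDerivAt (bFac n) ((((1 - bEps n : ℝ) : ℂ) ^ 2 - 1) /
      (1 - ((1 - bEps n : ℝ) : ℂ) * z) ^ 2) z := by
  have e : bFac n = fun z => (((1 - bEps n : ℝ) : ℂ) - z) / (1 - ((1 - bEps n : ℝ) : ℂ) * z) :=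
    funext (bFac_eq n)
  rw [e]
  set a : ℂ := ((1 - bEps n : ℝ) : ℂ)
  have h1 : HasDerivAt (fun z : ℂ => a - z) (-1) z := by
    simpa using (hasDerivAt_id z).const_sub a
  have h2 : HasDerivAt (fun z : ℂ => 1 - a * z) (-a) z := by
    simpa using ((hasDerivAt_id z).const_mul a).const_sub 1
  refine (h1.fun_div h2 (den_ne n hz)).congr_deriv ?_
  congr 1
  ring

lemma bFac_deriv_le (n : ℕ) {z : ℂ} (hz : ‖z‖ < 1) :
    ‖deriv (bFac n) z‖ * ‖1 - z‖ ^ 2 ≤ 8 * bEps n := by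
  have h1 := bEps_pos n
  have h2 := bEps_lt_one n
  have hd := norm_pos_iff.2 (den_ne n hz)
  rw [(bFac_hasDerivAt n hz).deriv, norm_div, norm_pow]
  have e : ((1 - bEps n : ℝ) : ℂ) ^ 2 - 1 = ((-(bEps n * (2 - bEps n)) : ℝ) : ℂ) := by
    push_cast; ring
  rw [e, Complex.norm_real, norm_neg, Real.norm_of_nonneg (by nlinarith)]
  rw [div_mul_eq_mul_div, div_le_iff₀ (by positivity)]
  have h3 := one_sub_le_den n hz
  have h4 : ‖1 - z‖ ^ 2 ≤ (2 * ‖1 - ((1 - bEps n : ℝ) : ℂ) * z‖) ^ 2 := by gcongr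
  calc bEps n * (2 - bEps n) * ‖1 - z‖ ^ 2
      ≤ bEps n * 2 * (2 * ‖1 - ((1 - bEps n : ℝ) : ℂ) * z‖) ^ 2 := by
        gcongr; linarith
    _ = _ := by ring

lemma bFac_diffOn (n : ℕ) : DifferentiableOn ℂ (bFac n) (ball 0 1) := fun z hz =>
  (bFac_hasDerivAt n (by simpa using hz)).differentiableAt.differentiableWithinAt

/-- The infinite product of the factors. -/
def bInf (z : ℂ) : ℂ := ∏' n : ℕ, bFac n z

lemma bFac_hasProd : HasProdLocallyUniformlyOn bFac bInf (ball 0 1) := by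
  apply hasProdLocallyUniformlyOn_of_forall_compact isOpen_ball
  intro K hK hKc
  have key : MultipliableUniformlyOn (fun (n : ℕ) (z : ℂ) => 1 + (bFac n z - 1)) K := by
    rcases K.eq_empty_or_nonempty with rfl | hne
    · refine Summable.multipliableUniformlyOn_nat_one_add hKc bEps_summable ?_ ?_
      · filter_upwards with n z hz using by simp at hz
      · intro n; simp
    obtain ⟨z0, hz0, hmax⟩ := hKc.exists_isMaxOn hne continuous_norm.continuousOn
    have h0 : ‖z0‖ < 1 := by simpa using hK hz0
    refine Summable.multipliableUniformlyOn_nat_one_add hKc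
      (bEps_summable.mul_right (2 / (1 - ‖z0‖))) ?_ ?_
    · filter_upwards with n z hz
      have hz1 : ‖z‖ < 1 := by simpa using hK hz
      have hz2 : ‖z‖ ≤ ‖z0‖ := hmax hz
      refine (bFac_sub_one_le n hz1).trans ?_
      have := (bEps_pos n).le
      gcongr
    · intro n
      exact ((bFac_diffOn n).continuousOn.mono hK).sub continuousOn_const
  have key2 : MultipliableUniformlyOn bFac K := by
    simpa using key
  exact key2.hasProdUniformlyOn

lemma bInf_tendsto : TendstoLocallyUniformlyOn
    (fun N b => ∏ i ∈ Finset.range N, bFac i b) bInf atTop (ball 0 1) :=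
  bFac_hasProd.tendstoLocallyUniformlyOn_finsetRange

lemma bPart_diff (N : ℕ) :
    DifferentiableOn ℂ (fun b => ∏ i ∈ Finset.range N, bFac i b) (ball 0 1) := by
  induction N with
  | zero => simp
  | succ N ih =>
    simp only [Finset.prod_range_succ]
    exact ih.mul (bFac_diffOn N)

lemma bInf_diff : DifferentiableOn ℂ bInf (ball 0 1) :=
  bInf_tendsto.differentiableOn (Eventually.of_forall bPart_diff) isOpen_ball

lemma bPart_norm_le (N : ℕ) {z : ℂ} (hz : ‖z‖ < 1) :
    ‖∏ i ∈ Finset.range N, bFac i z‖ ≤ 1 := by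
  rw [norm_prod]
  exact Finset.prod_le_one (fun _ _ => norm_nonneg _) (fun i _ => bFac_norm_le i hz)

lemma bPart_deriv_le (N : ℕ) {z : ℂ} (hz : ‖z‖ < 1) :
    ‖deriv (fun b => ∏ i ∈ Finset.range N, bFac i b) z‖ * ‖1 - z‖ ^ 2 ≤
      ∑ i ∈ Finset.range N, 8 * bEps i := by
  have hz' : ball (0:ℂ) 1 ∈ 𝓝 z := isOpen_ball.mem_nhds (by simpa using hz)
  induction N with
  | zero => simp
  | succ N ih =>
    simp only [Finset.prod_range_succ, Finset.sum_range_succ]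
    rw [deriv_fun_mul ((bPart_diff N).differentiableAt hz') ((bFac_diffOn N).differentiableAt hz')]
    refine (mul_le_mul_of_nonneg_right (norm_add_le _ _) (by positivity)).trans ?_
    rw [norm_mul, norm_mul, add_mul]
    have a1 := bFac_deriv_le N hz
    have a2 := bFac_norm_le N hz
    have a3 := bPart_norm_le N hz
    refine add_le_add (le_trans ?_ ih) (le_trans ?_ a1)
    · gcongr
      exact mul_le_of_le_one_right (norm_nonneg _) a2
    · gcongr
      exact mul_le_of_le_one_left (norm_nonneg _) a3

lemma bInf_norm_le {z : ℂ} (hz : ‖z‖ < 1) : ‖bInf z‖ ≤ 1 :=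
  le_of_tendsto (bInf_tendsto.tendsto_at (by simpa using hz)).norm
    (Eventually.of_forall fun N => bPart_norm_le N hz)

lemma bInf_deriv_le {z : ℂ} (hz : ‖z‖ < 1) :
    ‖deriv bInf z‖ * ‖1 - z‖ ^ 2 ≤ ∑' i, 8 * bEps i := by
  have h := (bInf_tendsto.deriv (Eventually.of_forall bPart_diff) isOpen_ball).tendsto_at
    (a := z) (by simpa using hz)
  refine le_of_tendsto (h.norm.mul_const _) (Eventually.of_forall fun N => ?_)
  refine (bPart_deriv_le N hz).trans ?_
  exact (bEps_summable.mul_left 8).sum_le_tsum _ fun i _ => by have := bEps_pos i; positivity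

lemma blaschkeProd_eq : blaschkeProd = fun z => z * bInf z := rfl

lemma blaschkeProd_diff : DifferentiableOn ℂ blaschkeProd (ball 0 1) := by
  rw [blaschkeProd_eq]
  exact differentiableOn_id.mul bInf_diff

lemma blaschkeProd_norm_le {z : ℂ} (hz : ‖z‖ < 1) : ‖blaschkeProd z‖ ≤ ‖z‖ := by
  rw [blaschkeProd_eq, norm_mul]
  exact mul_le_of_le_one_right (norm_nonneg _) (bInf_norm_le hz)

lemma blaschkeProd_deriv_le : ∃ M : ℝ, 0 ≤ M ∧ ∀ z : ℂ, ‖z‖ < 1 →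
    ‖(1 - z) ^ 2 * deriv blaschkeProd z‖ ≤ M := by
  have hS : 0 ≤ ∑' i, 8 * bEps i :=
    tsum_nonneg fun i => by have := bEps_pos i; positivity
  refine ⟨4 + ∑' i, 8 * bEps i, by positivity, fun z hz => ?_⟩
  have hz' : ball (0:ℂ) 1 ∈ 𝓝 z := isOpen_ball.mem_nhds (by simpa using hz)
  rw [blaschkeProd_eq, deriv_fun_mul differentiableAt_fun_id (bInf_diff.differentiableAt hz')]
  rw [deriv_id'', one_mul, mul_comm, norm_mul, norm_pow]
  have h1 : ‖1 - z‖ ≤ 2 := by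
    have := norm_sub_le 1 z
    rw [norm_one] at this; linarith
  refine (mul_le_mul_of_nonneg_right (norm_add_le _ _) (by positivity)).trans ?_
  rw [add_mul, norm_mul]
  refine add_le_add ?_ (le_trans ?_ (bInf_deriv_le hz))
  · calc ‖bInf z‖ * ‖1 - z‖ ^ 2 ≤ 1 * 2 ^ 2 := by
          gcongr; exact bInf_norm_le hz
      _ = 4 := by norm_num
  · gcongr
    exact mul_le_of_le_one_left (norm_nonneg _) hz.le

lemma poisson_sub {g : ℂ → ℂ} (hg : DifferentiableOn ℂ g (ball 0 1)) {r : ℝ} (hr0 : 0 < r)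
    (hr : r < 1) {w : ℂ} (hw : ‖w‖ < r) :
    ‖g w‖ ^ 2 ≤ (2 * Real.pi)⁻¹ * ∫ η in (0:ℝ)..2 * Real.pi,
      poissonKernel 0 w (circleMap 0 r η) * ‖g (circleMap 0 r η)‖ ^ 2 := by
  have hd : DiffContOnCl ℂ (fun z => g z ^ 2) (ball 0 r) := by
    apply DifferentiableOn.diffContOnCl
    rw [closure_ball 0 hr0.ne']
    exact (hg.pow 2).mono (closedBall_subset_ball hr)
  have h := hd.circleAverage_poissonKernel_smul (w := w) (by simpa using hw)
  have h2 : ‖g w‖ ^ 2 = ‖g w ^ 2‖ := (norm_pow _ _).symm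
  rw [h2, ← h, Real.circleAverage_def, norm_smul, Real.norm_of_nonneg (by positivity)]
  gcongr
  refine (intervalIntegral.norm_integral_le_integral_norm (by positivity)).trans (le_of_eq ?_)
  refine intervalIntegral.integral_congr fun η _ => ?_
  simp only [Pi.smul_apply', norm_smul, norm_pow]
  congr 1
  apply Real.norm_of_nonneg
  rw [poissonKernel_def]
  simp only [sub_zero, norm_circleMap_zero, abs_of_pos hr0]
  have : ‖w‖ ^ 2 ≤ r ^ 2 := by gcongr
  exact div_nonneg (by linarith) (by positivity)

lemma poisson_avg {φ : ℂ → ℂ} (hφ : DifferentiableOn ℂ φ (ball 0 1))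
    (hφn : ∀ z : ℂ, ‖z‖ < 1 → ‖φ z‖ ≤ ‖z‖) {ρ r : ℝ} (hρ0 : 0 < ρ) (hρ : ρ < r) (hr : r < 1)
    {ζ : ℂ} (hζ : ‖ζ‖ = r) :
    (2 * Real.pi)⁻¹ * ∫ θ in (0:ℝ)..2 * Real.pi, poissonKernel 0 (φ (circleMap 0 ρ θ)) ζ = 1 := by
  have hφ0 : φ 0 = 0 := by simpa using hφn 0 (by simp)
  have hne : ∀ z ∈ closedBall (0:ℂ) ρ, ζ - φ z ≠ 0 := by
    intro z hz h0
    have hz1 : ‖z‖ ≤ ρ := by simpa using hz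
    have h1 := hφn z (by linarith)
    rw [← sub_eq_zero.1 h0] at h1
    linarith
  have hsub : closedBall (0:ℂ) ρ ⊆ ball 0 1 := closedBall_subset_ball (by linarith)
  have hdo : DifferentiableOn ℂ (fun z => (ζ + φ z) / (ζ - φ z)) (closedBall 0 ρ) :=
    ((hφ.mono hsub).const_add ζ).div ((hφ.mono hsub).const_sub ζ) hne
  have hd : DiffContOnCl ℂ (fun z => (ζ + φ z) / (ζ - φ z)) (ball 0 |ρ|) := by
    apply DifferentiableOn.diffContOnCl
    rw [abs_of_pos hρ0, closure_ball 0 hρ0.ne']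
    exact hdo
  have h := hd.circleAverage
  have hi : CircleIntegrable (fun z => (ζ + φ z) / (ζ - φ z)) 0 ρ :=
    (hdo.continuousOn.mono sphere_subset_closedBall).circleIntegrable hρ0.le
  have h2 := Complex.reCLM.circleAverage_comp_comm hi
  rw [h, hφ0, Real.circleAverage_def] at h2
  have hζ0 : ζ ≠ 0 := by rw [← norm_pos_iff]; linarith
  simp only [add_zero, sub_zero, div_self hζ0, Complex.reCLM_apply, Complex.one_re,
    Function.comp_apply, smul_eq_mul] at h2
  rw [← h2]
  congr 1
  refine intervalIntegral.integral_congr fun η _ => ?_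
  simp [poissonKernel_eq_re_herglotzRieszKernel, herglotzRieszKernel_def]

lemma sub_circle_lt {g φ : ℂ → ℂ} (hg : DifferentiableOn ℂ g (ball 0 1))
    (hφ : DifferentiableOn ℂ φ (ball 0 1))
    (hφn : ∀ z : ℂ, ‖z‖ < 1 → ‖φ z‖ ≤ ‖z‖) {ρ r : ℝ} (hρ0 : 0 < ρ) (hρ : ρ < r) (hr : r < 1) :
    Real.circleAverage (fun z => ‖g (φ z)‖ ^ 2) 0 ρ ≤ Real.circleAverage (fun z => ‖g z‖ ^ 2) 0 r := by
  have hr0 : 0 < r := hρ0.trans hρ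
  have pi2 : (0:ℝ) ≤ 2 * Real.pi := by positivity
  have hcm : ∀ s : ℝ, 0 < s → s < 1 → ∀ θ, circleMap 0 s θ ∈ ball (0:ℂ) 1 := by
    intro s h0 h1 θ; simpa [abs_of_pos h0] using h1
  have hφb : ∀ θ, ‖φ (circleMap 0 ρ θ)‖ ≤ ρ := by
    intro θ
    have := hφn (circleMap 0 ρ θ) (by simpa using hcm ρ hρ0 (by linarith) θ)
    simpa [abs_of_pos hρ0] using this
  have cφ : Continuous fun θ => φ (circleMap 0 ρ θ) :=
    hφ.continuousOn.comp_continuous (continuous_circleMap 0 ρ) (hcm ρ hρ0 (by linarith))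
  have cgφ : Continuous fun θ => g (φ (circleMap 0 ρ θ)) :=
    hg.continuousOn.comp_continuous cφ fun θ => by
      have := hφb θ
      simp; linarith
  have cg : Continuous fun θ => g (circleMap 0 r θ) :=
    hg.continuousOn.comp_continuous (continuous_circleMap 0 r) (hcm r hr0 hr)
  have cK : Continuous fun p : ℝ × ℝ =>
      poissonKernel 0 (φ (circleMap 0 ρ p.1)) (circleMap 0 r p.2) * ‖g (circleMap 0 r p.2)‖ ^ 2 := by
    simp only [poissonKernel_def, sub_zero]
    have c1 : Continuous fun p : ℝ × ℝ => φ (circleMap 0 ρ p.1) := cφ.comp continuous_fst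
    have c2 : Continuous fun p : ℝ × ℝ => circleMap 0 r p.2 :=
      (continuous_circleMap 0 r).comp continuous_snd
    have c3 : Continuous fun p : ℝ × ℝ => g (circleMap 0 r p.2) := cg.comp continuous_snd
    refine Continuous.mul (Continuous.div ?_ ?_ ?_) (c3.norm.pow 2)
    · exact (c2.norm.pow 2).sub (c1.norm.pow 2)
    · exact (c2.sub c1).norm.pow 2
    · intro p
      have h1 := hφb p.1
      have h2 := norm_sub_norm_le (circleMap 0 r p.2) (φ (circleMap 0 ρ p.1))
      rw [norm_circleMap_zero, abs_of_pos hr0] at h2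
      have : 0 < ‖circleMap 0 r p.2 - φ (circleMap 0 ρ p.1)‖ := by linarith
      positivity
  rw [Real.circleAverage_def, Real.circleAverage_def, smul_eq_mul, smul_eq_mul]
  gcongr
  calc ∫ θ in (0:ℝ)..2 * Real.pi, ‖g (φ (circleMap 0 ρ θ))‖ ^ 2
      ≤ ∫ θ in (0:ℝ)..2 * Real.pi, (2 * Real.pi)⁻¹ * ∫ η in (0:ℝ)..2 * Real.pi,
        poissonKernel 0 (φ (circleMap 0 ρ θ)) (circleMap 0 r η) * ‖g (circleMap 0 r η)‖ ^ 2 := by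
        apply intervalIntegral.integral_mono_on pi2
        · exact (cgφ.norm.pow 2).intervalIntegrable _ _
        · apply Continuous.intervalIntegrable
          exact continuous_const.mul
            (intervalIntegral.continuous_parametric_intervalIntegral_of_continuous' cK _ _)
        · intro θ _
          exact poisson_sub hg hr0 hr (by have := hφb θ; linarith)
    _ = ∫ η in (0:ℝ)..2 * Real.pi, (2 * Real.pi)⁻¹ * ∫ θ in (0:ℝ)..2 * Real.pi,
        poissonKernel 0 (φ (circleMap 0 ρ θ)) (circleMap 0 r η) * ‖g (circleMap 0 r η)‖ ^ 2 := by
        rw [intervalIntegral.integral_const_mul, intervalIntegral.integral_const_mul]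
        congr 1
        apply intervalIntegral_intervalIntegral_swap (F := fun θ η =>
          poissonKernel 0 (φ (circleMap 0 ρ θ)) (circleMap 0 r η) * ‖g (circleMap 0 r η)‖ ^ 2)
        refine IntegrableOn.mono_set (t := Set.uIcc 0 (2 * Real.pi) ×ˢ Set.uIcc 0 (2 * Real.pi)) ?_
          (Set.prod_mono Set.uIoc_subset_uIcc Set.uIoc_subset_uIcc)
        exact cK.continuousOn.integrableOn_compact (isCompact_uIcc.prod isCompact_uIcc)
    _ = ∫ η in (0:ℝ)..2 * Real.pi, ‖g (circleMap 0 r η)‖ ^ 2 := by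
        refine intervalIntegral.integral_congr fun η _ => ?_
        rw [intervalIntegral.integral_mul_const, ← mul_assoc,
          poisson_avg hφ hφn hρ0 hρ hr (by simp [abs_of_pos hr0]), one_mul]

lemma sub_circle {g φ : ℂ → ℂ} (hg : DifferentiableOn ℂ g (ball 0 1))
    (hφ : DifferentiableOn ℂ φ (ball 0 1))
    (hφn : ∀ z : ℂ, ‖z‖ < 1 → ‖φ z‖ ≤ ‖z‖) {ρ : ℝ} (hρ0 : 0 < ρ) (hρ : ρ < 1) :
    Real.circleAverage (fun z => ‖g (φ z)‖ ^ 2) 0 ρ ≤ Real.circleAverage (fun z => ‖g z‖ ^ 2) 0 ρ := by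
  have hc : ContinuousOn (Real.circleAverage (fun z => ‖g z‖ ^ 2) 0) (Set.Ico 0 1) := by
    apply Real.ContinuousOn.circleAverage
    · refine (hg.continuousOn.mono ?_).norm.pow 2
      intro z hz
      simpa using (show ‖z - 0‖ ∈ Set.Ico (0:ℝ) 1 from hz).2
    · intro r hr; exact hr.1
  have ht : Tendsto (Real.circleAverage (fun z => ‖g z‖ ^ 2) 0) (𝓝[>] ρ)
      (𝓝 (Real.circleAverage (fun z => ‖g z‖ ^ 2) 0 ρ)) := by
    have := (hc ρ ⟨hρ0.le, hρ⟩).continuousAt (Ico_mem_nhds hρ0 hρ)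
    exact this.tendsto.mono_left nhdsWithin_le_nhds
  refine ge_of_tendsto ht ?_
  filter_upwards [Ioo_mem_nhdsGT hρ] with r hr
  exact sub_circle_lt hg hφ hφn hρ0 hr.1 hr.2

open scoped Classical in
lemma lintegral_disc_eq {F : ℂ → ℝ} (hF : ContinuousOn F (ball 0 1)) (hF0 : ∀ z, 0 ≤ F z) :
    ∫⁻ z in ball (0:ℂ) 1, ENNReal.ofReal (F z) =
      ∫⁻ r in Set.Ioo (0:ℝ) 1, ENNReal.ofReal (r * (2 * Real.pi * Real.circleAverage F 0 r)) := by
  have hm : Measurable ((ball (0:ℂ) 1).indicator fun z => ENNReal.ofReal (F z)) := by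
    have h1 : Measurable ((ball (0:ℂ) 1).piecewise F (fun _ => 0)) :=
      hF.measurable_piecewise continuousOn_const measurableSet_ball
    have h2 := h1.ennreal_ofReal
    convert h2 using 1
    ext z
    by_cases hz : z ∈ ball (0:ℂ) 1
    · simp only [Set.indicator_of_mem hz, Set.piecewise_eq_of_mem _ _ _ hz]
    · simp only [Set.indicator_of_notMem hz, Set.piecewise_eq_of_notMem _ _ _ hz, ENNReal.ofReal_zero]
  rw [← lintegral_indicator measurableSet_ball, ← Complex.lintegral_comp_polarCoord_symm]
  have hsymm : ∀ p : ℝ × ℝ, Complex.polarCoord.symm p = circleMap 0 p.1 p.2 := by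
    intro p
    rw [Complex.polarCoord_symm_apply, circleMap_zero, Complex.exp_mul_I]
    push_cast; rfl
  simp_rw [hsymm]
  rw [polarCoord_target, Measure.volume_eq_prod, ← Measure.prod_restrict, lintegral_prod]
  swap
  · refine Measurable.aemeasurable ?_
    refine (measurable_fst.ennreal_ofReal).smul (hm.comp ?_)
    apply Continuous.measurable
    unfold circleMap
    fun_prop
  have hIoo : Set.Ioo (0:ℝ) 1 = Set.Iio 1 ∩ Set.Ioi 0 := by ext; simp [and_comm]
  rw [hIoo, ← Measure.restrict_restrict measurableSet_Iio, ← lintegral_indicator measurableSet_Iio]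
  refine setLIntegral_congr_fun measurableSet_Ioi fun r hr => ?_
  have hr0 : 0 < r := hr
  simp only
  by_cases hr1 : r < 1
  · rw [Set.indicator_of_mem (show r ∈ Set.Iio (1:ℝ) from hr1)]
    have hmem : ∀ θ, circleMap 0 r θ ∈ ball (0:ℂ) 1 := by
      intro θ; simpa [abs_of_pos hr0] using hr1
    have hc : Continuous fun θ => F (circleMap 0 r θ) :=
      hF.comp_continuous (continuous_circleMap 0 r) hmem
    simp_rw [Set.indicator_of_mem (hmem _), smul_eq_mul]
    rw [lintegral_const_mul _ hc.measurable.ennreal_ofReal, ENNReal.ofReal_mul hr0.le]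
    congr 1
    rw [← ofReal_integral_eq_lintegral_ofReal]
    · congr 1
      rw [Real.circleAverage_eq_integral_add (-Real.pi),
        intervalIntegral.integral_comp_add_right (fun θ => F (circleMap 0 r θ)), smul_eq_mul,
        mul_inv_cancel_left₀ (by positivity), intervalIntegral.integral_of_le (by linarith [Real.pi_pos]),
        ← integral_Ioc_eq_integral_Ioo]
      congr 3 <;> ring
    · exact (hc.continuousOn.integrableOn_compact isCompact_Icc).mono_set Set.Ioo_subset_Icc_self
    · exact Eventually.of_forall fun θ => hF0 _
  · rw [Set.indicator_of_notMem (show r ∉ Set.Iio (1:ℝ) from hr1)]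
    have hmem : ∀ θ, circleMap 0 r θ ∉ ball (0:ℂ) 1 := by
      intro θ; simpa [abs_of_pos hr0] using hr1
    simp_rw [Set.indicator_of_notMem (hmem _)]
    simp

lemma sub_disc {g φ : ℂ → ℂ} (hg : DifferentiableOn ℂ g (ball 0 1))
    (hφ : DifferentiableOn ℂ φ (ball 0 1))
    (hφn : ∀ z : ℂ, ‖z‖ < 1 → ‖φ z‖ ≤ ‖z‖) :
    ∫⁻ z in ball (0:ℂ) 1, ENNReal.ofReal (‖g (φ z)‖ ^ 2) ≤
      ∫⁻ z in ball (0:ℂ) 1, ENNReal.ofReal (‖g z‖ ^ 2) := by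
  have hmap : Set.MapsTo φ (ball 0 1) (ball 0 1) := by
    intro z hz
    have hz1 : ‖z‖ < 1 := by simpa using hz
    simpa using (hφn z hz1).trans_lt hz1
  rw [lintegral_disc_eq (F := fun z => ‖g (φ z)‖ ^ 2)
      ((hg.continuousOn.comp hφ.continuousOn hmap).norm.pow 2) (fun _ => by positivity),
    lintegral_disc_eq (F := fun z => ‖g z‖ ^ 2) (hg.continuousOn.norm.pow 2)
      (fun _ => by positivity)]
  refine setLIntegral_mono' measurableSet_Ioo fun r hr => ?_
  have h0 : 0 ≤ r := hr.1.le
  apply ENNReal.ofReal_le_ofReal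
  refine mul_le_mul_of_nonneg_left (mul_le_mul_of_nonneg_left ?_ (by positivity)) h0
  exact sub_circle hg hφ hφn hr.1 hr.2

lemma point_bound {f : ℂ → ℂ} (hf : DifferentiableOn ℂ f (ball 0 1)) {z : ℂ} (hz : ‖z‖ < 1) :
    ENNReal.ofReal (‖f z - f 0‖ ^ 2) ≤
      ∫⁻ t in Set.Icc (0:ℝ) 1, ENNReal.ofReal (‖deriv f (t * z)‖ ^ 2) := by
  have hd : DifferentiableOn ℂ (deriv f) (ball 0 1) := hf.deriv isOpen_ball
  have hmem : ∀ t ∈ Set.Icc (0:ℝ) 1, (t * z : ℂ) ∈ ball (0:ℂ) 1 := by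
    intro t ht
    rw [mem_ball_zero_iff, norm_mul, Complex.norm_real, Real.norm_of_nonneg ht.1]
    nlinarith [norm_nonneg z, ht.2]
  have hc : ContinuousOn (fun t : ℝ => deriv f (t * z)) (Set.Icc 0 1) :=
    hd.continuousOn.comp (by fun_prop) hmem
  have hn : ContinuousOn (fun t : ℝ => ‖deriv f (t * z)‖) (Set.Icc 0 1) := hc.norm
  have hftc : ∫ t in (0:ℝ)..1, deriv f (t * z) * z = f z - f 0 := by
    have := intervalIntegral.integral_eq_sub_of_hasDerivAt (a := 0) (b := 1)
      (f := fun t : ℝ => f (t * z)) (f' := fun t : ℝ => deriv f (t * z) * z) ?_ ?_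
    · simpa using this
    · intro t ht
      rw [Set.uIcc_of_le zero_le_one] at ht
      have h1 : HasDerivAt f (deriv f (t * z)) (t * z) :=
        (hf.differentiableAt (isOpen_ball.mem_nhds (hmem t ht))).hasDerivAt
      have h2 : HasDerivAt (fun t : ℝ => (t * z : ℂ)) z t := by
        simpa using (Complex.ofRealCLM.hasDerivAt (x := t)).mul_const z
      exact h1.comp t h2
    · apply ContinuousOn.intervalIntegrable
      rw [Set.uIcc_of_le zero_le_one]
      exact hc.mul continuousOn_const
  set m : ℝ := ∫ t in (0:ℝ)..1, ‖deriv f (t * z)‖ with hm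
  have i1 : IntervalIntegrable (fun t : ℝ => ‖deriv f (t * z)‖) volume 0 1 := by
    apply ContinuousOn.intervalIntegrable
    rwa [Set.uIcc_of_le zero_le_one]
  have i2 : IntervalIntegrable (fun t : ℝ => ‖deriv f (t * z)‖ ^ 2) volume 0 1 := by
    apply ContinuousOn.intervalIntegrable
    rw [Set.uIcc_of_le zero_le_one]
    exact hn.pow 2
  have h1 : ‖f z - f 0‖ ≤ m := by
    rw [← hftc, intervalIntegral.integral_mul_const, norm_mul]
    refine (mul_le_of_le_one_right (norm_nonneg _) hz.le).trans ?_
    exact intervalIntegral.norm_integral_le_integral_norm zero_le_one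
  have h2 : m ^ 2 ≤ ∫ t in (0:ℝ)..1, ‖deriv f (t * z)‖ ^ 2 := by
    have h3 : 0 ≤ ∫ t in (0:ℝ)..1, (‖deriv f (t * z)‖ - m) ^ 2 :=
      intervalIntegral.integral_nonneg zero_le_one fun t _ => by positivity
    have h4 : ∫ t in (0:ℝ)..1, (‖deriv f (t * z)‖ - m) ^ 2 =
        (∫ t in (0:ℝ)..1, ‖deriv f (t * z)‖ ^ 2) - (2 * m) * m + m ^ 2 := by
      have e : ∀ t : ℝ, (‖deriv f (t * z)‖ - m) ^ 2 =
          ‖deriv f (t * z)‖ ^ 2 - (2 * m) * ‖deriv f (t * z)‖ + m ^ 2 := fun t => by ring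
      simp_rw [e]
      rw [intervalIntegral.integral_add (i2.sub (i1.const_mul _)) (by simp),
        intervalIntegral.integral_sub i2 (i1.const_mul _), intervalIntegral.integral_const_mul,
        ← hm]
      simp
    nlinarith
  have h5 : ‖f z - f 0‖ ^ 2 ≤ ∫ t in (0:ℝ)..1, ‖deriv f (t * z)‖ ^ 2 :=
    le_trans (by gcongr) h2
  refine (ENNReal.ofReal_le_ofReal h5).trans (le_of_eq ?_)
  rw [intervalIntegral.integral_of_le zero_le_one, ← integral_Icc_eq_integral_Ioc,
    ofReal_integral_eq_lintegral_ofReal]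
  · exact (hn.pow 2).integrableOn_compact isCompact_Icc
  · exact Eventually.of_forall fun t => by positivity

lemma poincare_disc {f : ℂ → ℂ} (hf : DifferentiableOn ℂ f (ball 0 1)) :
    ∫⁻ z in ball (0:ℂ) 1, ENNReal.ofReal (‖f z - f 0‖ ^ 2) ≤
      ∫⁻ z in ball (0:ℂ) 1, ENNReal.ofReal (‖deriv f z‖ ^ 2) := by
  have hd : DifferentiableOn ℂ (deriv f) (ball 0 1) := hf.deriv isOpen_ball
  have hmem : ∀ t ∈ Set.Icc (0:ℝ) 1, ∀ z : ℂ, ‖(t * z : ℂ)‖ ≤ ‖z‖ := by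
    intro t ht z
    rw [norm_mul, Complex.norm_real, Real.norm_of_nonneg ht.1]
    exact mul_le_of_le_one_left (norm_nonneg _) ht.2
  calc ∫⁻ z in ball (0:ℂ) 1, ENNReal.ofReal (‖f z - f 0‖ ^ 2)
      ≤ ∫⁻ z in ball (0:ℂ) 1, ∫⁻ t in Set.Icc (0:ℝ) 1, ENNReal.ofReal (‖deriv f (t * z)‖ ^ 2) :=
        setLIntegral_mono' measurableSet_ball fun z hz => point_bound hf (by simpa using hz)
    _ = ∫⁻ t in Set.Icc (0:ℝ) 1, ∫⁻ z in ball (0:ℂ) 1, ENNReal.ofReal (‖deriv f (t * z)‖ ^ 2) := by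
        apply lintegral_lintegral_swap
        apply Measurable.aemeasurable
        refine (((measurable_deriv f).comp ?_).norm.pow_const 2).ennreal_ofReal
        fun_prop
    _ ≤ ∫⁻ t in Set.Icc (0:ℝ) 1, ∫⁻ z in ball (0:ℂ) 1, ENNReal.ofReal (‖deriv f z‖ ^ 2) := by
        refine setLIntegral_mono' measurableSet_Icc fun t ht => ?_
        exact sub_disc (φ := fun z => t * z) hd (by fun_prop) fun z _ => hmem t ht z
    _ = _ := by simp

lemma bergman_disc {f : ℂ → ℂ} (hf : DifferentiableOn ℂ f (ball 0 1)) :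
    ∫⁻ z in ball (0:ℂ) 1, ENNReal.ofReal (‖f z‖ ^ 2) ≤
      ENNReal.ofReal (2 * Real.pi * ‖f 0‖ ^ 2) +
        2 * ∫⁻ z in ball (0:ℂ) 1, ENNReal.ofReal (‖deriv f z‖ ^ 2) := by
  have key : ∀ z : ℂ, ENNReal.ofReal (‖f z‖ ^ 2) ≤
      ENNReal.ofReal (2 * ‖f 0‖ ^ 2) + 2 * ENNReal.ofReal (‖f z - f 0‖ ^ 2) := by
    intro z
    have e2 : (2 : ENNReal) = ENNReal.ofReal 2 := by simp
    rw [e2, ← ENNReal.ofReal_mul (by norm_num), ← ENNReal.ofReal_add (by positivity) (by positivity)]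
    apply ENNReal.ofReal_le_ofReal
    have h := norm_add_le (f 0) (f z - f 0)
    rw [add_sub_cancel] at h
    have : ‖f z‖ ^ 2 ≤ (‖f 0‖ + ‖f z - f 0‖) ^ 2 := by gcongr
    nlinarith [sq_nonneg (‖f 0‖ - ‖f z - f 0‖)]
  refine (lintegral_mono fun z => key z).trans ?_
  rw [lintegral_add_left measurable_const, lintegral_const_mul' _ _ (by simp)]
  refine add_le_add (le_of_eq ?_) (mul_le_mul_right (poincare_disc hf) 2)
  rw [setLIntegral_const, Complex.volume_ball]
  simp only [ENNReal.ofReal_one, one_pow, one_mul]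
  rw [mul_right_comm, ENNReal.ofReal_mul (p := 2 * ‖f 0‖ ^ 2) (by positivity)]
  congr 1
  rw [← NNReal.coe_real_pi, ENNReal.ofReal_coe_nnreal]

lemma wco_lintegral {u φ f : ℂ → ℂ} {K M : ℝ} (hu : Differentiable ℂ u)
    (hφ : DifferentiableOn ℂ φ (ball 0 1)) (hφn : ∀ z : ℂ, ‖z‖ < 1 → ‖φ z‖ ≤ ‖z‖)
    (hK : ∀ z : ℂ, ‖z‖ < 1 → ‖deriv u z‖ ≤ K)
    (hM : ∀ z : ℂ, ‖z‖ < 1 → ‖u z * deriv φ z‖ ≤ M)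
    (hf : DifferentiableOn ℂ f (ball 0 1)) :
    ∫⁻ z in ball (0:ℂ) 1, ENNReal.ofReal (‖deriv (fun z => u z * f (φ z)) z‖ ^ 2) ≤
      ENNReal.ofReal (2 * K ^ 2) * (ENNReal.ofReal (2 * Real.pi * ‖f 0‖ ^ 2) +
        2 * ∫⁻ z in ball (0:ℂ) 1, ENNReal.ofReal (‖deriv f z‖ ^ 2)) +
      ENNReal.ofReal (2 * M ^ 2) *
        ∫⁻ z in ball (0:ℂ) 1, ENNReal.ofReal (‖deriv f z‖ ^ 2) := by
  have hmap : Set.MapsTo φ (ball 0 1) (ball 0 1) := by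
    intro z hz
    have hz1 : ‖z‖ < 1 := by simpa using hz
    simpa using (hφn z hz1).trans_lt hz1
  have hd : DifferentiableOn ℂ (deriv f) (ball 0 1) := hf.deriv isOpen_ball
  have key : ∀ z ∈ ball (0:ℂ) 1, ENNReal.ofReal (‖deriv (fun z => u z * f (φ z)) z‖ ^ 2) ≤
      ENNReal.ofReal (2 * K ^ 2) * ENNReal.ofReal (‖f (φ z)‖ ^ 2) +
      ENNReal.ofReal (2 * M ^ 2) * ENNReal.ofReal (‖deriv f (φ z)‖ ^ 2) := by
    intro z hz
    have hz1 : ‖z‖ < 1 := by simpa using hz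
    rw [← ENNReal.ofReal_mul (by positivity), ← ENNReal.ofReal_mul (by positivity),
      ← ENNReal.ofReal_add (by positivity) (by positivity)]
    apply ENNReal.ofReal_le_ofReal
    have d1 : HasDerivAt φ (deriv φ z) z :=
      (hφ.differentiableAt (isOpen_ball.mem_nhds hz)).hasDerivAt
    have d2 : HasDerivAt f (deriv f (φ z)) (φ z) :=
      (hf.differentiableAt (isOpen_ball.mem_nhds (hmap hz))).hasDerivAt
    have d3 := ((hu z).hasDerivAt.fun_mul (d2.comp z d1)).deriv
    have d4 : deriv (fun z => u z * f (φ z)) z =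
        deriv u z * f (φ z) + (u z * deriv φ z) * deriv f (φ z) := by
      refine d3.trans ?_
      simp only [Function.comp_apply]
      ring
    rw [d4]
    have h1 : ‖deriv u z * f (φ z) + (u z * deriv φ z) * deriv f (φ z)‖ ≤
        K * ‖f (φ z)‖ + M * ‖deriv f (φ z)‖ := by
      refine (norm_add_le _ _).trans ?_
      rw [norm_mul, norm_mul (u z * deriv φ z)]
      gcongr
      · exact hK z hz1
      · exact hM z hz1
    have h2 : ‖deriv u z * f (φ z) + (u z * deriv φ z) * deriv f (φ z)‖ ^ 2 ≤
        (K * ‖f (φ z)‖ + M * ‖deriv f (φ z)‖) ^ 2 := by gcongr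
    nlinarith [sq_nonneg (K * ‖f (φ z)‖ - M * ‖deriv f (φ z)‖)]
  refine (setLIntegral_mono' measurableSet_ball key).trans ?_
  have hm : AEMeasurable (fun z => ENNReal.ofReal (2 * K ^ 2) * ENNReal.ofReal (‖f (φ z)‖ ^ 2))
      (volume.restrict (ball (0:ℂ) 1)) := by
    have hc : ContinuousOn (fun z => ‖f (φ z)‖ ^ 2) (ball (0:ℂ) 1) :=
      (hf.continuousOn.comp hφ.continuousOn hmap).norm.pow 2
    exact ((hc.aemeasurable measurableSet_ball).ennreal_ofReal).const_mul _
  rw [lintegral_add_left' hm, lintegral_const_mul' _ _ ENNReal.ofReal_ne_top, lintegral_const_mul' _ _ ENNReal.ofReal_ne_top]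
  exact add_le_add
    (mul_le_mul_right ((sub_disc hf hφ hφn).trans (bergman_disc hf)) _)
    (mul_le_mul_right (sub_disc hd hφ hφn) _)

lemma wco_bounded_of {u φ : ℂ → ℂ} {K M : ℝ} (hu : Differentiable ℂ u)
    (hφ : DifferentiableOn ℂ φ (ball 0 1)) (hφn : ∀ z : ℂ, ‖z‖ < 1 → ‖φ z‖ ≤ ‖z‖)
    (hK : ∀ z : ℂ, ‖z‖ < 1 → ‖deriv u z‖ ≤ K)
    (hM : ∀ z : ℂ, ‖z‖ < 1 → ‖u z * deriv φ z‖ ≤ M) : WCOBounded u φ := by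
  have hφ0 : φ 0 = 0 := by simpa using hφn 0 (by simp)
  have hmap : Set.MapsTo φ (ball 0 1) (ball 0 1) := by
    intro z hz
    have hz1 : ‖z‖ < 1 := by simpa using hz
    simpa using (hφn z hz1).trans_lt hz1
  refine ⟨‖u 0‖ ^ 2 + 4 * K ^ 2 + 2 * M ^ 2, by positivity, fun f hf => ?_⟩
  obtain ⟨hf1, hf2⟩ := hf
  have hf1' : DifferentiableOn ℂ f (ball 0 1) := hf1
  have hmain := wco_lintegral hu hφ hφn hK hM hf1'
  set I : ℝ := ∫ z in unitDisc, ‖deriv f z‖ ^ 2 with hI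
  have hI0 : 0 ≤ I := integral_nonneg fun z => by positivity
  have hIl : ∫⁻ z in ball (0:ℂ) 1, ENNReal.ofReal (‖deriv f z‖ ^ 2) = ENNReal.ofReal I := by
    rw [hI, ofReal_integral_eq_lintegral_ofReal hf2 (Eventually.of_forall fun z => by positivity)]
    rfl
  have e2 : (2 : ENNReal) = ENNReal.ofReal 2 := by simp
  have hpi := Real.pi_pos
  rw [hIl, e2, ← ENNReal.ofReal_mul (by positivity), ← ENNReal.ofReal_add (by positivity)
    (by positivity), ← ENNReal.ofReal_mul (by positivity), ← ENNReal.ofReal_mul (by positivity),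
    ← ENNReal.ofReal_add (by positivity) (by positivity)] at hmain
  set B : ℝ := 2 * K ^ 2 * (2 * Real.pi * ‖f 0‖ ^ 2 + 2 * I) + 2 * M ^ 2 * I with hB
  have hB0 : 0 ≤ B := by positivity
  have hmeas : Measurable fun z => ‖deriv (fun z => u z * f (φ z)) z‖ ^ 2 :=
    (measurable_deriv _).norm.pow_const 2
  have hint : IntegrableOn (fun z => ‖deriv (fun z => u z * f (φ z)) z‖ ^ 2) unitDisc := by
    refine ⟨hmeas.aestronglyMeasurable, ?_⟩
    rw [hasFiniteIntegral_iff_ofReal (Eventually.of_forall fun z => by positivity)]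
    exact hmain.trans_lt ENNReal.ofReal_lt_top
  refine ⟨⟨?_, hint⟩, ?_⟩
  · exact hu.differentiableOn.mul (hf1'.comp hφ hmap)
  have hJ : ∫ z in unitDisc, ‖deriv (fun z => u z * f (φ z)) z‖ ^ 2 ≤ B := by
    rw [← ENNReal.ofReal_le_ofReal_iff hB0, ofReal_integral_eq_lintegral_ofReal hint
      (Eventually.of_forall fun z => by positivity)]
    exact hmain
  unfold dirNormSq
  rw [← hI]
  have h0 : ‖(fun z => u z * f (φ z)) 0‖ ^ 2 = ‖u 0‖ ^ 2 * ‖f 0‖ ^ 2 := by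
    simp only [hφ0, norm_mul, mul_pow]
  rw [h0]
  have h1 : (1 / Real.pi) * ∫ z in unitDisc, ‖deriv (fun z => u z * f (φ z)) z‖ ^ 2 ≤
      (1 / Real.pi) * B := by gcongr
  have h2 : (1 / Real.pi) * B =
      4 * K ^ 2 * (‖f 0‖ ^ 2 + (1 / Real.pi) * I) + 2 * M ^ 2 * ((1 / Real.pi) * I) := by
    rw [hB]; field_simp; ring
  have h3 : 0 ≤ (1 / Real.pi) * I := by positivity
  have h4 : 0 ≤ ‖u 0‖ ^ 2 * ((1 / Real.pi) * I) := by positivity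
  have h5 : 0 ≤ 2 * M ^ 2 * ‖f 0‖ ^ 2 := by positivity
  nlinarith

/-- With `u(z) = (1 − z)²` and `φ` the infinite Blaschke product with zeros
`(1 − 1/n²)_{n ≥ 1}`, the product defining `φ` converges on `𝔻`, `φ` is a
holomorphic self-map of `𝔻`, and the weighted composition operator `W_{u,φ}`
is bounded on the Dirichlet space. -/
theorem wco_bounded_blaschke_example :
    (∀ z ∈ unitDisc, Multipliable fun n : ℕ =>
      (blaschkeZero n - z) / (1 - (starRingEnd ℂ) (blaschkeZero n) * z)) ∧
    DifferentiableOn ℂ blaschkeProd unitDisc ∧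
    Set.MapsTo blaschkeProd unitDisc unitDisc ∧
    WCOBounded (fun z => (1 - z) ^ 2) blaschkeProd := by
  refine ⟨fun z hz => ?_, blaschkeProd_diff, fun z hz => ?_, ?_⟩
  · exact (bFac_hasProd.hasProd (x := z) hz).multipliable
  · have hz1 : ‖z‖ < 1 := by simpa [unitDisc] using hz
    simpa [unitDisc] using (blaschkeProd_norm_le hz1).trans_lt hz1
  · obtain ⟨M, _, hM⟩ := blaschkeProd_deriv_le
    refine wco_bounded_of (K := 4) (M := M) (by fun_prop) blaschkeProd_diff
      (fun z hz => blaschkeProd_norm_le hz) (fun z hz => ?_) hM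
    have hd : HasDerivAt (fun z : ℂ => (1 - z) ^ 2) (-(2 * (1 - z))) z := by
      have := ((hasDerivAt_id' z).const_sub 1).fun_pow 2
      refine this.congr_deriv ?_
      norm_num
    rw [hd.deriv, norm_neg, norm_mul]
    have := norm_sub_le 1 z
    rw [norm_one] at this
    norm_num
    linarith
end
end
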